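/- arXiv:1208.2221 — 11 statements merged into one kernel-verified Lean document; each statement's English description precedes it below -/
import Mathlib

section
/- Let I and J be nontrivial compact intervals of ℝ with J ⊆ I. Then λ(V^I(J)) = log(|I|/|J|), where λ is the measure y^{-2} dx dy on the upper half-plane, V^I(J) = V(J) \ V(I), V(K) = ⋂_{t∈K} V(t), and V(t) = {(x,y) : y > 0, −y/2 < x − t ≤ y/2}. -/
open MeasureTheory Set

/-- The measure `y⁻² dx dy` on the upper half-plane `{(x,y) : 0 < y}`. -/
noncomputable def lambdaH : Measure (ℝ × ℝ) :=
  (volume.restrict {p : ℝ × ℝ | 0 < p.2}).withDensity fun p => ENNReal.ofReal (p.2 ^ (-2 : ℝ))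

/-- The cone `V(t) = {(x,y) : 0 < y, -y/2 < x - t ≤ y/2}`. -/
def cone (t : ℝ) : Set (ℝ × ℝ) :=
  {p | 0 < p.2 ∧ -p.2 / 2 < p.1 - t ∧ p.1 - t ≤ p.2 / 2}

/-- `V(K) = ⋂ t ∈ K, V(t)`. -/
def coneOf (K : Set ℝ) : Set (ℝ × ℝ) := ⋂ t ∈ K, cone t

lemma mem_coneOf_Icc (c d : ℝ) (hcd : c < d) (p : ℝ × ℝ) :
    p ∈ coneOf (Icc c d) ↔ p.1 ∈ Ioc (d - p.2 / 2) (c + p.2 / 2) := by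
  simp only [coneOf, cone, mem_iInter, mem_ofPred_eq, mem_Icc, mem_Ioc]
  constructor
  · intro h
    have h1 := h c ⟨le_rfl, hcd.le⟩
    have h2 := h d ⟨hcd.le, le_rfl⟩
    constructor <;> linarith [h1.2.2, h2.2.1]
  · rintro ⟨h1, h2⟩ t ⟨h3, h4⟩
    refine ⟨by linarith, by linarith, by linarith⟩

lemma coneOf_Icc_eq (c d : ℝ) (hcd : c < d) :
    coneOf (Icc c d) = {p : ℝ × ℝ | d - p.2 / 2 < p.1 ∧ p.1 ≤ c + p.2 / 2} := by
  ext p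
  exact mem_coneOf_Icc c d hcd p

lemma measurableSet_coneOf_Icc (c d : ℝ) (hcd : c < d) : MeasurableSet (coneOf (Icc c d)) := by
  rw [coneOf_Icc_eq c d hcd]
  have h1 : MeasurableSet {p : ℝ × ℝ | d - p.2 / 2 < p.1} :=
    measurableSet_lt (by fun_prop) (by fun_prop)
  have h2 : MeasurableSet {p : ℝ × ℝ | p.1 ≤ c + p.2 / 2} :=
    measurableSet_le (by fun_prop) (by fun_prop)
  exact h1.inter h2

lemma slice_volume (a b c d : ℝ) (hac : a ≤ c) (hdb : d ≤ b) (y : ℝ) :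
    volume (Ioc (d - y / 2) (c + y / 2) \ Ioc (b - y / 2) (a + y / 2)) =
      (Ioc (d - c) (b - a)).indicator (fun y => ENNReal.ofReal (y - (d - c))) y +
      (Ioi (b - a)).indicator (fun _ => ENNReal.ofReal ((b - a) - (d - c))) y := by
  by_cases h1 : y ≤ d - c
  · have e : Ioc (d - y / 2) (c + y / 2) = ∅ := Ioc_eq_empty (by linarith)
    rw [e, indicator_of_notMem, indicator_of_notMem]
    · simp
    · simp only [mem_Ioi, not_lt]; linarith
    · simp only [mem_Ioc, not_and, not_le]; intro; linarith
  by_cases h2 : y ≤ b - a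
  · have e : Ioc (b - y / 2) (a + y / 2) = ∅ := Ioc_eq_empty (by linarith)
    rw [e, indicator_of_mem, indicator_of_notMem]
    · simp only [sdiff_empty, Real.volume_Ioc, add_zero]; congr 1; ring
    · simp only [mem_Ioi, not_lt]; linarith
    · exact ⟨by linarith, h2⟩
  · rw [indicator_of_notMem, indicator_of_mem, measure_sdiff]
    · simp only [Real.volume_Ioc, zero_add]
      rw [← ENNReal.ofReal_sub _ (by linarith)]
      congr 1; ring
    · exact Ioc_subset_Ioc (by linarith) (by linarith)
    · exact measurableSet_Ioc.nullMeasurableSet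
    · simp
    · simp only [mem_Ioi]; linarith
    · simp only [mem_Ioc, not_and, not_le]; intro; linarith

lemma int_one (l L : ℝ) (hl : 0 < l) (hL : l ≤ L) :
    ∫⁻ y in Ioc l L, ENNReal.ofReal (y ^ (-2 : ℝ)) * ENNReal.ofReal (y - l) =
      ENNReal.ofReal (Real.log (L / l) + l / L - 1) := by
  have hc : ContinuousOn (fun y : ℝ => 1 / y - l / y ^ 2) (uIcc l L) := by
    rw [uIcc_of_le hL]
    intro y hy
    have : y ≠ 0 := (hl.trans_le hy.1).ne'
    exact ContinuousAt.continuousWithinAt (by fun_prop (disch := positivity))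
  have hi := hc.intervalIntegrable (μ := volume)
  have hI : ∫ y in l..L, (1 / y - l / y ^ 2) = Real.log (L / l) + l / L - 1 := by
    rw [intervalIntegral.integral_eq_sub_of_hasDerivAt (f := fun y => Real.log y + l / y) _ hi]
    · rw [Real.log_div (by linarith) hl.ne', div_self hl.ne']; ring
    · intro y hy
      rw [uIcc_of_le hL] at hy
      have h0 : y ≠ 0 := (hl.trans_le hy.1).ne'
      have := (Real.hasDerivAt_log h0).add ((hasDerivAt_inv h0).const_mul l)
      have h3 : y⁻¹ + l * -(y ^ 2)⁻¹ = 1 / y - l / y ^ 2 := by ring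
      rw [h3] at this
      exact this
  rw [← hI, intervalIntegral.integral_of_le hL, ofReal_integral_eq_lintegral_ofReal]
  · refine setLIntegral_congr_fun measurableSet_Ioc fun y hy => ?_
    have h0 : 0 < y := hl.trans hy.1
    rw [← ENNReal.ofReal_mul (by positivity)]
    congr 1
    rw [Real.rpow_neg h0.le, Real.rpow_two]
    field_simp
  · exact (intervalIntegrable_iff_integrableOn_Ioc_of_le hL).1 hi
  · filter_upwards [ae_restrict_mem measurableSet_Ioc] with y hy
    have h0 : 0 < y := hl.trans hy.1
    have : 1 / y - l / y ^ 2 = (y - l) / y ^ 2 := by field_simp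
    simp only [Pi.zero_apply]
    rw [this]
    exact div_nonneg (by linarith [hy.1]) (by positivity)

lemma int_two (l L : ℝ) (hl : 0 < l) (hL : l ≤ L) :
    ∫⁻ y in Ioi L, ENNReal.ofReal (y ^ (-2 : ℝ)) * ENNReal.ofReal (L - l) =
      ENNReal.ofReal (1 - l / L) := by
  have h0 : 0 < L := hl.trans_le hL
  rw [lintegral_mul_const _ (by fun_prop), ← ofReal_integral_eq_lintegral_ofReal,
    integral_Ioi_rpow_of_lt (by norm_num) h0, ← ENNReal.ofReal_mul']
  · congr 1
    norm_num [Real.rpow_neg_one]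
    field_simp
  · linarith
  · exact integrableOn_Ioi_rpow_of_lt (by norm_num) h0
  · filter_upwards [ae_restrict_mem measurableSet_Ioi] with y hy
    have : 0 < y := h0.trans hy
    simp only [Pi.zero_apply]
    positivity

/-- For nontrivial compact intervals `J = [c,d] ⊆ I = [a,b]`,
`λ(V^I(J)) = λ(V(J) \ V(I)) = log(|I|/|J|)`. -/
theorem stmt_0 (a b c d : ℝ) (hab : a < b) (hcd : c < d) (hac : a ≤ c) (hdb : d ≤ b) :
    lambdaH (coneOf (Icc c d) \ coneOf (Icc a b)) =
      ENNReal.ofReal (Real.log ((b - a) / (d - c))) := by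
  have hl : 0 < d - c := by linarith
  have hL : d - c ≤ b - a := by linarith
  have hS : MeasurableSet (coneOf (Icc c d) \ coneOf (Icc a b)) :=
    (measurableSet_coneOf_Icc c d hcd).diff (measurableSet_coneOf_Icc a b hab)
  have hsub : (coneOf (Icc c d) \ coneOf (Icc a b)) ∩ {p : ℝ × ℝ | 0 < p.2} =
      coneOf (Icc c d) \ coneOf (Icc a b) := by
    refine inter_eq_left.2 fun p hp => ?_
    have := (mem_coneOf_Icc c d hcd p).1 hp.1
    simp only [mem_ofPred_eq]
    linarith [this.1, this.2]
  have hf : Measurable fun p : ℝ × ℝ => ENNReal.ofReal (p.2 ^ (-2 : ℝ)) := by fun_prop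
  rw [lambdaH, withDensity_apply _ hS, Measure.restrict_restrict hS, hsub,
    ← lintegral_indicator hS, Measure.volume_eq_prod,
    lintegral_prod_symm' _ (hf.indicator hS)]
  have key : ∀ y : ℝ, ∫⁻ x : ℝ, (coneOf (Icc c d) \ coneOf (Icc a b)).indicator
      (fun p : ℝ × ℝ => ENNReal.ofReal (p.2 ^ (-2 : ℝ))) (x, y) =
      (Ioc (d - c) (b - a)).indicator
        (fun y => ENNReal.ofReal (y ^ (-2 : ℝ)) * ENNReal.ofReal (y - (d - c))) y +
      (Ioi (b - a)).indicator
        (fun y => ENNReal.ofReal (y ^ (-2 : ℝ)) * ENNReal.ofReal ((b - a) - (d - c))) y := by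
    intro y
    have e : ∀ x : ℝ, (coneOf (Icc c d) \ coneOf (Icc a b)).indicator
        (fun p : ℝ × ℝ => ENNReal.ofReal (p.2 ^ (-2 : ℝ))) (x, y) =
        (Ioc (d - y / 2) (c + y / 2) \ Ioc (b - y / 2) (a + y / 2)).indicator
          (fun _ => ENNReal.ofReal (y ^ (-2 : ℝ))) x := by
      intro x
      simp only [indicator, mem_sdiff, mem_coneOf_Icc _ _ hcd, mem_coneOf_Icc _ _ hab]
    simp_rw [e]
    rw [lintegral_indicator_const (measurableSet_Ioc.diff measurableSet_Ioc),
      slice_volume a b c d hac hdb, mul_add]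
    simp only [indicator, mul_ite, mul_zero]
  simp_rw [key]
  rw [lintegral_add_left (Measurable.indicator (by fun_prop) measurableSet_Ioc),
    lintegral_indicator measurableSet_Ioc, lintegral_indicator measurableSet_Ioi,
    int_one _ _ hl hL, int_two _ _ hl hL, ← ENNReal.ofReal_add]
  · congr 1; ring
  · have hp : 0 < (b - a) / (d - c) := by have : 0 < b - a := by linarith
                                          positivity
    have := Real.one_sub_inv_le_log_of_pos hp
    rw [inv_div] at this
    linarith
  · rw [sub_nonneg, div_le_one (by linarith)]; exact hL
end

section
/- There exists a constant q₀ ∈ (0,1) such that for every q ∈ (q₀,1), every k ≥ 1 and every finite sequence of positive reals x₁, …, x_k, one has (x₁ + ⋯ + x_k)^q ≥ Σ_{i=1}^k x_i^q − (1−q) Σ_{i≠j} (x_i x_j)^{q/2}, where the last sum ranges over all ordered pairs (i,j) with 1 ≤ i, j ≤ k and i ≠ j. -/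
/-- Hölder interpolation of power sums. -/
theorem aux_holder (q : ℝ) (hq0 : 0 < q) (hq1 : q < 1) (k : ℕ) (x : Fin k → ℝ)
    (hx : ∀ i, 0 < x i) (hS : 0 < ∑ i, x i) (hM : 0 < ∑ i, x i ^ (q / 2)) :
    ∑ i, x i ^ q ≤
      (∑ i, x i ^ (q / 2)) ^ (2 * (1 - q) / (2 - q)) * (∑ i, x i) ^ (q / (2 - q)) := by
  set S := ∑ i, x i with hSd
  set M := ∑ i, x i ^ (q / 2) with hMd
  have h2 : 0 < 2 - q := by linarith
  set l := 2 * (1 - q) / (2 - q) with hl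
  set m := q / (2 - q) with hm
  have hl0 : 0 ≤ l := div_nonneg (by linarith) h2.le
  have hm0 : 0 ≤ m := div_nonneg hq0.le h2.le
  have hlm : l + m = 1 := by rw [hl, hm]; field_simp; ring
  have hexp : q / 2 * l + m = q := by rw [hl, hm]; field_simp; ring
  have hD : 0 < M ^ l * S ^ m := by positivity
  have key : ∀ i, x i ^ q / (M ^ l * S ^ m) ≤ l * (x i ^ (q / 2) / M) + m * (x i / S) := by
    intro i
    have hxi := hx i
    have h := Real.geom_mean_le_arith_mean2_weighted hl0 hm0
      (p₁ := x i ^ (q / 2) / M) (p₂ := x i / S) (by positivity) (by positivity) hlm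
    refine le_trans (le_of_eq ?_) h
    rw [Real.div_rpow (by positivity) hM.le, Real.div_rpow hxi.le hS.le,
      ← Real.rpow_mul hxi.le, div_mul_div_comm, ← Real.rpow_add hxi, hexp]
  have hsum := Finset.sum_le_sum (fun i (_ : i ∈ Finset.univ) => key i)
  rw [← Finset.sum_div, Finset.sum_add_distrib, ← Finset.mul_sum, ← Finset.mul_sum,
    ← Finset.sum_div, ← Finset.sum_div, ← hSd, ← hMd, div_self hM.ne', div_self hS.ne',
    mul_one, mul_one, hlm, div_le_one hD] at hsum
  exact hsum

/-- There exists `q₀ ∈ (0,1)` such that for every `q ∈ (q₀,1)`, every `k ≥ 1` and all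
positive reals `x₁, …, x_k`,
`(x₁ + ⋯ + x_k)^q ≥ Σ x_i^q − (1−q) Σ_{i≠j} (x_i x_j)^{q/2}`. -/
theorem stmt_1 :
    ∃ q₀ ∈ Set.Ioo (0 : ℝ) 1, ∀ q ∈ Set.Ioo q₀ 1, ∀ k : ℕ, 1 ≤ k → ∀ x : Fin k → ℝ,
      (∀ i, 0 < x i) →
      (∑ i, x i) ^ q ≥
        ∑ i, x i ^ q - (1 - q) * ∑ i, ∑ j, if i ≠ j then (x i * x j) ^ (q / 2) else 0 := by
  refine ⟨1 / 2, by norm_num, ?_⟩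
  rintro q ⟨hq, hq1⟩ k hk x hx
  have hq0 : 0 < q := by linarith
  have h2 : 0 < 2 - q := by linarith
  have hne : (Finset.univ : Finset (Fin k)).Nonempty := ⟨⟨0, by omega⟩, Finset.mem_univ _⟩
  have hS : 0 < ∑ i, x i := Finset.sum_pos (fun i _ => hx i) hne
  have hM : 0 < ∑ i, x i ^ (q / 2) :=
    Finset.sum_pos (fun i _ => Real.rpow_pos_of_pos (hx i) _) hne
  have hH := aux_holder q hq0 hq1 k x hx hS hM
  have hdouble : (∑ i, ∑ j, if i ≠ j then (x i * x j) ^ (q / 2) else 0)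
      = (∑ i, x i ^ (q / 2)) ^ 2 - ∑ i, x i ^ q := by
    rw [sq, Finset.sum_mul_sum, ← Finset.sum_sub_distrib]
    refine Finset.sum_congr rfl fun i _ => ?_
    have h1 : x i ^ q = ∑ j, if i = j then x i ^ (q / 2) * x j ^ (q / 2) else 0 := by
      rw [Finset.sum_ite_eq, if_pos (Finset.mem_univ _), ← Real.rpow_add (hx i), add_halves]
    rw [h1, ← Finset.sum_sub_distrib]
    refine Finset.sum_congr rfl fun j _ => ?_
    by_cases h : i = j
    · simp [h]
    · simp [h, Real.mul_rpow (hx i).le (hx j).le]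
  rw [hdouble]
  set S := ∑ i, x i
  set M := ∑ i, x i ^ (q / 2)
  set Q := ∑ i, x i ^ q
  have hA := Real.geom_mean_le_arith_mean2_weighted (w₁ := (1 - q) / (2 - q))
    (w₂ := 1 / (2 - q)) (p₁ := M ^ 2) (p₂ := S ^ q)
    (div_nonneg (by linarith) h2.le) (by positivity) (by positivity) (by positivity)
    (by field_simp; ring)
  rw [← Real.rpow_natCast M 2, ← Real.rpow_mul hM.le, ← Real.rpow_mul hS.le,
    Real.rpow_natCast,
    show ((2 : ℕ) : ℝ) * ((1 - q) / (2 - q)) = 2 * (1 - q) / (2 - q) by push_cast; ring,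
    show q * (1 / (2 - q)) = q / (2 - q) by ring] at hA
  have hQ := hH.trans hA
  rw [show (1 - q) / (2 - q) * M ^ 2 + 1 / (2 - q) * S ^ q
    = ((1 - q) * M ^ 2 + S ^ q) / (2 - q) by ring, le_div_iff₀ h2] at hQ
  linarith
end

section
/- Let A, B, R, R̃ be nonnegative random variables on a probability space with probability measure ℚ such that: R̃ = A·R + B almost surely; R̃ and R have the same distribution; A and R are independent; ℚ(B > 0) > 0; there is κ > 0 with E(A^κ) = 1 and E(A^κ · max(log A, 0)) < ∞; the conditional distribution of log A given the event {A ≠ 0} is non-arithmetic, i.e. there is no h > 0 with ℚ(log A ∈ hℤ | A ≠ 0) = 1; and E((A R + B)^κ − (A R)^κ) < ∞. Then E(A^κ log A) ∈ (0, ∞) and lim_{t→∞} t^κ ℚ(R > t) = E((A R + B)^κ − (A R)^κ) / (κ · E(A^κ log A)), and this limit belongs to (0, ∞). (In particular, B and R are not assumed independent.) -/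
open MeasureTheory ProbabilityTheory Filter

lemma exists_subseq (f : ℕ → ℝ → ℝ) (b : ℝ → ℝ) (hb : ∀ n x, |f n x| ≤ b x)
    (w : ∀ ε > 0, ∃ δ > 0, ∀ n x y, |x - y| < δ → |f n x - f n y| < ε) :
    ∃ φ : ℕ → ℕ, StrictMono φ ∧ ∃ z : ℝ → ℝ, ∀ x,
      Tendsto (fun n => f (φ n) x) atTop (nhds (z x)) := by
  have hK : IsCompact (Set.pi Set.univ (fun q : ℚ => Set.Icc (-b q) (b q))) :=
    isCompact_univ_pi (fun q => isCompact_Icc)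
  obtain ⟨a, -, φ, hφ, hlim⟩ := hK.tendsto_subseq (x := fun n (q : ℚ) => f n q)
    (fun n q _ => abs_le.mp (hb n q))
  refine ⟨φ, hφ, ?_⟩
  rw [tendsto_pi_nhds] at hlim
  have : ∀ x, ∃ z, Tendsto (fun n => f (φ n) x) atTop (nhds z) := by
    intro x
    apply cauchySeq_tendsto_of_complete
    rw [Metric.cauchySeq_iff']
    intro ε hε
    obtain ⟨δ, hδ, h⟩ := w (ε / 3) (by positivity)
    obtain ⟨q, hq1, hq2⟩ := exists_rat_btwn (show x < x + δ by linarith)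
    have hq : |x - q| < δ := by rw [abs_lt]; constructor <;> linarith
    obtain ⟨N, hN⟩ := Metric.cauchySeq_iff'.mp (hlim q).cauchySeq (ε / 3) (by positivity)
    refine ⟨N, fun n hn => ?_⟩
    have h1 := h (φ n) x q hq
    have h2 := h (φ N) x q hq
    have h3 := hN n hn
    simp only [Real.dist_eq, Function.comp] at h3 ⊢
    rw [abs_lt] at *
    constructor <;> linarith
  choose z hz using this
  exact ⟨z, hz⟩

/-- One-sided step of Choquet-Deny. -/
lemma choquet_deny_le (μ : Measure ℝ) [IsProbabilityMeasure μ] (z : ℝ → ℝ) (C : ℝ)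
    (hC : ∀ x, |z x| ≤ C) (hu : ∀ ε > 0, ∃ δ > 0, ∀ x y, |x - y| < δ → |z x - z y| < ε)
    (hz : ∀ x, z x = ∫ y, z (x - y) ∂μ) (a : ℝ) (ha : a ∈ μ.support) (x : ℝ) :
    z x - z (x - a) ≤ 0 := by
  set S := Set.range (fun x => z x - z (x - a)) with hS
  have hbdd : BddAbove S := by
    refine ⟨2 * C, ?_⟩
    rintro _ ⟨x, rfl⟩
    have h1 := abs_le.mp (hC x)
    have h2 := abs_le.mp (hC (x - a))
    simp only
    linarith
  have hne : S.Nonempty := Set.range_nonempty _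
  set β := sSup S with hβ
  have hle : ∀ x, z x - z (x - a) ≤ β := fun x => le_csSup hbdd ⟨x, rfl⟩
  by_contra hcon
  push Not at hcon
  have hβ0 : 0 < β := lt_of_lt_of_le hcon (hle x)
  obtain ⟨u, -, hu1, huS⟩ := exists_seq_tendsto_sSup hne hbdd
  choose xs hxs using huS
  obtain ⟨φ, hφ, ζ, hζ⟩ := exists_subseq (fun n x => z (xs n + x)) (fun _ => C)
    (fun n x => hC _) (by
      intro ε hε
      obtain ⟨δ, hδ, h⟩ := hu ε hε
      refine ⟨δ, hδ, fun n x y hxy => h _ _ (by simpa using hxy)⟩)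
  have hζC : ∀ x, |ζ x| ≤ C := fun x =>
    le_of_tendsto ((hζ x).abs) (Eventually.of_forall fun n => hC _)
  have hζu : ∀ ε > 0, ∃ δ > 0, ∀ x y, |x - y| < δ → |ζ x - ζ y| ≤ ε := by
    intro ε hε
    obtain ⟨δ, hδ, h⟩ := hu ε hε
    refine ⟨δ, hδ, fun x y hxy => ?_⟩
    exact le_of_tendsto (((hζ x).sub (hζ y)).abs)
      (Eventually.of_forall fun n => (h _ _ (by simpa using hxy)).le)
  have hζc : Continuous ζ := by
    rw [Metric.continuous_iff]
    intro x ε hε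
    obtain ⟨δ, hδ, h⟩ := hζu (ε / 2) (by positivity)
    refine ⟨δ, hδ, fun y hy => ?_⟩
    have := h y x (by simpa [Real.dist_eq] using hy)
    rw [Real.dist_eq]; linarith
  have hzc : Continuous z := by
    rw [Metric.continuous_iff]
    intro x ε hε
    obtain ⟨δ, hδ, h⟩ := hu ε hε
    exact ⟨δ, hδ, fun y hy => h y x (by simpa [Real.dist_eq] using hy)⟩
  have hζh : ∀ x, ζ x = ∫ y, ζ (x - y) ∂μ := by
    intro x
    have h1 : Tendsto (fun n => ∫ y, z (xs (φ n) + (x - y)) ∂μ) atTop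
        (nhds (∫ y, ζ (x - y) ∂μ)) := by
      apply tendsto_integral_of_dominated_convergence (fun _ => C)
      · intro n
        exact (by fun_prop : Continuous fun y => z (xs (φ n) + (x - y))).aestronglyMeasurable
      · exact integrable_const _
      · intro n; exact Eventually.of_forall fun y => hC _
      · exact Eventually.of_forall fun y => hζ (x - y)
    refine tendsto_nhds_unique (hζ x) (h1.congr fun n => ?_)
    rw [hz (xs (φ n) + x)]
    congr 1; ext y; ring_nf
  have hInteg : ∀ x, Integrable (fun y => ζ (x - y)) μ := fun x =>
    (integrable_const C).mono' (by fun_prop : Continuous fun y => ζ (x - y)).aestronglyMeasurable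
      (Eventually.of_forall fun y => hζC _)
  have hwle : ∀ x, ζ x - ζ (x - a) ≤ β := fun x =>
    le_of_tendsto ((hζ x).sub (hζ (x - a))) (Eventually.of_forall fun n => by
      have := hle (xs (φ n) + x)
      rwa [show xs (φ n) + x - a = xs (φ n) + (x - a) by ring] at this)
  have hw0 : ζ 0 - ζ (0 - a) = β := by
    refine tendsto_nhds_unique ((hζ 0).sub (hζ (0 - a))) ((hu1.comp hφ.tendsto_atTop).congr ?_)
    intro n
    have := hxs (φ n)
    simp only [Function.comp] at this ⊢
    rw [← this]; ring_nf
  have step : ∀ x, ζ x - ζ (x - a) = β → ζ (x - a) - ζ (x - a - a) = β := by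
    intro x hx
    by_contra hne
    have hlt : 0 < β - (ζ (x - a) - ζ (x - a - a)) := by
      have := lt_of_le_of_ne (hwle (x - a)) hne
      linarith
    set k : ℝ → ℝ := fun y => β - (ζ (x - y) - ζ (x - y - a)) with hk
    have hkc : Continuous k := by fun_prop
    have hk0 : ∀ y, 0 ≤ k y := fun y => by have := hwle (x - y); simp only [hk]; linarith
    have hki : ∫ y, k y ∂μ = 0 := by
      have h2 : ∀ y, x - y - a = (x - a) - y := fun y => by ring
      simp only [hk, h2]
      have hi : Integrable (fun y => ζ (x - y) - ζ (x - a - y)) μ := (hInteg x).sub (hInteg (x - a))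
      rw [integral_sub (integrable_const _) hi,
        integral_sub (hInteg x) (hInteg (x - a)), ← hζh, ← hζh]
      simp [hx]
    have hkint : Integrable k μ := by
      have h2 : ∀ y, x - y - a = (x - a) - y := fun y => by ring
      simp only [hk, h2]
      exact (integrable_const _).sub ((hInteg x).sub (hInteg (x - a)))
    rw [integral_eq_zero_iff_of_nonneg hk0 hkint] at hki
    have hnb : {y | 0 < k y} ∈ nhds a := (isOpen_lt continuous_const hkc).mem_nhds hlt
    have hpos := (Measure.mem_support_iff_forall a).mp ha _ hnb
    have hz0 : μ {y | 0 < k y} = 0 := by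
      refine measure_mono_null ?_ hki
      intro y hy
      have : 0 < k y := hy
      simp only [Set.mem_compl_iff, Set.mem_ofPred_eq]
      exact this.ne'
    exact hpos.ne' hz0
  have hall : ∀ n : ℕ, ζ (-(n * a)) - ζ (-(n * a) - a) = β := by
    intro n
    induction n with
    | zero => simpa using hw0
    | succ n ih =>
      have := step _ ih
      push_cast
      rw [show -((n + 1 : ℝ) * a) = -(n * a) - a by ring]
      exact this
  have hsum : ∀ n : ℕ, ζ 0 - ζ (-(n * a)) = n * β := by
    intro n
    induction n with
    | zero => simp
    | succ n ih =>
      have := hall n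
      push_cast
      rw [show -((n + 1 : ℝ) * a) = -(n * a) - a by ring]
      linarith
  obtain ⟨n, hn⟩ := exists_nat_gt (2 * C / β)
  rw [div_lt_iff₀ hβ0] at hn
  have h1 := abs_le.mp (hζC 0)
  have h2 := abs_le.mp (hζC (-(n * a)))
  have := hsum n
  linarith

lemma choquet_deny (μ : Measure ℝ) [IsProbabilityMeasure μ]
    (hμ : ¬ ∃ h > (0 : ℝ), μ {x | ∃ n : ℤ, x = n * h}ᶜ = 0) (z : ℝ → ℝ) (C : ℝ)
    (hC : ∀ x, |z x| ≤ C) (hu : ∀ ε > 0, ∃ δ > 0, ∀ x y, |x - y| < δ → |z x - z y| < ε)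
    (hz : ∀ x, z x = ∫ y, z (x - y) ∂μ) (x : ℝ) : z x = z 0 := by
  have hzc : Continuous z := by
    rw [Metric.continuous_iff]
    intro x ε hε
    obtain ⟨δ, hδ, h⟩ := hu ε hε
    exact ⟨δ, hδ, fun y hy => h y x (by simpa [Real.dist_eq] using hy)⟩
  have hper : ∀ a ∈ μ.support, ∀ x, z (x - a) = z x := by
    intro a ha x
    have h1 := choquet_deny_le μ z C hC hu hz a ha x
    have h2 := choquet_deny_le μ (fun x => - z x) C (by simpa using hC) (by
      intro ε hε
      obtain ⟨δ, hδ, h⟩ := hu ε hε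
      refine ⟨δ, hδ, fun x y hxy => ?_⟩
      have := h x y hxy
      rw [abs_sub_comm] at this
      rwa [show -z x - -z y = z y - z x by ring]) (by
      intro x
      rw [integral_neg, ← hz]) a ha x
    linarith
  let P : AddSubgroup ℝ :=
    { carrier := {p | ∀ x, z (x + p) = z x}
      zero_mem' := by intro x; simp
      add_mem' := by
        intro p q hp hq x
        rw [← add_assoc, hq, hp]
      neg_mem' := by
        intro p hp x
        have := hp (x + -p)
        simpa using this.symm }
  have hPmem : ∀ p, p ∈ P ↔ ∀ x, z (x + p) = z x := fun p => Iff.rfl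
  have hsub : ∀ a ∈ μ.support, a ∈ P := by
    intro a ha
    rw [hPmem]
    intro x
    have := hper a ha (x + a)
    simpa using this.symm
  rcases P.dense_or_cyclic with hd | ⟨h, hh⟩
  · have hcl : IsClosed (P : Set ℝ) := by
      have : (P : Set ℝ) = ⋂ x, {p | z (x + p) = z x} := by
        ext p; simp [hPmem]
      rw [this]
      exact isClosed_iInter fun x => isClosed_eq (by fun_prop) continuous_const
    have : x ∈ (P : Set ℝ) := by
      rw [← hcl.closure_eq]; exact hd x
    have := (hPmem x).mp this 0
    simpa using this
  · exfalso
    apply hμ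
    have hsupp : ∀ a ∈ μ.support, ∃ n : ℤ, a = n * h := by
      intro a ha
      have := hsub a ha
      rw [hh, AddSubgroup.mem_closure_singleton] at this
      obtain ⟨n, hn⟩ := this
      exact ⟨n, by rw [← hn]; simp⟩
    by_cases h0 : h = 0
    · refine ⟨1, one_pos, measure_mono_null ?_ (Measure.measure_compl_support (μ := μ))⟩
      apply Set.compl_subset_compl.mpr
      intro a ha
      obtain ⟨n, hn⟩ := hsupp a ha
      exact ⟨0, by simp [hn, h0]⟩
    · refine ⟨|h|, abs_pos.mpr h0, measure_mono_null ?_ (Measure.measure_compl_support (μ := μ))⟩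
      apply Set.compl_subset_compl.mpr
      intro a ha
      obtain ⟨n, hn⟩ := hsupp a ha
      rcases abs_choice h with h' | h'
      · exact ⟨n, by rw [h', hn]⟩
      · exact ⟨-n, by rw [h', hn]; push_cast; ring⟩

/-- Abstract renewal theorem for an integrated function `H`. -/
lemma renewal_abstract (μ : Measure ℝ) [IsProbabilityMeasure μ]
    (hμ : ¬ ∃ h > (0 : ℝ), μ {x | ∃ n : ℤ, x = n * h}ᶜ = 0)
    (hμi : Integrable (fun y : ℝ => y) μ) (hm : 0 < ∫ y, y ∂μ)
    (H G : ℝ → ℝ) (K D : ℝ)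
    (hu : ∀ ε > 0, ∃ δ > 0, ∀ x y, |x - y| < δ → |H x - H y| < ε)
    (hK : ∀ x y, |H x - H y| ≤ K * (1 + |x - y|))
    (hInteg : ∀ x, Integrable (fun y => H (x - y)) μ)
    (heq : ∀ x, H x = G x + ∫ y, H (x - y) ∂μ)
    (hG : Tendsto G atTop (nhds D)) (η : ℝ) :
    Tendsto (fun t => H (t + η) - H t) atTop (nhds (η * (D / ∫ y, y ∂μ))) := by
  have hHc : Continuous H := by
    rw [Metric.continuous_iff]
    intro x ε hε
    obtain ⟨δ, hδ, h⟩ := hu ε hε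
    exact ⟨δ, hδ, fun y hy => h y x (by simpa [Real.dist_eq] using hy)⟩
  apply tendsto_of_subseq_tendsto
  intro ts hts
  obtain ⟨φ, hφ, z, hz⟩ := exists_subseq (fun n x => H (ts n + x) - H (ts n))
    (fun x => K * (1 + |x|)) (fun n x => by simpa using hK (ts n + x) (ts n)) (by
      intro ε hε
      obtain ⟨δ, hδ, h⟩ := hu ε hε
      refine ⟨δ, hδ, fun n x y hxy => ?_⟩
      have := h (ts n + x) (ts n + y) (by simpa using hxy)
      simpa using this)
  refine ⟨φ, ?_⟩
  have hz0 : z 0 = 0 := tendsto_nhds_unique (hz 0) (by simp)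
  have hzK : ∀ x y, |z x - z y| ≤ K * (1 + |x - y|) := fun x y =>
    le_of_tendsto (((hz x).sub (hz y)).abs) (Eventually.of_forall fun n => by
      simpa using hK (ts (φ n) + x) (ts (φ n) + y))
  have hzu : ∀ ε > 0, ∃ δ > 0, ∀ x y, |x - y| < δ → |z x - z y| < ε := by
    intro ε hε
    obtain ⟨δ, hδ, h⟩ := hu (ε / 2) (by positivity)
    refine ⟨δ, hδ, fun x y hxy => ?_⟩
    have : |z x - z y| ≤ ε / 2 := le_of_tendsto (((hz x).sub (hz y)).abs)
      (Eventually.of_forall fun n => by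
        have := h (ts (φ n) + x) (ts (φ n) + y) (by simpa using hxy)
        simpa using this.le)
    linarith
  have hzc : Continuous z := by
    rw [Metric.continuous_iff]
    intro x ε hε
    obtain ⟨δ, hδ, h⟩ := hzu ε hε
    exact ⟨δ, hδ, fun y hy => h y x (by simpa [Real.dist_eq] using hy)⟩
  have hdom : Integrable (fun y : ℝ => K * (1 + |y|)) μ :=
    ((integrable_const 1).add hμi.abs).const_mul K
  have hzi : ∀ x, Integrable (fun y => z x - z (x - y)) μ := fun x =>
    hdom.mono' (by fun_prop : Continuous fun y => z x - z (x - y)).aestronglyMeasurable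
      (Eventually.of_forall fun y => by simpa using hzK x (x - y))
  have hzD : ∀ x, ∫ y, (z x - z (x - y)) ∂μ = D := by
    intro x
    have h1 : Tendsto (fun n => ∫ y, (H (ts (φ n) + x) - H (ts (φ n) + (x - y))) ∂μ) atTop
        (nhds (∫ y, (z x - z (x - y)) ∂μ)) := by
      apply tendsto_integral_of_dominated_convergence (fun y => K * (1 + |y|))
      · intro n
        exact (by fun_prop : Continuous fun y =>
          H (ts (φ n) + x) - H (ts (φ n) + (x - y))).aestronglyMeasurable
      · exact hdom
      · intro n
        exact Eventually.of_forall fun y => by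
          simpa using hK (ts (φ n) + x) (ts (φ n) + (x - y))
      · exact Eventually.of_forall fun y => by
          simpa using (hz x).sub (hz (x - y))
    have h2 : Tendsto (fun n => G (ts (φ n) + x)) atTop (nhds D) :=
      hG.comp (tendsto_atTop_add_const_right _ _ (hts.comp hφ.tendsto_atTop))
    refine tendsto_nhds_unique (h1.congr fun n => ?_) h2
    have h3 : ∀ y, ts (φ n) + (x - y) = ts (φ n) + x - y := fun y => by ring
    simp only [h3]
    rw [integral_sub (integrable_const _) (hInteg _)]
    have := heq (ts (φ n) + x)
    simp only [integral_const, probReal_univ, smul_eq_mul, one_mul]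
    linarith
  have hzi' : ∀ x, Integrable (fun y => z (x - y)) μ := fun x => by
    have := (integrable_const (μ := μ) (z x)).sub (hzi x)
    refine this.congr (Eventually.of_forall fun y => ?_)
    simp
  have hzD' : ∀ x, ∫ y, z (x - y) ∂μ = z x - D := by
    intro x
    have := hzD x
    rw [integral_sub (integrable_const _) (hzi' x)] at this
    simp only [integral_const, probReal_univ, smul_eq_mul, one_mul] at this
    linarith
  have hadd : ∀ x h, z (x + h) = z x + z h := by
    intro x h
    have := choquet_deny μ hμ (fun x => z (x + h) - z x) (K * (1 + |h|))
      (fun x => by simpa using hzK (x + h) x) (by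
        intro ε hε
        obtain ⟨δ, hδ, hh⟩ := hzu (ε / 2) (by positivity)
        refine ⟨δ, hδ, fun x y hxy => ?_⟩
        have h1 := hh x y hxy
        have h2 := hh (x + h) (y + h) (by simpa using hxy)
        rw [abs_lt] at *
        constructor <;> linarith) (by
        intro x
        have h3 : ∀ y, x - y + h = x + h - y := fun y => by ring
        simp only [h3]
        rw [integral_sub (hzi' _) (hzi' _), hzD', hzD']
        ring) x
    simp only [zero_add, hz0, sub_zero] at this
    linarith
  let f : ℝ →+ ℝ := { toFun := z, map_zero' := hz0, map_add' := hadd }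
  have hlin : ∀ x, z x = x * z 1 := by
    intro x
    have := map_real_smul f hzc x 1
    simpa [f] using this
  have hc : D = (∫ y, y ∂μ) * z 1 := by
    rw [← hzD 0, ← integral_mul_const]
    congr 1; ext y
    rw [hlin 0, hlin (0 - y)]; ring
  have : z η = η * (D / ∫ y, y ∂μ) := by
    rw [hlin η, hc]; field_simp
  rw [← this]
  exact hz η

lemma xlogx_ge {x : ℝ} (hx : 0 ≤ x) : x - 1 ≤ x * Real.log x := by
  rcases hx.eq_or_lt with h | h
  · rw [← h]; simp
  · have := Real.one_sub_inv_le_log_of_pos h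
    have h2 := mul_le_mul_of_nonneg_left this hx
    rw [mul_sub, mul_inv_cancel₀ h.ne'] at h2
    linarith

lemma xlogx_eq {x : ℝ} (hx : 0 ≤ x) (h : x * Real.log x = x - 1) : x = 1 := by
  rcases hx.eq_or_lt with h' | h'
  · rw [← h'] at h; simp at h
  · by_contra hne
    have := Real.log_lt_sub_one_of_pos (inv_pos.mpr h') (by simpa using hne)
    rw [Real.log_inv] at this
    have h2 := mul_lt_mul_of_pos_left this h'
    rw [mul_sub, mul_inv_cancel₀ h'.ne'] at h2
    linarith

lemma klogk {a κ : ℝ} (ha : 0 ≤ a) (hκ : 0 < κ) :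
    a ^ κ * Real.log (a ^ κ) = κ * (a ^ κ * Real.log a) := by
  rcases ha.eq_or_lt with h | h
  · rw [← h, Real.zero_rpow hκ.ne']; simp
  · rw [Real.log_rpow h]; ring

lemma rpow_one_imp {a κ : ℝ} (ha : 0 ≤ a) (hκ : 0 < κ) (h : a ^ κ = 1) : a = 1 := by
  rw [← Real.one_rpow κ] at h
  exact (Real.rpow_left_inj ha zero_le_one hκ.ne').mp h

lemma drift {Ω : Type*} [MeasurableSpace Ω] (Q : Measure Ω) [IsProbabilityMeasure Q]
    (A : Ω → ℝ) (hAm : Measurable A) (hA0 : ∀ ω, 0 ≤ A ω) (κ : ℝ) (hκ : 0 < κ)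
    (hAκ : ∫ ω, A ω ^ κ ∂Q = 1) (hAκ' : Integrable (fun ω => A ω ^ κ) Q)
    (hAκlog : Integrable (fun ω => A ω ^ κ * max (Real.log (A ω)) 0) Q)
    (hne : ¬ ∀ᵐ ω ∂Q, A ω = 1) :
    Integrable (fun ω => A ω ^ κ * Real.log (A ω)) Q ∧
    0 < ∫ ω, A ω ^ κ * Real.log (A ω) ∂Q := by
  have hInteg : Integrable (fun ω => A ω ^ κ * Real.log (A ω)) Q := by
    refine (hAκlog.add (integrable_const κ⁻¹)).mono' (by fun_prop) (Eventually.of_forall ?_)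
    intro ω
    have hp : 0 ≤ A ω ^ κ := Real.rpow_nonneg (hA0 ω) κ
    simp only [Pi.add_apply, Real.norm_eq_abs]
    have hk : 0 < κ⁻¹ := inv_pos.mpr hκ
    rw [abs_le]
    constructor
    · have h1 := xlogx_ge hp
      rw [klogk (hA0 ω) hκ] at h1
      have h2 : κ⁻¹ * (A ω ^ κ - 1) ≤ A ω ^ κ * Real.log (A ω) := by
        rw [inv_mul_le_iff₀ hκ]; exact h1
      have h3 : 0 ≤ A ω ^ κ * max (Real.log (A ω)) 0 := mul_nonneg hp (le_max_right _ _)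
      have h4 : 0 ≤ κ⁻¹ * A ω ^ κ := by positivity
      linarith
    · have := mul_le_mul_of_nonneg_left (le_max_left (Real.log (A ω)) 0) hp
      linarith
  refine ⟨hInteg, ?_⟩
  set F : Ω → ℝ := fun ω => κ * (A ω ^ κ * Real.log (A ω)) - (A ω ^ κ - 1) with hF
  have hFi : Integrable F Q := (hInteg.const_mul κ).sub (hAκ'.sub (integrable_const 1))
  have hF0 : ∀ ω, 0 ≤ F ω := by
    intro ω
    have h1 := xlogx_ge (Real.rpow_nonneg (hA0 ω) κ)
    rw [klogk (hA0 ω) hκ] at h1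
    simp only [hF]; linarith
  have hFint : ∫ ω, F ω ∂Q = κ * ∫ ω, A ω ^ κ * Real.log (A ω) ∂Q := by
    have hi : Integrable (fun ω => A ω ^ κ - 1) Q := hAκ'.sub (integrable_const 1)
    simp only [hF]
    rw [integral_sub (hInteg.const_mul κ) hi, integral_sub hAκ' (integrable_const 1),
      integral_const_mul, hAκ]
    simp
  have hpos : 0 < ∫ ω, F ω ∂Q := by
    refine lt_of_le_of_ne (integral_nonneg hF0) (fun h => hne ?_)
    have := (integral_eq_zero_iff_of_nonneg hF0 hFi).mp h.symm
    filter_upwards [this] with ω hω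
    have h1 : A ω ^ κ = 1 := by
      apply xlogx_eq (Real.rpow_nonneg (hA0 ω) κ)
      rw [klogk (hA0 ω) hκ]
      simp only [hF, Pi.zero_apply] at hω
      linarith
    exact rpow_one_imp (hA0 ω) hκ h1
  rw [hFint] at hpos
  exact (pos_iff_pos_of_mul_pos hpos).mp hκ

lemma rpow_half_sq {x : ℝ} (hx : 0 ≤ x) (κ : ℝ) : x ^ κ = (x ^ (κ / 2)) ^ 2 := by
  rw [← Real.rpow_mul_natCast hx]; congr 1; push_cast; ring

lemma half_moment {Ω : Type*} [MeasurableSpace Ω] (Q : Measure Ω) [IsProbabilityMeasure Q]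
    (A : Ω → ℝ) (hAm : Measurable A) (hA0 : ∀ ω, 0 ≤ A ω) (κ : ℝ) (hκ : 0 < κ)
    (hAκ : ∫ ω, A ω ^ κ ∂Q = 1) (hAκ' : Integrable (fun ω => A ω ^ κ) Q)
    (hne : ¬ ∀ᵐ ω ∂Q, A ω = 1) :
    Integrable (fun ω => A ω ^ (κ / 2)) Q ∧ 0 ≤ ∫ ω, A ω ^ (κ / 2) ∂Q ∧
    ∫ ω, A ω ^ (κ / 2) ∂Q < 1 := by
  have hInteg : Integrable (fun ω => A ω ^ (κ / 2)) Q := by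
    refine (hAκ'.add (integrable_const 1)).mono' (hAm.pow_const _).aestronglyMeasurable (Eventually.of_forall ?_)
    intro ω
    have hp : 0 ≤ A ω ^ (κ / 2) := Real.rpow_nonneg (hA0 ω) _
    simp only [Pi.add_apply, Real.norm_eq_abs, abs_of_nonneg hp]
    rw [rpow_half_sq (hA0 ω) κ]
    nlinarith
  refine ⟨hInteg, integral_nonneg fun ω => Real.rpow_nonneg (hA0 ω) _, ?_⟩
  set F : Ω → ℝ := fun ω => A ω ^ κ + 1 - 2 * A ω ^ (κ / 2) with hF
  have hi : Integrable (fun ω => A ω ^ κ + 1) Q := hAκ'.add (integrable_const 1)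
  have hFi : Integrable F Q := hi.sub (hInteg.const_mul 2)
  have hF1 : ∀ ω, F ω = (A ω ^ (κ / 2) - 1) ^ 2 := by
    intro ω; simp only [hF]; rw [rpow_half_sq (hA0 ω) κ]; ring
  have hF0 : ∀ ω, 0 ≤ F ω := fun ω => by rw [hF1]; positivity
  have hFint : ∫ ω, F ω ∂Q = 2 - 2 * ∫ ω, A ω ^ (κ / 2) ∂Q := by
    simp only [hF]
    rw [integral_sub hi (hInteg.const_mul 2), integral_add hAκ' (integrable_const 1),
      integral_const_mul, hAκ]
    simp; norm_num
  have hpos : 0 < ∫ ω, F ω ∂Q := by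
    refine lt_of_le_of_ne (integral_nonneg hF0) (fun h => hne ?_)
    have := (integral_eq_zero_iff_of_nonneg hF0 hFi).mp h.symm
    filter_upwards [this] with ω hω
    rw [hF1] at hω
    have h1 : A ω ^ (κ / 2) = 1 := by
      have := pow_eq_zero_iff (two_ne_zero) |>.mp hω
      linarith
    exact rpow_one_imp (hA0 ω) (by positivity) h1
  linarith

lemma indep_integral {Ω : Type*} [MeasurableSpace Ω] {Q : Measure Ω} [IsProbabilityMeasure Q]
    {X Y : Ω → ℝ} (hX : Measurable X) (hY : Measurable Y) (h : IndepFun X Y Q)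
    (f : ℝ → ℝ → ℝ) (hf : Measurable (fun p : ℝ × ℝ => f p.1 p.2))
    (hInteg : Integrable (fun ω => f (X ω) (Y ω)) Q) :
    ∫ ω, f (X ω) (Y ω) ∂Q = ∫ ω, ∫ ω', f (X ω) (Y ω') ∂Q ∂Q := by
  have hprod := (indepFun_iff_map_prod_eq_prod_map_map hX.aemeasurable hY.aemeasurable).mp h
  have := Measure.isProbabilityMeasure_map (μ := Q) hX.aemeasurable
  have := Measure.isProbabilityMeasure_map (μ := Q) hY.aemeasurable
  have hXY : Measurable fun ω => (X ω, Y ω) := hX.prodMk hY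
  have h1 : ∫ ω, f (X ω) (Y ω) ∂Q = ∫ p, f p.1 p.2 ∂((Q.map X).prod (Q.map Y)) := by
    rw [← hprod, integral_map hXY.aemeasurable hf.aestronglyMeasurable]
  have h2 : Integrable (fun p : ℝ × ℝ => f p.1 p.2) ((Q.map X).prod (Q.map Y)) := by
    rw [← hprod, integrable_map_measure hf.aestronglyMeasurable hXY.aemeasurable]
    exact hInteg
  rw [h1, integral_prod _ h2, integral_map hX.aemeasurable]
  · congr 1; ext ω
    rw [integral_map hY.aemeasurable]
    exact (hf.comp measurable_prodMk_left).aestronglyMeasurable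
  · exact h2.integral_prod_left.aestronglyMeasurable

lemma min_rpow {x y s : ℝ} (hx : 0 ≤ x) (hy : 0 ≤ y) (hs : 0 < s) :
    (min x y) ^ s = min (x ^ s) (y ^ s) := by
  rcases le_total x y with h | h
  · rw [min_eq_left h, min_eq_left (Real.rpow_le_rpow hx h hs.le)]
  · rw [min_eq_right h, min_eq_right (Real.rpow_le_rpow hy h hs.le)]

lemma min_scale {a r n s : ℝ} (ha : 0 < a) (hr : 0 ≤ r) (hn : 0 ≤ n) :
    (min (a * r) n) ^ s = a ^ s * (min r (n / a)) ^ s := by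
  rw [← Real.mul_rpow ha.le (le_min hr (by positivity)), mul_min_of_nonneg _ _ ha.le,
    mul_div_cancel₀ _ ha.ne']

lemma half_moment_R {Ω : Type*} [MeasurableSpace Ω] (Q : Measure Ω) [IsProbabilityMeasure Q]
    (A B R : Ω → ℝ) (hAm : Measurable A) (hBm : Measurable B) (hRm : Measurable R)
    (hA0 : ∀ ω, 0 ≤ A ω) (hB0 : ∀ ω, 0 ≤ B ω) (hR0 : ∀ ω, 0 ≤ R ω)
    (hd : ∀ φ : ℝ → ℝ, Measurable φ → ∫ ω, φ (R ω) ∂Q = ∫ ω, φ (A ω * R ω + B ω) ∂Q)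
    (hindep : IndepFun A R Q) (κ : ℝ) (hκ : 0 < κ)
    (hmom : Integrable (fun ω => (A ω * R ω + B ω) ^ κ - (A ω * R ω) ^ κ) Q)
    (hi : Integrable (fun ω => A ω ^ (κ / 2)) Q) (hρ0 : 0 ≤ ∫ ω, A ω ^ (κ / 2) ∂Q)
    (hρ : ∫ ω, A ω ^ (κ / 2) ∂Q < 1) :
    Integrable (fun ω => R ω ^ (κ / 2)) Q := by
  set s := κ / 2 with hs
  have hs0 : 0 < s := by positivity
  set ρ := ∫ ω, A ω ^ s ∂Q with hρdef
  set D := ∫ ω, ((A ω * R ω + B ω) ^ κ - (A ω * R ω) ^ κ) ∂Q with hD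
  have hbdd : ∀ (X : Ω → ℝ) (_ : Measurable X) (_ : ∀ ω, 0 ≤ X ω) (n : ℝ), 0 < n →
      Integrable (fun ω => (min (X ω) n) ^ s) Q := by
    intro X hX hX0 n hn
    refine (integrable_const (n ^ s)).mono'
      ((hX.min measurable_const).pow_const _).aestronglyMeasurable (Eventually.of_forall ?_)
    intro ω
    have h0 : 0 ≤ min (X ω) n := le_min (hX0 ω) hn.le
    rw [Real.norm_eq_abs, abs_of_nonneg (Real.rpow_nonneg h0 _)]
    exact Real.rpow_le_rpow h0 (min_le_right _ _) hs0.le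
  have hARm : Measurable fun ω => A ω * R ω := hAm.mul hRm
  have hAR0 : ∀ ω, 0 ≤ A ω * R ω := fun ω => mul_nonneg (hA0 ω) (hR0 ω)
  have hABm : Measurable fun ω => A ω * R ω + B ω := hARm.add hBm
  have hAB0 : ∀ ω, 0 ≤ A ω * R ω + B ω := fun ω => add_nonneg (hAR0 ω) (hB0 ω)
  set M : ℝ → ℝ := fun n => ∫ ω, (min (R ω) n) ^ s ∂Q with hM
  -- first recursion
  have hrec : ∀ n, 0 < n → M n ≤ (1 + D) + ∫ ω, (min (A ω * R ω) n) ^ s ∂Q := by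
    intro n hn
    have h1 : M n = ∫ ω, (min (A ω * R ω + B ω) n) ^ s ∂Q :=
      hd (fun x => (min x n) ^ s) ((measurable_id.min measurable_const).pow_const _)
    have h2 : (∫ ω, (min (A ω * R ω + B ω) n) ^ s ∂Q) ≤
        ∫ ω, ((1 + ((A ω * R ω + B ω) ^ κ - (A ω * R ω) ^ κ)) + (min (A ω * R ω) n) ^ s) ∂Q := by
      refine integral_mono (hbdd _ hABm hAB0 n hn)
        (((integrable_const 1).add hmom).add (hbdd _ hARm hAR0 n hn)) ?_
      intro ω
      simp only
      rw [min_rpow (hAB0 ω) hn.le hs0, min_rpow (hAR0 ω) hn.le hs0, rpow_half_sq (hAB0 ω) κ,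
        rpow_half_sq (hAR0 ω) κ, ← hs]
      have hle : (A ω * R ω) ^ s ≤ (A ω * R ω + B ω) ^ s :=
        Real.rpow_le_rpow (hAR0 ω) (by linarith [hB0 ω]) hs0.le
      have hq : 0 ≤ (A ω * R ω) ^ s := Real.rpow_nonneg (hAR0 ω) _
      generalize (A ω * R ω) ^ s = q at *
      generalize (A ω * R ω + B ω) ^ s = p at *
      have h3 : min p (n ^ s) - min q (n ^ s) ≤ p - q := by
        rcases le_total p (n ^ s) with h | h
        · rw [min_eq_left h, min_eq_left (hle.trans h)]
        · rw [min_eq_right h]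
          rcases le_total q (n ^ s) with h' | h'
          · rw [min_eq_left h']; linarith
          · rw [min_eq_right h']; linarith
      have h4 : p - q ≤ 1 + (p ^ 2 - q ^ 2) := by
        rcases le_total 1 (p + q) with h | h
        · nlinarith
        · nlinarith
      linarith
    have hi1 : Integrable (fun ω => 1 + ((A ω * R ω + B ω) ^ κ - (A ω * R ω) ^ κ)) Q :=
      (integrable_const 1).add hmom
    rw [integral_add hi1 (hbdd _ hARm hAR0 n hn),
      integral_add (integrable_const 1) hmom] at h2
    simp only [integral_const, probReal_univ, smul_eq_mul, one_mul] at h2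
    rw [h1]
    exact h2
  -- second recursion
  have hrec2 : ∀ a δ : ℝ, 0 ≤ a → 0 ≤ δ → (∀ n, 0 < n → M n ≤ a + δ * n ^ s) →
      ∀ n, 0 < n → ∫ ω, (min (A ω * R ω) n) ^ s ∂Q ≤ a * ρ + δ * n ^ s := by
    intro a δ ha hδ h n hn
    rw [indep_integral hAm hRm hindep (fun a r => (min (a * r) n) ^ s)
      (((measurable_fst.mul measurable_snd).min measurable_const).pow_const _)
      (hbdd _ hARm hAR0 n hn)]
    have h1 : a * ρ + δ * n ^ s = ∫ ω, (a * A ω ^ s + δ * n ^ s) ∂Q := by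
      rw [integral_add (hi.const_mul a) (integrable_const _), integral_const_mul, ← hρdef]
      simp
    rw [h1]
    refine integral_mono_of_nonneg (Eventually.of_forall fun ω => integral_nonneg fun ω' =>
      Real.rpow_nonneg (le_min (mul_nonneg (hA0 ω) (hR0 ω')) hn.le) _)
      ((hi.const_mul a).add (integrable_const _)) (Eventually.of_forall fun ω => ?_)
    simp only
    rcases (hA0 ω).eq_or_lt with h0 | h0
    · rw [← h0]
      simp only [zero_mul, min_eq_left hn.le, Real.zero_rpow hs0.ne', integral_zero]
      positivity
    · have h2 : ∀ ω', (min (A ω * R ω') n) ^ s = A ω ^ s * (min (R ω') (n / A ω)) ^ s :=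
        fun ω' => min_scale h0 (hR0 ω') hn.le
      simp only [h2]
      rw [integral_const_mul]
      have h3 := h (n / A ω) (by positivity)
      have h4 : 0 < A ω ^ s := Real.rpow_pos_of_pos h0 _
      calc A ω ^ s * M (n / A ω) ≤ A ω ^ s * (a + δ * (n / A ω) ^ s) := by gcongr
        _ = a * A ω ^ s + δ * n ^ s := by
          rw [Real.div_rpow hn.le h0.le]; field_simp
  have hD0 : 0 ≤ D := integral_nonneg fun ω => sub_nonneg.mpr
    (Real.rpow_le_rpow (hAR0 ω) (by linarith [hB0 ω]) hκ.le)
  have h1ρ : 0 < 1 - ρ := by linarith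
  set K := (1 + D) / (1 - ρ) with hK
  have hK0 : 0 ≤ K := by positivity
  have hKeq : (1 + D) + K * ρ = K := by
    rw [hK]; field_simp; ring
  have hMδ : ∀ δ : ℝ, 0 < δ → ∀ n, 0 < n → M n ≤ K + δ * n ^ s := by
    intro δ hδ
    obtain ⟨L, hL0, hL⟩ : ∃ L : ℝ, 0 < L ∧ Q.real {ω | L < R ω} ≤ δ := by
      have ht : Tendsto (fun k : ℕ => Q.real {ω | (k : ℝ) < R ω}) atTop (nhds 0) := by
        have h1 := tendsto_measure_iInter_atTop (μ := Q) (s := fun k : ℕ => {ω | (k : ℝ) < R ω})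
          (fun k => (measurableSet_lt measurable_const hRm).nullMeasurableSet)
          (by
            intro k l hkl ω hω
            have h1 : (l : ℝ) < R ω := hω
            have h2 : (k : ℝ) ≤ l := by exact_mod_cast hkl
            exact lt_of_le_of_lt h2 h1) ⟨0, measure_ne_top _ _⟩
        have h2 : (⋂ k : ℕ, {ω | (k : ℝ) < R ω}) = ∅ := by
          ext ω
          simp only [Set.mem_iInter, Set.mem_empty_iff_false, iff_false, not_forall]
          obtain ⟨k, hk⟩ := exists_nat_gt (R ω)
          exact ⟨k, fun h => lt_asymm hk h⟩
        rw [h2, measure_empty] at h1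
        have := (ENNReal.tendsto_toReal ENNReal.zero_ne_top).comp h1
        exact this
      obtain ⟨k, hk, hk1⟩ := ((ht.eventually (ge_mem_nhds hδ)).and
        (eventually_gt_atTop 0)).exists
      exact ⟨k, by exact_mod_cast hk1, hk⟩
    have hinit : ∀ n, 0 < n → M n ≤ L ^ s + δ * n ^ s := by
      intro n hn
      have hset : MeasurableSet {ω | L < R ω} := measurableSet_lt measurable_const hRm
      have hind : Integrable ({ω | L < R ω}.indicator fun _ => n ^ s) Q :=
        (integrable_const _).indicator hset
      have : M n ≤ ∫ ω, (L ^ s + {ω | L < R ω}.indicator (fun _ => n ^ s) ω) ∂Q := by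
        refine integral_mono (hbdd _ hRm hR0 n hn) ((integrable_const _).add hind) ?_
        intro ω
        have h0 : 0 ≤ min (R ω) n := le_min (hR0 ω) hn.le
        have hL' : 0 ≤ L ^ s := Real.rpow_nonneg hL0.le _
        by_cases h : L < R ω
        · have : {ω | L < R ω}.indicator (fun _ => n ^ s) ω = n ^ s :=
            by simp [Set.indicator, h]
          simp only [this]
          have := Real.rpow_le_rpow h0 (min_le_right _ _) hs0.le
          linarith
        · have : {ω | L < R ω}.indicator (fun _ => n ^ s) ω = 0 :=
            by simp [Set.indicator, h]
          simp only [this]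
          have := Real.rpow_le_rpow h0 ((min_le_left _ _).trans (not_lt.mp h)) hs0.le
          linarith
      rw [integral_add (integrable_const _) hind, integral_indicator_const _ hset] at this
      simp only [integral_const, probReal_univ, smul_eq_mul, one_mul] at this
      have hn' : 0 ≤ n ^ s := Real.rpow_nonneg hn.le _
      have := mul_le_mul_of_nonneg_right hL hn'
      linarith
    have hL' : 0 ≤ L ^ s := Real.rpow_nonneg hL0.le _
    have hk : ∀ k : ℕ, ∀ n, 0 < n → M n ≤ (K + ρ ^ k * L ^ s) + δ * n ^ s := by
      intro k
      induction k with
      | zero => intro n hn; have := hinit n hn; simp; linarith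
      | succ k ih =>
        intro n hn
        have h1 := hrec n hn
        have h2 := hrec2 (K + ρ ^ k * L ^ s) δ (by positivity) hδ.le ih n hn
        have h3 : (K + ρ ^ k * L ^ s) * ρ = K * ρ + ρ ^ (k + 1) * L ^ s := by ring
        linarith
    intro n hn
    have hlim : Tendsto (fun k : ℕ => (K + ρ ^ k * L ^ s) + δ * n ^ s) atTop
        (nhds ((K + 0 * L ^ s) + δ * n ^ s)) :=
      (((tendsto_pow_atTop_nhds_zero_of_lt_one hρ0 hρ).mul_const _).const_add _).add_const _
    have := ge_of_tendsto' hlim (fun k => hk k n hn)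
    linarith
  have hMK : ∀ n, 0 < n → M n ≤ K := by
    intro n hn
    have hlim : Tendsto (fun δ : ℝ => K + δ * n ^ s) (nhdsWithin 0 (Set.Ioi 0))
        (nhds (K + 0 * n ^ s)) :=
      ((tendsto_id.mono_left nhdsWithin_le_nhds).mul_const _).const_add _
    have := ge_of_tendsto hlim (eventually_nhdsWithin_of_forall fun δ hδ => hMδ δ hδ n hn)
    linarith
  -- Fatou
  refine ⟨(hRm.pow_const _).aestronglyMeasurable, ?_⟩
  rw [hasFiniteIntegral_iff_ofReal (Eventually.of_forall fun ω => Real.rpow_nonneg (hR0 ω) _)]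
  refine lt_of_le_of_lt ?_ (ENNReal.ofReal_lt_top (r := K))
  have hfat := lintegral_liminf_le (μ := Q) (u := atTop)
    (f := fun (k : ℕ) ω => ENNReal.ofReal ((min (R ω) ((k : ℝ) + 1)) ^ s))
    (fun k => ((hRm.min measurable_const).pow_const _).ennreal_ofReal)
  have hl : ∀ ω, liminf (fun k : ℕ => ENNReal.ofReal ((min (R ω) ((k : ℝ) + 1)) ^ s)) atTop
      = ENNReal.ofReal (R ω ^ s) := by
    intro ω
    apply Tendsto.liminf_eq
    apply tendsto_const_nhds.congr'
    obtain ⟨N, hN⟩ := exists_nat_gt (R ω)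
    filter_upwards [eventually_ge_atTop N] with k hk
    have : (N : ℝ) ≤ k := by exact_mod_cast hk
    rw [min_eq_left (by linarith)]
  simp only [hl] at hfat
  refine hfat.trans ?_
  refine liminf_le_of_frequently_le' (Frequently.of_forall fun k => ?_)
  rw [← ofReal_integral_eq_lintegral_ofReal (hbdd _ hRm hR0 _ (by positivity))
    (Eventually.of_forall fun ω => Real.rpow_nonneg (le_min (hR0 ω) (by positivity)) _)]
  exact ENNReal.ofReal_le_ofReal (hMK _ (by positivity))

lemma tail_bound {Ω : Type*} [MeasurableSpace Ω] (Q : Measure Ω) [IsProbabilityMeasure Q]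
    (A B R : Ω → ℝ) (hAm : Measurable A) (hBm : Measurable B) (hRm : Measurable R)
    (hA0 : ∀ ω, 0 ≤ A ω) (hB0 : ∀ ω, 0 ≤ B ω) (hR0 : ∀ ω, 0 ≤ R ω)
    (hd : ∀ φ : ℝ → ℝ, Measurable φ → ∫ ω, φ (R ω) ∂Q = ∫ ω, φ (A ω * R ω + B ω) ∂Q)
    (hdi : ∀ φ : ℝ → ℝ, Measurable φ → Integrable (fun ω => φ (R ω)) Q →
      Integrable (fun ω => φ (A ω * R ω + B ω)) Q)
    (hindep : IndepFun A R Q) (κ : ℝ) (hκ : 0 < κ)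
    (hAκ : ∫ ω, A ω ^ κ ∂Q = 1) (hAκ' : Integrable (fun ω => A ω ^ κ) Q)
    (hmom : Integrable (fun ω => (A ω * R ω + B ω) ^ κ - (A ω * R ω) ^ κ) Q)
    (hi : Integrable (fun ω => A ω ^ (κ / 2)) Q) (hρ0 : 0 ≤ ∫ ω, A ω ^ (κ / 2) ∂Q)
    (hρ : ∫ ω, A ω ^ (κ / 2) ∂Q < 1) :
    ∃ C : ℝ, 0 ≤ C ∧ ∀ T : ℝ, 0 < T → T ^ κ * Q.real {ω | T < R ω} ≤ C := by
  have hRi := half_moment_R Q A B R hAm hBm hRm hA0 hB0 hR0 hd hindep κ hκ hmom hi hρ0 hρ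
  set s := κ / 2 with hs
  have hs0 : 0 < s := by positivity
  set ρ := ∫ ω, A ω ^ s ∂Q with hρdef
  set D := ∫ ω, ((A ω * R ω + B ω) ^ κ - (A ω * R ω) ^ κ) ∂Q with hD
  have hARm : Measurable fun ω => A ω * R ω := hAm.mul hRm
  have hAR0 : ∀ ω, 0 ≤ A ω * R ω := fun ω => mul_nonneg (hA0 ω) (hR0 ω)
  have hABm : Measurable fun ω => A ω * R ω + B ω := hARm.add hBm
  have hAB0 : ∀ ω, 0 ≤ A ω * R ω + B ω := fun ω => add_nonneg (hAR0 ω) (hB0 ω)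
  have hD0 : 0 ≤ D := integral_nonneg fun ω => sub_nonneg.mpr
    (Real.rpow_le_rpow (hAR0 ω) (by linarith [hB0 ω]) hκ.le)
  have h1ρ : 0 < 1 - ρ := by linarith
  refine ⟨D / (1 - ρ), by positivity, fun T hT => ?_⟩
  set c := T ^ s with hc
  have hc0 : 0 < c := Real.rpow_pos_of_pos hT _
  set ψ : ℝ → ℝ := fun y => min (y ^ κ) (c * y ^ s) with hψ
  have hψm : Measurable ψ := by
    exact (measurable_id.pow_const _).min ((measurable_id.pow_const _).const_mul _)
  have hψ0 : ∀ y, 0 ≤ y → 0 ≤ ψ y := fun y hy =>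
    le_min (Real.rpow_nonneg hy _) (mul_nonneg hc0.le (Real.rpow_nonneg hy _))
  have hψR : Integrable (fun ω => ψ (R ω)) Q := by
    refine (hRi.const_mul c).mono' (hψm.comp hRm).aestronglyMeasurable
      (Eventually.of_forall fun ω => ?_)
    rw [Real.norm_eq_abs, abs_of_nonneg (hψ0 _ (hR0 ω))]
    exact min_le_right _ _
  have hψAB := hdi ψ hψm hψR
  have hψmono : ∀ u v, 0 ≤ u → u ≤ v → ψ u ≤ ψ v := by
    intro u v hu huv
    exact min_le_min (Real.rpow_le_rpow hu huv hκ.le)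
      (mul_le_mul_of_nonneg_left (Real.rpow_le_rpow hu huv hs0.le) hc0.le)
  have hψAR : Integrable (fun ω => ψ (A ω * R ω)) Q := by
    refine hψAB.mono' (hψm.comp hARm).aestronglyMeasurable (Eventually.of_forall fun ω => ?_)
    rw [Real.norm_eq_abs, abs_of_nonneg (hψ0 _ (hAR0 ω))]
    exact hψmono _ _ (hAR0 ω) (by linarith [hB0 ω])
  have h1 : ∫ ω, ψ (R ω) ∂Q ≤ (∫ ω, ψ (A ω * R ω) ∂Q) + D := by
    rw [hd ψ hψm, hD, ← integral_add hψAR hmom]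
    refine integral_mono hψAB (hψAR.add hmom) fun ω => ?_
    simp only [hψ]
    rw [rpow_half_sq (hAB0 ω) κ, rpow_half_sq (hAR0 ω) κ, ← hs]
    have hle : (A ω * R ω) ^ s ≤ (A ω * R ω + B ω) ^ s :=
        Real.rpow_le_rpow (hAR0 ω) (by linarith [hB0 ω]) hs0.le
    have hq : 0 ≤ (A ω * R ω) ^ s := Real.rpow_nonneg (hAR0 ω) _
    generalize (A ω * R ω) ^ s = q at *
    generalize (A ω * R ω + B ω) ^ s = p at *
    rcases le_total q c with h | h
    · rw [min_eq_left (by nlinarith : q ^ 2 ≤ c * q)]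
      have := min_le_left (p ^ 2) (c * p)
      linarith
    · rw [min_eq_right (by nlinarith : c * q ≤ q ^ 2)]
      have := min_le_right (p ^ 2) (c * p)
      nlinarith
  set χ : ℝ → ℝ := fun y => min (y ^ κ) (ρ * (c * y ^ s)) with hχ
  have hχm : Measurable χ := by
    exact (measurable_id.pow_const _).min (((measurable_id.pow_const _).const_mul _).const_mul _)
  have hχR : Integrable (fun ω => χ (R ω)) Q := by
    refine hψR.mono' (hχm.comp hRm).aestronglyMeasurable (Eventually.of_forall fun ω => ?_)
    have h2 : 0 ≤ c * R ω ^ s := mul_nonneg hc0.le (Real.rpow_nonneg (hR0 ω) _)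
    rw [Real.norm_eq_abs, abs_of_nonneg]
    · exact min_le_min le_rfl (by nlinarith)
    · exact le_min (Real.rpow_nonneg (hR0 ω) _) (mul_nonneg hρ0 h2)
  have h2 : ∫ ω, ψ (A ω * R ω) ∂Q ≤ ∫ ω, χ (R ω) ∂Q := by
    have h3 : ∫ ω, ψ (A ω * R ω) ∂Q = ∫ ω, ∫ ω', ψ (A ω' * R ω) ∂Q ∂Q :=
      indep_integral hRm hAm hindep.symm (fun r a => ψ (a * r))
        (hψm.comp (measurable_snd.mul measurable_fst)) hψAR
    rw [h3]
    refine integral_mono_of_nonneg (Eventually.of_forall fun ω => integral_nonneg fun ω' =>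
      hψ0 _ (mul_nonneg (hA0 ω') (hR0 ω))) hχR (Eventually.of_forall fun ω => ?_)
    simp only
    have hn : ∀ᵐ ω' ∂Q, 0 ≤ ψ (A ω' * R ω) :=
      Eventually.of_forall fun ω' => hψ0 _ (mul_nonneg (hA0 ω') (hR0 ω))
    refine le_min ?_ ?_
    · calc ∫ ω', ψ (A ω' * R ω) ∂Q ≤ ∫ ω', A ω' ^ κ * R ω ^ κ ∂Q := by
            refine integral_mono_of_nonneg hn (hAκ'.mul_const _)
              (Eventually.of_forall fun ω' => ?_)
            simp only [hψ]
            rw [Real.mul_rpow (hA0 ω') (hR0 ω)]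
            exact min_le_left _ _
        _ = R ω ^ κ := by rw [integral_mul_const, hAκ, one_mul]
    · calc ∫ ω', ψ (A ω' * R ω) ∂Q ≤ ∫ ω', A ω' ^ s * (c * R ω ^ s) ∂Q := by
            refine integral_mono_of_nonneg hn (hi.mul_const _)
              (Eventually.of_forall fun ω' => ?_)
            simp only [hψ]
            rw [Real.mul_rpow (z := s) (hA0 ω') (hR0 ω)]
            refine (min_le_right _ _).trans (le_of_eq (by ring))
        _ = ρ * (c * R ω ^ s) := by rw [integral_mul_const]
  have hset : MeasurableSet {ω | T < R ω} := measurableSet_lt measurable_const hRm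
  have h4 : ∫ ω, {ω | T < R ω}.indicator (fun _ => (1 - ρ) * T ^ κ) ω ∂Q ≤
      ∫ ω, (ψ (R ω) - χ (R ω)) ∂Q := by
    refine integral_mono ((integrable_const _).indicator hset) (hψR.sub hχR) fun ω => ?_
    have h2 : 0 ≤ c * R ω ^ s := mul_nonneg hc0.le (Real.rpow_nonneg (hR0 ω) _)
    have hle : χ (R ω) ≤ ψ (R ω) := min_le_min le_rfl (by nlinarith)
    by_cases h : T < R ω
    · have : {ω | T < R ω}.indicator (fun _ => (1 - ρ) * T ^ κ) ω = (1 - ρ) * T ^ κ :=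
        by simp [Set.indicator, h]
      rw [this]
      have h5 : c ≤ R ω ^ s := Real.rpow_le_rpow hT.le h.le hs0.le
      have h6 : χ (R ω) ≤ ρ * (c * R ω ^ s) := min_le_right _ _
      have h7 : ψ (R ω) = c * R ω ^ s := by
        simp only [hψ]
        rw [rpow_half_sq (hR0 ω) κ, ← hs]
        exact min_eq_right (by nlinarith)
      have h8 : T ^ κ = c ^ 2 := by rw [rpow_half_sq hT.le κ]
      rw [h8, h7]
      have h9 : c ^ 2 ≤ c * R ω ^ s := by nlinarith
      nlinarith
    · have : {ω | T < R ω}.indicator (fun _ => (1 - ρ) * T ^ κ) ω = 0 :=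
        by simp [Set.indicator, h]
      rw [this]; linarith
  rw [integral_indicator_const _ hset, integral_sub hψR hχR, smul_eq_mul] at h4
  rw [le_div_iff₀ h1ρ]
  linarith

lemma main_limit {Ω : Type*} [MeasurableSpace Ω] (Q : Measure Ω) [IsProbabilityMeasure Q]
    (A B R : Ω → ℝ) (hAm : Measurable A) (hBm : Measurable B) (hRm : Measurable R)
    (hA0 : ∀ ω, 0 ≤ A ω) (hB0 : ∀ ω, 0 ≤ B ω) (hR0 : ∀ ω, 0 ≤ R ω)
    (hd : ∀ φ : ℝ → ℝ, Measurable φ → ∫ ω, φ (R ω) ∂Q = ∫ ω, φ (A ω * R ω + B ω) ∂Q)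
    (hindep : IndepFun A R Q) (κ : ℝ) (hκ : 0 < κ)
    (hAκ : ∫ ω, A ω ^ κ ∂Q = 1) (hAκ' : Integrable (fun ω => A ω ^ κ) Q)
    (hnonarith : ¬ ∃ h > (0 : ℝ),
      Q {ω | A ω ≠ 0 ∧ ∃ n : ℤ, Real.log (A ω) = n * h} = Q {ω | A ω ≠ 0})
    (hmom : Integrable (fun ω => (A ω * R ω + B ω) ^ κ - (A ω * R ω) ^ κ) Q)
    (hlog : Integrable (fun ω => A ω ^ κ * Real.log (A ω)) Q)
    (hm : 0 < ∫ ω, A ω ^ κ * Real.log (A ω) ∂Q)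
    (C : ℝ) (hC0 : 0 ≤ C) (hC : ∀ T : ℝ, 0 < T → T ^ κ * Q.real {ω | T < R ω} ≤ C) :
    Tendsto (fun t : ℝ => t ^ κ * Q.real {ω | t < R ω}) atTop
      (nhds ((∫ ω, ((A ω * R ω + B ω) ^ κ - (A ω * R ω) ^ κ) ∂Q) /
        (κ * ∫ ω, A ω ^ κ * Real.log (A ω) ∂Q))) := by
  set D := ∫ ω, ((A ω * R ω + B ω) ^ κ - (A ω * R ω) ^ κ) ∂Q with hD
  have hARm : Measurable fun ω => A ω * R ω := hAm.mul hRm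
  have hAR0 : ∀ ω, 0 ≤ A ω * R ω := fun ω => mul_nonneg (hA0 ω) (hR0 ω)
  have hABm : Measurable fun ω => A ω * R ω + B ω := hARm.add hBm
  have hAB0 : ∀ ω, 0 ≤ A ω * R ω + B ω := fun ω => add_nonneg (hAR0 ω) (hB0 ω)
  have hbdd : ∀ (X : Ω → ℝ) (_ : Measurable X) (_ : ∀ ω, 0 ≤ X ω) (n : ℝ), 0 < n →
      Integrable (fun ω => (min (X ω) n) ^ κ) Q := by
    intro X hX hX0 n hn
    refine (integrable_const (n ^ κ)).mono'
      ((hX.min measurable_const).pow_const _).aestronglyMeasurable (Eventually.of_forall ?_)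
    intro ω
    have h0 : 0 ≤ min (X ω) n := le_min (hX0 ω) hn.le
    rw [Real.norm_eq_abs, abs_of_nonneg (Real.rpow_nonneg h0 _)]
    exact Real.rpow_le_rpow h0 (min_le_right _ _) hκ.le
  -- tilted measure
  set ν := Q.withDensity (fun ω => ENNReal.ofReal (A ω ^ κ)) with hν
  have hdm : Measurable (fun ω => ENNReal.ofReal (A ω ^ κ)) := (hAm.pow_const κ).ennreal_ofReal
  have hp0 : ∀ ω, 0 ≤ A ω ^ κ := fun ω => Real.rpow_nonneg (hA0 ω) _
  have hν1 : IsProbabilityMeasure ν := by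
    constructor
    rw [hν, withDensity_apply _ MeasurableSet.univ, Measure.restrict_univ,
      ← ofReal_integral_eq_lintegral_ofReal hAκ' (Eventually.of_forall hp0), hAκ]
    simp
  have hνint : ∀ φ : Ω → ℝ, ∫ ω, φ ω ∂ν = ∫ ω, A ω ^ κ * φ ω ∂Q := by
    intro φ
    rw [hν, integral_withDensity_eq_integral_toReal_smul hdm
      (Eventually.of_forall fun ω => ENNReal.ofReal_lt_top)]
    simp only [ENNReal.toReal_ofReal (hp0 _), smul_eq_mul]
  have hνi : ∀ φ : Ω → ℝ, Integrable φ ν ↔ Integrable (fun ω => A ω ^ κ * φ ω) Q := by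
    intro φ
    rw [hν, integrable_withDensity_iff_integrable_smul' hdm
      (Eventually.of_forall fun ω => ENNReal.ofReal_lt_top)]
    simp only [ENNReal.toReal_ofReal (hp0 _), smul_eq_mul]
  have hlm : Measurable fun ω => Real.log (A ω) := Real.measurable_log.comp hAm
  set μ := ν.map (fun ω => Real.log (A ω)) with hμ
  have hμ1 : IsProbabilityMeasure μ := Measure.isProbabilityMeasure_map hlm.aemeasurable
  have hμint : ∀ φ : ℝ → ℝ, Measurable φ →
      ∫ y, φ y ∂μ = ∫ ω, A ω ^ κ * φ (Real.log (A ω)) ∂Q := by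
    intro φ hφ
    rw [hμ, integral_map hlm.aemeasurable hφ.aestronglyMeasurable, hνint]
  have hmean : ∫ y, y ∂μ = ∫ ω, A ω ^ κ * Real.log (A ω) ∂Q := hμint _ measurable_id
  have hμi : Integrable (fun y : ℝ => y) μ := by
    rw [hμ]
    exact (integrable_map_measure (f := fun ω => Real.log (A ω)) (g := fun y : ℝ => y)
      measurable_id.aestronglyMeasurable hlm.aemeasurable).mpr ((hνi _).mpr hlog)
  have hμna : ¬ ∃ h > (0 : ℝ), μ {x | ∃ n : ℤ, x = n * h}ᶜ = 0 := by
    rintro ⟨h, hh, h0⟩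
    apply hnonarith
    refine ⟨h, hh, ?_⟩
    have hms : MeasurableSet {x : ℝ | ∃ n : ℤ, x = n * h} := by
      have : {x : ℝ | ∃ n : ℤ, x = n * h} = Set.range (fun n : ℤ => (n : ℝ) * h) := by
        ext x; simp [eq_comm]
      rw [this]
      exact (Set.countable_range _).measurableSet
    rw [hμ, Measure.map_apply hlm hms.compl, hν, withDensity_apply_eq_zero hdm] at h0
    apply measure_congr
    have h1 : ∀ᵐ ω ∂Q, ω ∉ ({x | ENNReal.ofReal (A x ^ κ) ≠ 0} ∩
      (fun ω => Real.log (A ω)) ⁻¹' {x : ℝ | ∃ n : ℤ, x = n * h}ᶜ) := measure_eq_zero_iff_ae_notMem.mp h0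
    filter_upwards [h1] with ω hω
    apply propext
    refine ⟨fun h => h.1, fun (h2 : A ω ≠ 0) => ⟨h2, ?_⟩⟩
    by_contra h3
    apply hω
    refine ⟨?_, h3⟩
    have h4 : 0 < A ω := lt_of_le_of_ne (hA0 ω) h2.symm
    have h5 := Real.rpow_pos_of_pos h4 κ
    simpa using h5
  -- the integrated tail
  set H : ℝ → ℝ := fun T => ∫ ω, (min (R ω) (Real.exp T)) ^ κ ∂Q with hH
  set p : ℝ → ℝ := fun T => Q.real {ω | Real.exp T < R ω} with hp
  have hexpκ : ∀ T : ℝ, (Real.exp T) ^ κ = Real.exp (κ * T) := fun T => by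
    rw [← Real.exp_mul, mul_comm]
  have hset : ∀ T : ℝ, MeasurableSet {ω | Real.exp T < R ω} := fun T =>
    measurableSet_lt measurable_const hRm
  have hHi : ∀ T, Integrable (fun ω => (min (R ω) (Real.exp T)) ^ κ) Q := fun T =>
    hbdd R hRm hR0 _ (Real.exp_pos T)
  have hup : ∀ a b, a ≤ b → H b - H a ≤ (Real.exp (κ * b) - Real.exp (κ * a)) * p a := by
    intro a b hab
    have he : Real.exp a ≤ Real.exp b := Real.exp_le_exp.mpr hab
    have h1 : H b - H a ≤ ∫ ω, {ω | Real.exp a < R ω}.indicator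
        (fun _ => Real.exp (κ * b) - Real.exp (κ * a)) ω ∂Q := by
      simp only [hH]
      rw [← integral_sub (hHi b) (hHi a)]
      refine integral_mono ((hHi b).sub (hHi a)) ((integrable_const _).indicator (hset a)) ?_
      intro ω
      by_cases h : Real.exp a < R ω
      · have : {ω | Real.exp a < R ω}.indicator
          (fun _ => Real.exp (κ * b) - Real.exp (κ * a)) ω =
            Real.exp (κ * b) - Real.exp (κ * a) := by
            simp [Set.indicator, h]
        simp only [this, min_eq_right h.le, hexpκ]
        have := Real.rpow_le_rpow (le_min (hR0 ω) (Real.exp_pos b).le)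
          (min_le_right (R ω) (Real.exp b)) hκ.le
        rw [hexpκ] at this
        linarith
      · have : {ω | Real.exp a < R ω}.indicator
          (fun _ => Real.exp (κ * b) - Real.exp (κ * a)) ω = 0 := by
            simp [Set.indicator, h]
        simp only [this]
        rw [min_eq_left (not_lt.mp h), min_eq_left ((not_lt.mp h).trans he), sub_self]
    rw [integral_indicator_const _ (hset a), smul_eq_mul] at h1
    simp only [hp]
    linarith
  have hlow : ∀ a b, a ≤ b → (Real.exp (κ * b) - Real.exp (κ * a)) * p b ≤ H b - H a := by
    intro a b hab
    have he : Real.exp a ≤ Real.exp b := Real.exp_le_exp.mpr hab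
    have h1 : ∫ ω, {ω | Real.exp b < R ω}.indicator
        (fun _ => Real.exp (κ * b) - Real.exp (κ * a)) ω ∂Q ≤ H b - H a := by
      simp only [hH]
      rw [← integral_sub (hHi b) (hHi a)]
      refine integral_mono ((integrable_const _).indicator (hset b)) ((hHi b).sub (hHi a)) ?_
      intro ω
      by_cases h : Real.exp b < R ω
      · have : {ω | Real.exp b < R ω}.indicator
          (fun _ => Real.exp (κ * b) - Real.exp (κ * a)) ω =
            Real.exp (κ * b) - Real.exp (κ * a) := by
            simp [Set.indicator, h]
        simp only [this, min_eq_right h.le, min_eq_right (he.trans h.le), hexpκ]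
        exact le_rfl
      · have : {ω | Real.exp b < R ω}.indicator
          (fun _ => Real.exp (κ * b) - Real.exp (κ * a)) ω = 0 := by
            simp [Set.indicator, h]
        simp only [this]
        exact sub_nonneg.mpr (Real.rpow_le_rpow (le_min (hR0 ω) (Real.exp_pos a).le)
          (min_le_min le_rfl he) hκ.le)
    rw [integral_indicator_const _ (hset b), smul_eq_mul] at h1
    simp only [hp]
    linarith
  have hp0' : ∀ T, 0 ≤ p T := fun T => measureReal_nonneg
  have hCT : ∀ T, Real.exp (κ * T) * p T ≤ C := fun T => by
    have := hC (Real.exp T) (Real.exp_pos T)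
    rwa [hexpκ] at this
  have hmono : ∀ a b, a ≤ b → H a ≤ H b := by
    intro a b hab
    have h1 := hlow a b hab
    have h2 : Real.exp (κ * a) ≤ Real.exp (κ * b) := Real.exp_le_exp.mpr (by nlinarith)
    have := mul_nonneg (sub_nonneg.mpr h2) (hp0' b)
    linarith
  have hmod : ∀ a b, a ≤ b → H b - H a ≤ C * (Real.exp (κ * (b - a)) - 1) := by
    intro a b hab
    refine (hup a b hab).trans ?_
    have h1 : Real.exp (κ * b) - Real.exp (κ * a)
        = (Real.exp (κ * (b - a)) - 1) * Real.exp (κ * a) := by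
      rw [sub_mul, ← Real.exp_add, one_mul]; ring_nf
    have h2 : 0 ≤ Real.exp (κ * (b - a)) - 1 := by
      rw [sub_nonneg]; exact Real.one_le_exp (mul_nonneg hκ.le (by linarith))
    rw [h1, mul_assoc, mul_comm C]
    exact mul_le_mul_of_nonneg_left (hCT a) h2
  have hu : ∀ ε > 0, ∃ δ > 0, ∀ x y, |x - y| < δ → |H x - H y| < ε := by
    intro ε hε
    have hcont : Continuous fun d : ℝ => C * (Real.exp (κ * d) - 1) := by fun_prop
    obtain ⟨δ, hδ, h⟩ := Metric.continuous_iff.mp hcont 0 ε hε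
    have key : ∀ x y, x ≤ y → |x - y| < δ → |H x - H y| < ε := by
      intro x y hxy h'
      rw [abs_sub_comm, abs_of_nonneg (sub_nonneg.mpr (hmono _ _ hxy))]
      have h1 := h (y - x) (by rw [Real.dist_eq, sub_zero, abs_sub_comm]; exact h')
      rw [Real.dist_eq] at h1
      simp only [mul_zero, Real.exp_zero, sub_self, sub_zero] at h1
      exact lt_of_le_of_lt (hmod x y hxy) (lt_of_le_of_lt (le_abs_self _) h1)
    refine ⟨δ, hδ, fun x y h' => ?_⟩
    rcases le_total x y with hxy | hxy
    · exact key x y hxy h'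
    · rw [abs_sub_comm] at h' ⊢
      exact key y x hxy h'
  set K := C * (Real.exp κ - 1) with hKdef
  have hK0 : 0 ≤ K := mul_nonneg hC0 (sub_nonneg.mpr (Real.one_le_exp hκ.le))
  have hKn : ∀ (n : ℕ) a, H (a + n) - H a ≤ n * K := by
    intro n a
    induction n with
    | zero => simp
    | succ n ih =>
      have h1 := hmod (a + n) (a + n + 1) (by linarith)
      rw [show κ * (a + n + 1 - (a + n)) = κ by ring] at h1
      push_cast
      rw [← add_assoc]
      linarith
  have hK : ∀ x y, |H x - H y| ≤ K * (1 + |x - y|) := by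
    have key : ∀ x y, x ≤ y → |H x - H y| ≤ K * (1 + |x - y|) := by
      intro x y hxy
      rw [abs_sub_comm, abs_of_nonneg (sub_nonneg.mpr (hmono _ _ hxy)), abs_sub_comm,
        abs_of_nonneg (sub_nonneg.mpr hxy)]
      have h1 := Nat.le_ceil (y - x)
      have h2 := Nat.ceil_lt_add_one (sub_nonneg.mpr hxy)
      have h3 := hKn ⌈y - x⌉₊ x
      have h4 := hmono y (x + ⌈y - x⌉₊) (by linarith)
      nlinarith
    intro x y
    rcases le_total x y with hxy | hxy
    · exact key x y hxy
    · rw [abs_sub_comm, abs_sub_comm x]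
      exact key y x hxy
  have hHc : Continuous H := by
    rw [Metric.continuous_iff]
    intro x ε hε
    obtain ⟨δ, hδ, h⟩ := hu ε hε
    exact ⟨δ, hδ, fun y hy => h y x (by simpa [Real.dist_eq] using hy)⟩
  have hInteg : ∀ x, Integrable (fun y => H (x - y)) μ := by
    intro x
    refine ((integrable_const |H x|).add
      (((integrable_const 1).add hμi.abs).const_mul K)).mono'
      (by fun_prop : Continuous fun y => H (x - y)).aestronglyMeasurable
      (Eventually.of_forall fun y => ?_)
    have h1 := hK (x - y) x
    rw [show x - y - x = -y by ring, abs_neg] at h1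
    have h2 := abs_sub_abs_le_abs_sub (H (x - y)) (H x)
    simp only [Pi.add_apply, Real.norm_eq_abs]
    linarith
  set G : ℝ → ℝ := fun T => ∫ ω, ((min (A ω * R ω + B ω) (Real.exp T)) ^ κ -
    (min (A ω * R ω) (Real.exp T)) ^ κ) ∂Q with hGdef
  have hARi : ∀ T, Integrable (fun ω => (min (A ω * R ω) (Real.exp T)) ^ κ) Q := fun T =>
    hbdd _ hARm hAR0 _ (Real.exp_pos T)
  have hABi : ∀ T, Integrable (fun ω => (min (A ω * R ω + B ω) (Real.exp T)) ^ κ) Q := fun T =>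
    hbdd _ hABm hAB0 _ (Real.exp_pos T)
  have heq : ∀ x, H x = G x + ∫ y, H (x - y) ∂μ := by
    intro T
    have h1 : H T = ∫ ω, (min (A ω * R ω + B ω) (Real.exp T)) ^ κ ∂Q :=
      hd (fun x => (min x (Real.exp T)) ^ κ) ((measurable_id.min measurable_const).pow_const _)
    have h2 : ∫ ω, (min (A ω * R ω) (Real.exp T)) ^ κ ∂Q = ∫ y, H (T - y) ∂μ := by
      rw [hμint (fun y => H (T - y)) (by fun_prop : Continuous fun y => H (T - y)).measurable,
        indep_integral hAm hRm hindep (fun a r => (min (a * r) (Real.exp T)) ^ κ)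
        (((measurable_fst.mul measurable_snd).min measurable_const).pow_const _) (hARi T)]
      congr 1; ext ω
      rcases (hA0 ω).eq_or_lt with h0 | h0
      · rw [← h0]
        simp [Real.zero_rpow hκ.ne', min_eq_left (Real.exp_pos T).le]
      · have h2 : ∀ ω', (min (A ω * R ω') (Real.exp T)) ^ κ =
            A ω ^ κ * (min (R ω') (Real.exp (T - Real.log (A ω)))) ^ κ := fun ω' => by
          rw [min_scale h0 (hR0 ω') (Real.exp_pos T).le, Real.exp_sub, Real.exp_log h0]
        simp only [h2]
        rw [integral_const_mul]
    rw [← h2, h1]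
    simp only [hGdef]
    rw [integral_sub (hABi T) (hARi T)]
    ring
  have hGlim : Tendsto G atTop (nhds D) := by
    apply tendsto_integral_filter_of_dominated_convergence
      (fun ω => (A ω * R ω + B ω) ^ κ - (A ω * R ω) ^ κ)
    · exact Eventually.of_forall fun T => ((hABi T).sub (hARi T)).aestronglyMeasurable
    · refine Eventually.of_forall fun T => Eventually.of_forall fun ω => ?_
      have hle : A ω * R ω ≤ A ω * R ω + B ω := by linarith [hB0 ω]
      have hq : (A ω * R ω) ^ κ ≤ (A ω * R ω + B ω) ^ κ := Real.rpow_le_rpow (hAR0 ω) hle hκ.le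
      rw [min_rpow (hAR0 ω) (Real.exp_pos T).le hκ, min_rpow (hAB0 ω) (Real.exp_pos T).le hκ,
        Real.norm_eq_abs, abs_of_nonneg (sub_nonneg.mpr (min_le_min hq le_rfl))]
      generalize (A ω * R ω) ^ κ = q at *
      generalize (A ω * R ω + B ω) ^ κ = p at *
      generalize (Real.exp T) ^ κ = e
      rcases le_total p e with h | h
      · rw [min_eq_left h, min_eq_left (hq.trans h)]
      · rw [min_eq_right h]
        rcases le_total q e with h' | h'
        · rw [min_eq_left h']; linarith
        · rw [min_eq_right h']; linarith
    · exact hmom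
    · refine Eventually.of_forall fun ω => tendsto_const_nhds.congr' ?_
      filter_upwards [Real.tendsto_exp_atTop.eventually_ge_atTop (A ω * R ω + B ω)] with T hT
      rw [min_eq_left hT, min_eq_left (by linarith [hB0 ω])]
  have hren := renewal_abstract μ hμna hμi (by rw [hmean]; exact hm) H G K D hu hK hInteg heq hGlim
  rw [hmean] at hren
  set m := ∫ ω, A ω ^ κ * Real.log (A ω) ∂Q with hmdef
  -- unsmoothing
  have hlim1 : Tendsto (fun η : ℝ => η * (D / m) / (Real.exp (κ * η) - 1))
      (nhdsWithin 0 (Set.Ioi 0)) (nhds (D / (κ * m))) := by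
    have hder : HasDerivAt (fun η : ℝ => Real.exp (κ * η)) κ 0 := by
      have := (((hasDerivAt_id (0 : ℝ)).const_mul κ).exp)
      simpa using this
    have h1 := hder.tendsto_slope_zero_right
    simp only [zero_add, mul_zero, Real.exp_zero, smul_eq_mul] at h1
    have h2 := (tendsto_const_nhds (x := D / m)).div h1 hκ.ne'
    rw [show D / (κ * m) = D / m / κ by field_simp]
    refine h2.congr' ?_
    filter_upwards [self_mem_nhdsWithin] with η hη
    have hη' : (0 : ℝ) < η := hη
    simp only [Pi.div_apply]
    field_simp
  have hlim2 : Tendsto (fun η : ℝ => η * (D / m) / (1 - Real.exp (-(κ * η))))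
      (nhdsWithin 0 (Set.Ioi 0)) (nhds (D / (κ * m))) := by
    have h0 : Tendsto (fun η : ℝ => Real.exp (κ * η)) (nhdsWithin 0 (Set.Ioi 0)) (nhds 1) := by
      have : Continuous fun η : ℝ => Real.exp (κ * η) := by fun_prop
      have := (this.tendsto 0).mono_left (nhdsWithin_le_nhds (s := Set.Ioi 0))
      simpa using this
    have h1 := hlim1.mul h0
    rw [mul_one] at h1
    refine h1.congr fun η => ?_
    have h2 : 1 - Real.exp (-(κ * η)) = (Real.exp (κ * η) - 1) * (Real.exp (κ * η))⁻¹ := by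
      rw [sub_mul, mul_inv_cancel₀ (Real.exp_pos _).ne', Real.exp_neg, one_mul]
    rw [h2, ← div_div, div_inv_eq_mul]
  set r : ℝ → ℝ := fun x => Real.exp (κ * x) * p x with hr
  have hrlim : Tendsto r atTop (nhds (D / (κ * m))) := by
    rw [tendsto_order]
    constructor
    · intro a ha
      obtain ⟨η, h1, hη⟩ := ((hlim1.eventually_const_lt ha).and self_mem_nhdsWithin).exists
      have hη' : (0 : ℝ) < η := hη
      have he : 0 < Real.exp (κ * η) - 1 := by
        rw [sub_pos]; exact Real.one_lt_exp_iff.mpr (by positivity)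
      rw [lt_div_iff₀ he] at h1
      filter_upwards [(hren η).eventually_const_lt h1] with t ht
      have h2 := hup t (t + η) (by linarith)
      have h3 : (Real.exp (κ * (t + η)) - Real.exp (κ * t)) * p t =
          r t * (Real.exp (κ * η) - 1) := by
        simp only [hr]; rw [mul_add, Real.exp_add]; ring
      rw [h3] at h2
      exact lt_of_mul_lt_mul_right (ht.trans_le h2) he.le
    · intro a ha
      obtain ⟨η, h1, hη⟩ := ((hlim2.eventually_lt_const ha).and self_mem_nhdsWithin).exists
      have hη' : (0 : ℝ) < η := hη
      have he : 0 < 1 - Real.exp (-(κ * η)) := by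
        rw [sub_pos]; rw [← Real.exp_zero]; exact Real.exp_lt_exp.mpr (by have := mul_pos hκ hη'; linarith)
      rw [div_lt_iff₀ he] at h1
      have hev := (tendsto_atTop_add_const_right atTop (-η) tendsto_id).eventually
        ((hren η).eventually_lt_const h1)
      filter_upwards [hev] with t ht
      simp only [id, neg_add_cancel_right] at ht
      have h2 := hlow (t + -η) t (by linarith)
      have h3 : (Real.exp (κ * t) - Real.exp (κ * (t + -η))) * p t =
          r t * (1 - Real.exp (-(κ * η))) := by
        simp only [hr]
        rw [show κ * (t + -η) = κ * t + -(κ * η) by ring, Real.exp_add]; ring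
      rw [h3] at h2
      exact lt_of_mul_lt_mul_right (h2.trans_lt ht) he.le
  refine (hrlim.comp Real.tendsto_log_atTop).congr' ?_
  filter_upwards [eventually_gt_atTop 0] with t ht
  simp only [Function.comp, hr, hp]
  rw [← hexpκ, Real.exp_log ht]


/-- Goldie-type implicit renewal theorem, with `B` and `R` not assumed independent.
If `R̃ = A·R + B` a.s., `R̃` and `R` have the same law, `A` and `R` are independent,
`ℚ(B > 0) > 0`, `E(A^κ) = 1`, `E(A^κ log⁺ A) < ∞`, the conditional law of `log A` given
`A ≠ 0` is non-arithmetic, and `E((AR+B)^κ − (AR)^κ) < ∞`, then `E(A^κ log A) ∈ (0,∞)` and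
`t^κ ℚ(R > t) → E((AR+B)^κ − (AR)^κ) / (κ E(A^κ log A)) ∈ (0,∞)` as `t → ∞`. -/
theorem stmt_2
    {Ω : Type*} [MeasurableSpace Ω] (Q : Measure Ω) [IsProbabilityMeasure Q]
    (A B R R' : Ω → ℝ)
    (hAm : Measurable A) (hBm : Measurable B) (hRm : Measurable R) (hR'm : Measurable R')
    (hA0 : ∀ ω, 0 ≤ A ω) (hB0 : ∀ ω, 0 ≤ B ω) (hR0 : ∀ ω, 0 ≤ R ω) (hR'0 : ∀ ω, 0 ≤ R' ω)
    (heq : ∀ᵐ ω ∂Q, R' ω = A ω * R ω + B ω)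
    (hdist : Q.map R' = Q.map R)
    (hindep : IndepFun A R Q)
    (hBpos : 0 < Q {ω | 0 < B ω})
    (κ : ℝ) (hκ : 0 < κ)
    (hAκ : ∫ ω, A ω ^ κ ∂Q = 1)
    (hAκ' : Integrable (fun ω => A ω ^ κ) Q)
    (hAκlog : Integrable (fun ω => A ω ^ κ * max (Real.log (A ω)) 0) Q)
    (hnonarith : ¬ ∃ h > (0 : ℝ),
      Q {ω | A ω ≠ 0 ∧ ∃ n : ℤ, Real.log (A ω) = n * h} = Q {ω | A ω ≠ 0})
    (hmom : Integrable (fun ω => (A ω * R ω + B ω) ^ κ - (A ω * R ω) ^ κ) Q) :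
    Integrable (fun ω => A ω ^ κ * Real.log (A ω)) Q ∧
    0 < ∫ ω, A ω ^ κ * Real.log (A ω) ∂Q ∧
    Tendsto (fun t : ℝ => t ^ κ * (Q {ω | t < R ω}).toReal) atTop
      (nhds ((∫ ω, ((A ω * R ω + B ω) ^ κ - (A ω * R ω) ^ κ) ∂Q) /
        (κ * ∫ ω, A ω ^ κ * Real.log (A ω) ∂Q))) ∧
    0 < (∫ ω, ((A ω * R ω + B ω) ^ κ - (A ω * R ω) ^ κ) ∂Q) /
        (κ * ∫ ω, A ω ^ κ * Real.log (A ω) ∂Q) := by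
  have hne : ¬ ∀ᵐ ω ∂Q, A ω = 1 := by
    intro h
    apply hnonarith
    refine ⟨1, one_pos, ?_⟩
    apply measure_congr
    filter_upwards [h] with ω hω
    apply propext
    refine ⟨fun h => h.1, fun h2 => ⟨h2, 0, by simp [hω]⟩⟩
  have hABm : Measurable fun ω => A ω * R ω + B ω := (hAm.mul hRm).add hBm
  have hAR0 : ∀ ω, 0 ≤ A ω * R ω := fun ω => mul_nonneg (hA0 ω) (hR0 ω)
  have hd : ∀ φ : ℝ → ℝ, Measurable φ → ∫ ω, φ (R ω) ∂Q = ∫ ω, φ (A ω * R ω + B ω) ∂Q := by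
    intro φ hφ
    rw [← integral_map hRm.aemeasurable hφ.aestronglyMeasurable, ← hdist,
      integral_map hR'm.aemeasurable hφ.aestronglyMeasurable]
    apply integral_congr_ae
    filter_upwards [heq] with ω hω
    rw [hω]
  have hdi : ∀ φ : ℝ → ℝ, Measurable φ → Integrable (fun ω => φ (R ω)) Q →
      Integrable (fun ω => φ (A ω * R ω + B ω)) Q := by
    intro φ hφ hi
    have h1 : Integrable φ (Q.map R) :=
      (integrable_map_measure hφ.aestronglyMeasurable hRm.aemeasurable).mpr hi
    rw [← hdist, integrable_map_measure hφ.aestronglyMeasurable hR'm.aemeasurable] at h1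
    refine h1.congr ?_
    filter_upwards [heq] with ω hω
    simp only [Function.comp]
    rw [hω]
  obtain ⟨hlog, hm⟩ := drift Q A hAm hA0 κ hκ hAκ hAκ' hAκlog hne
  obtain ⟨hi, hρ0, hρ⟩ := half_moment Q A hAm hA0 κ hκ hAκ hAκ' hne
  obtain ⟨C, hC0, hC⟩ := tail_bound Q A B R hAm hBm hRm hA0 hB0 hR0 hd hdi hindep κ hκ hAκ hAκ'
    hmom hi hρ0 hρ
  refine ⟨hlog, hm, main_limit Q A B R hAm hBm hRm hA0 hB0 hR0 hd hindep κ hκ hAκ hAκ'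
    hnonarith hmom hlog hm C hC0 hC, div_pos ?_ (mul_pos hκ hm)⟩
  have h0 : ∀ ω, 0 ≤ (A ω * R ω + B ω) ^ κ - (A ω * R ω) ^ κ := fun ω => sub_nonneg.mpr
    (Real.rpow_le_rpow (hAR0 ω) (by linarith [hB0 ω]) hκ.le)
  rw [integral_pos_iff_support_of_nonneg h0 hmom]
  refine lt_of_lt_of_le hBpos (measure_mono ?_)
  intro ω hω
  have hω' : 0 < B ω := hω
  have := Real.rpow_lt_rpow (hAR0 ω) (show A ω * R ω < A ω * R ω + B ω by linarith) hκ
  simp only [Function.mem_support]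
  exact (sub_pos.mpr this).ne'
end

section
/- Assume in addition that the pair (W₀Z₀, W₁Z₁) is exchangeable, i.e. (W₀Z₀, W₁Z₁) and (W₁Z₁, W₀Z₀) have the same joint distribution. Then the left derivative of φ at 1 is strictly negative: lim_{q→1⁻} (−φ(q))/(1−q) < 0. -/
open MeasureTheory ProbabilityTheory Filter

/-- `I_ν = {q : ∫_{|x|≥1} e^{qx} ν(dx) < ∞}`. -/
noncomputable def Inu (ν : Measure ℝ) : Set ℝ :=
  {q : ℝ | ∫⁻ x in {x : ℝ | 1 ≤ |x|}, ENNReal.ofReal (Real.exp (q * x)) ∂ν < ⊤}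

/-- The normalizing drift `a = −σ²/2 − ∫ (e^x − 1 − x 1_{|x|≤1}) ν(dx)`. -/
noncomputable def levyA (σ : ℝ) (ν : Measure ℝ) : ℝ :=
  -σ ^ 2 / 2 - ∫ x, (Real.exp x - 1 - if |x| ≤ 1 then x else 0) ∂ν

/-- `ψ̃(q) = a q + σ² q²/2 + ∫ (e^{qx} − 1 − q x 1_{|x|≤1}) ν(dx)`. -/
noncomputable def psiT (σ : ℝ) (ν : Measure ℝ) (q : ℝ) : ℝ :=
  levyA σ ν * q + σ ^ 2 * q ^ 2 / 2 +
    ∫ x, (Real.exp (q * x) - 1 - q * (if |x| ≤ 1 then x else 0)) ∂ν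

/-- `φ(q) = ψ̃(q) − (q − 1)`. -/
noncomputable def phiF (σ : ℝ) (ν : Measure ℝ) (q : ℝ) : ℝ := psiT σ ν q - (q - 1)

lemma aux_rpow_add_of_le {x y h : ℝ} (hy : 0 ≤ y) (hxy : y ≤ x) (h0 : 0 < h) (h1 : h ≤ 1) :
    (x + y) ^ h ≤ x ^ h + h * y ^ h := by
  rcases hy.eq_or_lt with rfl | hy
  · simp [Real.zero_rpow h0.ne']
  have hx : 0 < x := hy.trans_le hxy
  have e1 : x + y = x * (1 + y / x) := by field_simp
  have hyx : 0 ≤ y / x := by positivity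
  have e2 : (1 + y / x) ^ h ≤ 1 + h * (y / x) :=
    rpow_one_add_le_one_add_mul_self (by linarith) h0.le h1
  have e3 : x ^ (h - 1) ≤ y ^ (h - 1) :=
    Real.rpow_le_rpow_of_nonpos hy hxy (by linarith)
  have ex : x ^ (h - 1) = x ^ h / x := by rw [Real.rpow_sub_one hx.ne']
  have ey : y * y ^ (h - 1) = y ^ h := by rw [Real.rpow_sub_one hy.ne']; field_simp
  calc (x + y) ^ h = x ^ h * (1 + y / x) ^ h := by
        rw [e1, Real.mul_rpow hx.le (by linarith)]
    _ ≤ x ^ h * (1 + h * (y / x)) := by gcongr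
    _ = x ^ h + h * (y * x ^ (h - 1)) := by rw [ex]; field_simp
    _ ≤ x ^ h + h * (y * y ^ (h - 1)) := by gcongr
    _ = _ := by rw [ey]

lemma aux_rpow_add {x y h : ℝ} (hx : 0 ≤ x) (hy : 0 ≤ y) (h0 : 0 < h) (h1 : h ≤ 1) :
    (x + y) ^ h + (1 - h) * (min x y) ^ h ≤ x ^ h + y ^ h := by
  rcases le_total x y with hxy | hxy
  · have := aux_rpow_add_of_le hx hxy h0 h1
    rw [min_eq_left hxy, add_comm x y]; linarith
  · have := aux_rpow_add_of_le hy hxy h0 h1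
    rw [min_eq_right hxy]; linarith

noncomputable def auxG (x : ℝ) : ℝ :=
  min 1 (x ^ 2) + Set.indicator {x : ℝ | 1 ≤ |x|} (fun x => Real.exp x) x

lemma aux_bound {q : ℝ} (hq : q ∈ Set.Icc (0 : ℝ) 1) (x : ℝ) :
    ‖Real.exp (q * x) - 1 - q * (if |x| ≤ 1 then x else 0)‖ ≤ auxG x := by
  obtain ⟨h0, h1⟩ := hq
  unfold auxG
  rw [Real.norm_eq_abs]
  by_cases hx : |x| ≤ 1
  · rw [if_pos hx]
    have hqx : |q * x| ≤ 1 := by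
      rw [abs_mul, abs_of_nonneg h0]; exact mul_le_one₀ h1 (abs_nonneg _) hx
    have := Real.abs_exp_sub_one_sub_id_le hqx
    have hx2 : x ^ 2 ≤ 1 := by rw [← sq_abs]; exact pow_le_one₀ (abs_nonneg _) hx
    rw [min_eq_right hx2]
    have h3 : (q * x) ^ 2 ≤ x ^ 2 := by
      rw [mul_pow]; exact mul_le_of_le_one_left (sq_nonneg _) (pow_le_one₀ h0 h1)
    have h4 : 0 ≤ Set.indicator {x : ℝ | 1 ≤ |x|} (fun x => Real.exp x) x :=
      Set.indicator_nonneg (fun _ _ => (Real.exp_pos _).le) _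
    linarith
  · push Not at hx
    rw [if_neg (not_le.2 hx), Set.indicator_of_mem (by simpa using hx.le)]
    have hx2 : 1 ≤ x ^ 2 := by rw [← sq_abs]; exact one_le_pow₀ hx.le
    rw [min_eq_left hx2]
    have h5 : Real.exp (q * x) ≤ 1 + Real.exp x := by
      rcases le_total x 0 with hx0 | hx0
      · have : Real.exp (q * x) ≤ 1 := Real.exp_le_one_iff.2 (mul_nonpos_of_nonneg_of_nonpos h0 hx0)
        linarith [Real.exp_pos x]
      · have : Real.exp (q * x) ≤ Real.exp x := Real.exp_le_exp.2 (mul_le_of_le_one_left hx0 h1)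
        linarith
    rw [abs_le]
    constructor <;> linarith [Real.exp_pos (q * x), Real.exp_pos x]

lemma aux_meas (q : ℝ) :
    Measurable (fun x : ℝ => Real.exp (q * x) - 1 - q * (if |x| ≤ 1 then x else 0)) := by
  have : Measurable (fun x : ℝ => if |x| ≤ 1 then x else 0) :=
    Measurable.ite (measurableSet_le measurable_id.abs measurable_const) measurable_id
      measurable_const
  fun_prop

lemma auxG_int {ν : Measure ℝ} (hν2 : ∫⁻ x, ENNReal.ofReal (min 1 (x ^ 2)) ∂ν < ⊤)
    (hIν : Set.Icc (0 : ℝ) 1 ⊆ Inu ν) : Integrable auxG ν := by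
  unfold auxG
  apply Integrable.add
  · refine ⟨by fun_prop, ?_⟩
    rw [hasFiniteIntegral_iff_ofReal]
    · exact hν2
    · exact Eventually.of_forall fun x => by positivity
  · have hm : MeasurableSet {x : ℝ | 1 ≤ |x|} :=
      measurableSet_le measurable_const measurable_id.abs
    rw [integrable_indicator_iff hm]
    refine ⟨by fun_prop, ?_⟩
    rw [hasFiniteIntegral_iff_ofReal]
    · have := hIν (show (1 : ℝ) ∈ Set.Icc (0 : ℝ) 1 by simp)
      simpa [Inu] using this
    · exact Eventually.of_forall fun x => (Real.exp_pos x).le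

lemma aux_int {ν : Measure ℝ} (hν2 : ∫⁻ x, ENNReal.ofReal (min 1 (x ^ 2)) ∂ν < ⊤)
    (hIν : Set.Icc (0 : ℝ) 1 ⊆ Inu ν) {q : ℝ} (hq : q ∈ Set.Icc (0 : ℝ) 1) :
    Integrable (fun x : ℝ => Real.exp (q * x) - 1 - q * (if |x| ≤ 1 then x else 0)) ν :=
  (auxG_int hν2 hIν).mono' (aux_meas q).aestronglyMeasurable
    (Eventually.of_forall (aux_bound hq))

lemma aux_psi_one (σ : ℝ) (ν : Measure ℝ) : psiT σ ν 1 = 0 := by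
  simp only [psiT, levyA, one_mul]; ring

lemma aux_psi_cont {σ : ℝ} {ν : Measure ℝ}
    (hν2 : ∫⁻ x, ENNReal.ofReal (min 1 (x ^ 2)) ∂ν < ⊤)
    (hIν : Set.Icc (0 : ℝ) 1 ⊆ Inu ν) :
    Tendsto (psiT σ ν) (nhdsWithin 0 (Set.Ioo 0 1)) (nhds 0) := by
  have h1 : Tendsto (fun q => ∫ x, (Real.exp (q * x) - 1 - q * (if |x| ≤ 1 then x else 0)) ∂ν)
      (nhdsWithin 0 (Set.Ioo 0 1)) (nhds (∫ x, (0 : ℝ) ∂ν)) := by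
    apply tendsto_integral_filter_of_dominated_convergence auxG
    · exact Eventually.of_forall fun q => (aux_meas q).aestronglyMeasurable
    · filter_upwards [self_mem_nhdsWithin] with q hq
      exact Eventually.of_forall (aux_bound ⟨hq.1.le, hq.2.le⟩)
    · exact auxG_int hν2 hIν
    · refine Eventually.of_forall fun x => ?_
      have hc : Continuous
          (fun q : ℝ => Real.exp (q * x) - 1 - q * (if |x| ≤ 1 then x else 0)) := by fun_prop
      have := (hc.tendsto 0).mono_left (nhdsWithin_le_nhds (s := Set.Ioo (0 : ℝ) 1))
      simpa using this
  have h2 : Tendsto (fun q : ℝ => levyA σ ν * q + σ ^ 2 * q ^ 2 / 2)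
      (nhdsWithin 0 (Set.Ioo 0 1)) (nhds 0) := by
    have hc : Continuous (fun q : ℝ => levyA σ ν * q + σ ^ 2 * q ^ 2 / 2) := by fun_prop
    have := (hc.tendsto 0).mono_left (nhdsWithin_le_nhds (s := Set.Ioo (0 : ℝ) 1))
    simpa using this
  have := h2.add h1
  rw [integral_zero, add_zero] at this
  exact this

lemma aux_psi_convex {σ : ℝ} {ν : Measure ℝ}
    (hν2 : ∫⁻ x, ENNReal.ofReal (min 1 (x ^ 2)) ∂ν < ⊤)
    (hIν : Set.Icc (0 : ℝ) 1 ⊆ Inu ν) {q t : ℝ} (hq : q ∈ Set.Icc (0 : ℝ) 1)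
    (ht : t ∈ Set.Icc (0 : ℝ) 1) :
    psiT σ ν (t * q + (1 - t)) ≤ t * psiT σ ν q := by
  obtain ⟨h0, h1⟩ := hq
  obtain ⟨t0, t1⟩ := ht
  have hr : t * q + (1 - t) ∈ Set.Icc (0 : ℝ) 1 := ⟨by nlinarith, by nlinarith⟩
  have hI : ∫ x, (Real.exp ((t * q + (1 - t)) * x) - 1
        - (t * q + (1 - t)) * (if |x| ≤ 1 then x else 0)) ∂ν
      ≤ t * ∫ x, (Real.exp (q * x) - 1 - q * (if |x| ≤ 1 then x else 0)) ∂ν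
      + (1 - t) * ∫ x, (Real.exp (1 * x) - 1 - 1 * (if |x| ≤ 1 then x else 0)) ∂ν := by
    rw [← integral_const_mul, ← integral_const_mul, ← integral_add]
    · apply integral_mono (aux_int hν2 hIν hr)
      · exact ((aux_int hν2 hIν ⟨h0, h1⟩).const_mul t).add
          ((aux_int hν2 hIν ⟨zero_le_one, le_rfl⟩).const_mul (1 - t))
      · intro x
        have := convexOn_exp.2 (Set.mem_univ (q * x)) (Set.mem_univ (1 * x)) t0
          (sub_nonneg.2 t1) (by ring)
        simp only [smul_eq_mul] at this
        have e : t * (q * x) + (1 - t) * (1 * x) = (t * q + (1 - t)) * x := by ring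
        rw [e] at this
        simp only
        linarith
    · exact (aux_int hν2 hIν ⟨h0, h1⟩).const_mul t
    · exact (aux_int hν2 hIν ⟨zero_le_one, le_rfl⟩).const_mul (1 - t)
  have h1' := aux_psi_one σ ν
  have hs : σ ^ 2 * (t * q + (1 - t)) ^ 2 ≤ t * (σ ^ 2 * q ^ 2) + (1 - t) * σ ^ 2 := by
    have : 0 ≤ σ ^ 2 * (t * (1 - t) * (1 - q) ^ 2) := by
      have := sub_nonneg.2 t1
      positivity
    nlinarith
  have h2' : (1 - t) * psiT σ ν 1 = 0 := by rw [h1', mul_zero]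
  unfold psiT at *
  linarith

lemma aux_limit {φ : ℝ → ℝ} {c : ℝ} (hc : 0 < c)
    (hconv : ∀ q ∈ Set.Icc (0 : ℝ) 1, ∀ t ∈ Set.Icc (0 : ℝ) 1,
      φ (t * q + (1 - t)) ≤ t * φ q)
    (hb : ∀ q ∈ Set.Ioo (0 : ℝ) 1, c * (1 - q) ≤ φ q) :
    ∃ L : ℝ, L < 0 ∧
      Tendsto (fun q => -φ q / (1 - q)) (nhdsWithin 1 (Set.Iio 1)) (nhds L) := by
  have hle : ∀ q ∈ Set.Ioo (0 : ℝ) 1, -φ q / (1 - q) ≤ -c := by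
    intro q hq
    rw [div_le_iff₀ (sub_pos.2 hq.2)]
    linarith [hb q hq]
  have hmono : MonotoneOn (fun q => -φ q / (1 - q)) (Set.Ioo 0 1) := by
    intro q hq r hr hqr
    have hq1 := sub_pos.2 hq.2
    have hr1 := sub_pos.2 hr.2
    have := hconv q ⟨hq.1.le, hq.2.le⟩ ((1 - r) / (1 - q))
      ⟨by positivity, by rw [div_le_one hq1]; linarith⟩
    have e : (1 - r) / (1 - q) * q + (1 - (1 - r) / (1 - q)) = r := by field_simp; ring
    rw [e] at this
    have h2 : φ r / (1 - r) ≤ φ q / (1 - q) := by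
      rw [div_le_iff₀ hr1]
      calc φ r ≤ _ := this
        _ = _ := by ring
    simp only [neg_div]
    linarith
  refine ⟨_, ?_, hmono.tendsto_nhdsWithin_Ioo_left ⟨1/2, by norm_num, by norm_num⟩ ⟨-c, ?_⟩⟩
  · refine lt_of_le_of_lt (csSup_le ?_ ?_) (neg_lt_zero.2 hc)
    · exact ⟨_, 1/2, ⟨by norm_num, by norm_num⟩, rfl⟩
    · rintro _ ⟨q, hq, rfl⟩; exact hle q hq
  · rintro _ ⟨q, hq, rfl⟩; exact hle q hq

lemma aux_log {c M B s h : ℝ} (hM : 0 < M) (hMB : M ≤ B) (hc : 0 < c) (h0 : 0 < h) (h1 : h < 1)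
    (H : (2 : ℝ) ^ h * M + (1 - h) * c ≤ 2 * ((2 : ℝ) ^ s * M)) :
    (c / (2 * B)) / (1 + c / (2 * B)) * (1 - h) ≤ s - (h - 1) := by
  have hB : 0 < B := hM.trans_le hMB
  have h1' := sub_pos.2 h1
  set k := c / (2 * B) with hk
  have hk0 : 0 < k := by positivity
  have h2 : (0 : ℝ) < 2 ^ h := by positivity
  have h22 : (2 : ℝ) ^ h ≤ 2 := by
    calc (2 : ℝ) ^ h ≤ 2 ^ (1 : ℝ) := Real.rpow_le_rpow_of_exponent_le (by norm_num) h1.le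
      _ = 2 := by simp
  have e : (2 : ℝ) ^ (s - (h - 1)) = 2 * 2 ^ s / 2 ^ h := by
    rw [show s - (h - 1) = s + 1 - h by ring, Real.rpow_sub (by norm_num),
      Real.rpow_add (by norm_num), Real.rpow_one]; ring
  have hle : 1 + (1 - h) * k ≤ (2 : ℝ) ^ (s - (h - 1)) := by
    rw [e, le_div_iff₀ h2]
    have hkM : k * (2 ^ h * M) ≤ c := by
      calc k * (2 ^ h * M) ≤ k * (2 * B) := by gcongr
        _ = c := by rw [hk]; field_simp
    have : ((1 + (1 - h) * k) * 2 ^ h) * M ≤ (2 * 2 ^ s) * M := by nlinarith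
    exact le_of_mul_le_mul_right this hM
  have hp : 0 < 1 + (1 - h) * k := by positivity
  have hl := Real.log_le_log hp hle
  rw [Real.log_rpow (by norm_num)] at hl
  have hl2 := Real.one_sub_inv_le_log_of_pos hp
  have h3 : k / (1 + k) * (1 - h) ≤ 1 - (1 + (1 - h) * k)⁻¹ := by
    have : 1 - (1 + (1 - h) * k)⁻¹ = (1 - h) * k / (1 + (1 - h) * k) := by field_simp; ring
    rw [this, div_mul_eq_mul_div, mul_comm k]
    apply div_le_div_of_nonneg_left (by positivity) hp
    nlinarith
  have hlog : Real.log 2 ≤ 1 := by linarith [Real.log_two_lt_d9]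
  have hlog0 : 0 < Real.log 2 := Real.log_pos (by norm_num)
  have hpos : 0 < k / (1 + k) * (1 - h) := by positivity
  have hs : 0 < s - (h - 1) := by
    by_contra hcon
    push Not at hcon
    nlinarith
  nlinarith

/-- If `2Z = W₀Z₀ + W₁Z₁` a.s., with `Z, Z₀, Z₁` identically distributed with positive finite
mean, `W_i` with moments `E(W_i^q) = 2^{ψ̃(q)}` and independent of `Z_i`, and
`(W₀Z₀, W₁Z₁)` exchangeable, then the left derivative of `φ` at 1,
`lim_{q→1⁻} (−φ(q))/(1−q)`, exists and is strictly negative. -/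
theorem stmt_3
    {Ω : Type*} [MeasurableSpace Ω] (P : Measure Ω) [IsProbabilityMeasure P]
    (σ : ℝ) (ν : Measure ℝ)
    (hν0 : ν {0} = 0)
    (hν2 : ∫⁻ x, ENNReal.ofReal (min 1 (x ^ 2)) ∂ν < ⊤)
    (hnz : σ ≠ 0 ∨ ν ≠ 0)
    (hIν : Set.Icc (0 : ℝ) 1 ⊆ Inu ν)
    (W Z' : Fin 2 → Ω → ℝ) (Z : Ω → ℝ)
    (hWm : ∀ i, Measurable (W i)) (hZ'm : ∀ i, Measurable (Z' i)) (hZm : Measurable Z)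
    (hW0 : ∀ i ω, 0 ≤ W i ω) (hZ'0 : ∀ i ω, 0 ≤ Z' i ω) (hZ0 : ∀ ω, 0 ≤ Z ω)
    (hZd : ∀ i, P.map (Z' i) = P.map Z)
    (hZint : Integrable Z P) (hZpos : 0 < ∫ ω, Z ω ∂P)
    (hWmom : ∀ i, ∀ q : ℝ, 0 ≤ q →
      (q ∈ Inu ν →
        ∫⁻ ω, ENNReal.ofReal (W i ω ^ q) ∂P = ENNReal.ofReal ((2 : ℝ) ^ psiT σ ν q)) ∧
      (q ∉ Inu ν → ∫⁻ ω, ENNReal.ofReal (W i ω ^ q) ∂P = ⊤))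
    (hInd : ∀ i, IndepFun (W i) (Z' i) P)
    (hEq : ∀ᵐ ω ∂P, 2 * Z ω = W 0 ω * Z' 0 ω + W 1 ω * Z' 1 ω)
    (hex : P.map (fun ω => (W 0 ω * Z' 0 ω, W 1 ω * Z' 1 ω)) =
           P.map (fun ω => (W 1 ω * Z' 1 ω, W 0 ω * Z' 0 ω))) :
    ∃ L : ℝ, L < 0 ∧
      Tendsto (fun q => -phiF σ ν q / (1 - q)) (nhdsWithin 1 (Set.Iio 1)) (nhds L) := by
  set X : Ω → ℝ := fun ω => W 0 ω * Z' 0 ω with hX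
  set Y : Ω → ℝ := fun ω => W 1 ω * Z' 1 ω with hY
  have hXm : Measurable X := (hWm 0).mul (hZ'm 0)
  have hYm : Measurable Y := (hWm 1).mul (hZ'm 1)
  have hX0 : ∀ ω, 0 ≤ X ω := fun ω => mul_nonneg (hW0 0 ω) (hZ'0 0 ω)
  have hY0 : ∀ ω, 0 ≤ Y ω := fun ω => mul_nonneg (hW0 1 ω) (hZ'0 1 ω)
  set N : ℝ → ENNReal := fun h => ∫⁻ ω, ENNReal.ofReal (Z ω ^ h) ∂P with hN
  have hNle : ∀ h ∈ Set.Ioo (0 : ℝ) 1, N h ≤ ENNReal.ofReal (1 + ∫ ω, Z ω ∂P) := by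
    intro h hh
    have hi : Integrable (fun ω => 1 + Z ω) P := (integrable_const 1).add hZint
    have e : (1 + ∫ ω, Z ω ∂P) = ∫ ω, (1 + Z ω) ∂P := by
      rw [integral_add (integrable_const 1) hZint]; simp
    rw [e, ofReal_integral_eq_lintegral_ofReal hi
      (Eventually.of_forall fun ω => by have := hZ0 ω; simp only [Pi.zero_apply]; linarith)]
    refine lintegral_mono fun ω => ENNReal.ofReal_le_ofReal ?_
    rcases le_total (Z ω) 1 with h1 | h1
    · linarith [Real.rpow_le_one (hZ0 ω) h1 hh.1.le, hZ0 ω]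
    · have := Real.rpow_le_rpow_of_exponent_le h1 hh.2.le
      rw [Real.rpow_one] at this
      linarith
  have hNtop : ∀ h ∈ Set.Ioo (0 : ℝ) 1, N h ≠ ⊤ := fun h hh =>
    ne_top_of_le_ne_top ENNReal.ofReal_ne_top (hNle h hh)
  have hNpos : ∀ h ∈ Set.Ioo (0 : ℝ) 1, N h ≠ 0 := by
    intro h hh h0
    rw [hN] at h0
    simp only at h0
    rw [lintegral_eq_zero_iff (by fun_prop)] at h0
    have : Z =ᵐ[P] 0 := by
      filter_upwards [h0] with ω hω
      simp only [Pi.zero_apply, ENNReal.ofReal_eq_zero] at hω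
      by_contra hne
      have hp : 0 < Z ω := lt_of_le_of_ne (hZ0 ω) (Ne.symm hne)
      linarith [Real.rpow_pos_of_pos hp h]
    rw [integral_congr_ae this] at hZpos
    simp at hZpos
  have hprod : ∀ i, ∀ h ∈ Set.Ioo (0 : ℝ) 1,
      ∫⁻ ω, ENNReal.ofReal ((W i ω * Z' i ω) ^ h) ∂P
        = ENNReal.ofReal ((2 : ℝ) ^ psiT σ ν h) * N h := by
    intro i h hh
    have hf : Measurable (fun x : ℝ => ENNReal.ofReal (x ^ h)) := by fun_prop
    have e1 : ∫⁻ ω, ENNReal.ofReal (Z' i ω ^ h) ∂P = N h := by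
      rw [hN]
      simp only
      rw [← lintegral_map hf (hZ'm i), hZd i, lintegral_map hf hZm]
    rw [← e1, ← (hWmom i h hh.1.le).1 (hIν ⟨hh.1.le, hh.2.le⟩)]
    have := lintegral_mul_eq_lintegral_mul_lintegral_of_indepFun (hf.comp (hWm i))
      (hf.comp (hZ'm i)) ((hInd i).comp hf hf)
    refine Eq.trans ?_ this
    refine lintegral_congr fun ω => ?_
    simp only [Pi.mul_apply, Function.comp_apply]
    rw [Real.mul_rpow (hW0 i ω) (hZ'0 i ω), ENNReal.ofReal_mul (Real.rpow_nonneg (hW0 i ω) h)]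
  have hsum : ∀ h ∈ Set.Ioo (0 : ℝ) 1,
      ∫⁻ ω, ENNReal.ofReal ((X ω + Y ω) ^ h) ∂P = ENNReal.ofReal ((2 : ℝ) ^ h) * N h := by
    intro h hh
    rw [hN]
    simp only
    rw [← lintegral_const_mul _ (by fun_prop)]
    refine lintegral_congr_ae ?_
    filter_upwards [hEq] with ω hω
    rw [← ENNReal.ofReal_mul (by positivity), ← Real.mul_rpow (by norm_num) (hZ0 ω), hω]
  set m : Ω → ℝ := fun ω => min (X ω) (Y ω) with hm
  have hmm : Measurable m := hXm.min hYm
  by_cases hz : ∀ᵐ ω ∂P, m ω = 0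
  · exfalso
    have hpsi : ∀ h ∈ Set.Ioo (0 : ℝ) 1, psiT σ ν h = h - 1 := by
      intro h hh
      have e : ∫⁻ ω, ENNReal.ofReal ((X ω + Y ω) ^ h) ∂P
          = ∫⁻ ω, ENNReal.ofReal (X ω ^ h) ∂P + ∫⁻ ω, ENNReal.ofReal (Y ω ^ h) ∂P := by
        rw [← lintegral_add_left (by fun_prop)]
        refine lintegral_congr_ae ?_
        filter_upwards [hz] with ω hω
        have hz0 := Real.zero_rpow hh.1.ne'
        rcases min_choice (X ω) (Y ω) with hc | hc
        · have : X ω = 0 := hc.symm.trans hω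
          simp [this, hz0]
        · have : Y ω = 0 := hc.symm.trans hω
          simp [this, hz0]
      rw [hsum h hh, hX, hY, hprod 0 h hh, hprod 1 h hh, ← add_mul,
        ENNReal.mul_left_inj (hNpos h hh) (hNtop h hh),
        ← ENNReal.ofReal_add (by positivity) (by positivity),
        ENNReal.ofReal_eq_ofReal_iff (by positivity) (by positivity)] at e
      have e2 : (2 : ℝ) ^ h = 2 ^ (psiT σ ν h + 1) := by
        rw [e, Real.rpow_add (by norm_num), Real.rpow_one]; ring
      have := (Real.rpow_right_inj (by norm_num) (by norm_num)).1 e2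
      linarith
    have hne : (nhdsWithin (0 : ℝ) (Set.Ioo 0 1)).NeBot := by
      rw [← mem_closure_iff_nhdsWithin_neBot, closure_Ioo (by norm_num)]; simp
    have h1 := aux_psi_cont (σ := σ) hν2 hIν
    have h2 : Tendsto (psiT σ ν) (nhdsWithin 0 (Set.Ioo 0 1)) (nhds (0 - 1)) := by
      have : Tendsto (fun h : ℝ => h - 1) (nhdsWithin 0 (Set.Ioo 0 1)) (nhds (0 - 1)) :=
        ((continuous_id.sub continuous_const).tendsto (0 : ℝ)).mono_left nhdsWithin_le_nhds
      refine this.congr' ?_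
      filter_upwards [self_mem_nhdsWithin] with h hh
      exact (hpsi h hh).symm
    have := tendsto_nhds_unique h1 h2
    norm_num at this
  · obtain ⟨n, hn⟩ : ∃ n : ℕ, P {ω | 1 / ((n : ℝ) + 1) ≤ m ω} ≠ 0 := by
      by_contra hcon
      push Not at hcon
      apply hz
      have : ∀ᵐ ω ∂P, ∀ n : ℕ, ¬ (1 / ((n : ℝ) + 1) ≤ m ω) := by
        rw [ae_all_iff]
        intro n
        rw [ae_iff]
        simpa using hcon n
      filter_upwards [this] with ω hω
      by_contra hne
      have hp : 0 < m ω := lt_of_le_of_ne (le_min (hX0 ω) (hY0 ω)) (Ne.symm hne)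
      obtain ⟨n, hn⟩ := exists_nat_one_div_lt hp
      exact hω n hn.le
    set ε : ℝ := 1 / ((n : ℝ) + 1) with hε
    have hε0 : 0 < ε := by positivity
    have hε1 : ε ≤ 1 := by
      rw [hε, div_le_one (by positivity)]; linarith [Nat.cast_nonneg (α := ℝ) n]
    set p : ℝ := (P {ω | ε ≤ m ω}).toReal with hp
    have hp0 : 0 < p := ENNReal.toReal_pos hn (measure_ne_top _ _)
    have hkey : ∀ h ∈ Set.Ioo (0 : ℝ) 1, (2 : ℝ) ^ h * (N h).toReal + (1 - h) * (ε * p)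
        ≤ 2 * ((2 : ℝ) ^ psiT σ ν h * (N h).toReal) := by
      intro h hh
      have h1h := sub_pos.2 hh.2
      have hset : MeasurableSet {ω | ε ≤ m ω} := measurableSet_le measurable_const hmm
      have hlow : ENNReal.ofReal ((1 - h) * (ε * p))
          ≤ ∫⁻ ω, ENNReal.ofReal ((1 - h) * m ω ^ h) ∂P := by
        calc ENNReal.ofReal ((1 - h) * (ε * p))
            = ENNReal.ofReal ((1 - h) * ε) * P {ω | ε ≤ m ω} := by
              rw [← mul_assoc, ENNReal.ofReal_mul (by positivity), hp,
                ENNReal.ofReal_toReal (measure_ne_top _ _)]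
          _ = ∫⁻ ω in {ω | ε ≤ m ω}, ENNReal.ofReal ((1 - h) * ε) ∂P := by simp
          _ ≤ ∫⁻ ω in {ω | ε ≤ m ω}, ENNReal.ofReal ((1 - h) * m ω ^ h) ∂P := by
              refine setLIntegral_mono' hset fun ω hω => ENNReal.ofReal_le_ofReal ?_
              have h1 : ε ≤ ε ^ h := by
                simpa using Real.rpow_le_rpow_of_exponent_ge hε0 hε1 hh.2.le
              have h2 : ε ^ h ≤ m ω ^ h := Real.rpow_le_rpow hε0.le hω hh.1.le
              exact mul_le_mul_of_nonneg_left (h1.trans h2) h1h.le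
          _ ≤ _ := setLIntegral_le_lintegral _ _
      have hup : ∫⁻ ω, ENNReal.ofReal ((X ω + Y ω) ^ h) ∂P
            + ∫⁻ ω, ENNReal.ofReal ((1 - h) * m ω ^ h) ∂P
          ≤ ∫⁻ ω, ENNReal.ofReal (X ω ^ h) ∂P + ∫⁻ ω, ENNReal.ofReal (Y ω ^ h) ∂P := by
        rw [← lintegral_add_left (by fun_prop), ← lintegral_add_left (by fun_prop)]
        refine lintegral_mono fun ω => ?_
        have hx := hX0 ω
        have hy := hY0 ω
        have hmn : 0 ≤ m ω := le_min hx hy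
        rw [← ENNReal.ofReal_add (by positivity) (by positivity),
          ← ENNReal.ofReal_add (by positivity) (by positivity)]
        exact ENNReal.ofReal_le_ofReal (aux_rpow_add hx hy hh.1 hh.2.le)
      have hfin := (add_le_add le_rfl hlow).trans hup
      rw [hsum h hh, hX, hY, hprod 0 h hh, hprod 1 h hh] at hfin
      rw [← ENNReal.ofReal_toReal (hNtop h hh)] at hfin
      have hNn : 0 ≤ (N h).toReal := ENNReal.toReal_nonneg
      rw [← ENNReal.ofReal_mul (by positivity), ← ENNReal.ofReal_mul (by positivity),
        ← ENNReal.ofReal_add (by positivity) (by positivity),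
        ← ENNReal.ofReal_add (by positivity) (by positivity),
        ENNReal.ofReal_le_ofReal_iff (by positivity)] at hfin
      linarith
    have hB : 0 < 1 + ∫ ω, Z ω ∂P := by linarith
    have hc : 0 < ε * p := by positivity
    refine aux_limit (c := (ε * p / (2 * (1 + ∫ ω, Z ω ∂P)))
      / (1 + ε * p / (2 * (1 + ∫ ω, Z ω ∂P)))) (by positivity) ?_ ?_
    · intro q hq t ht
      have := aux_psi_convex (σ := σ) hν2 hIν hq ht
      unfold phiF
      linarith
    · intro q hq
      exact aux_log (ENNReal.toReal_pos (hNpos q hq) (hNtop q hq))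
        (ENNReal.toReal_le_of_le_ofReal hB.le (hNle q hq)) hc hq.1 hq.2 (hkey q hq)
end

section
/- Assume in addition that the pair (W₀Z₀, W₁Z₁) is exchangeable, i.e. (W₀Z₀, W₁Z₁) and (W₁Z₁, W₀Z₀) have the same joint distribution, and set X₀ = W₀Z₀ and X₁ = W₁Z₁. Then there exists ε > 0 such that for every q ∈ [0,1], E(X₀^q · 1_{X₀ ≤ X₁}) ≥ ε · E(X₀^q) (with the convention 0^0 = 1). -/
open MeasureTheory ProbabilityTheory Filter

lemma psiT_tendsto (σ : ℝ) (ν : Measure ℝ)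
    (hν2 : ∫⁻ x, ENNReal.ofReal (min 1 (x ^ 2)) ∂ν < ⊤)
    (hIν : Set.Icc (0 : ℝ) 1 ⊆ Inu ν) :
    Tendsto (psiT σ ν) (nhdsWithin 0 (Set.Ioc 0 1)) (nhds 0) := by
  have hI : Tendsto (fun q : ℝ => ∫ x, (Real.exp (q * x) - 1 - q * (if |x| ≤ 1 then x else 0)) ∂ν)
      (nhdsWithin 0 (Set.Ioc 0 1)) (nhds (∫ _x, (0 : ℝ) ∂ν)) := by
    have hms : MeasurableSet {x : ℝ | 1 ≤ |x|} := measurableSet_le measurable_const (by fun_prop)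
    have h0 := hIν (show (0 : ℝ) ∈ Set.Icc (0 : ℝ) 1 by simp)
    have h1 := hIν (show (1 : ℝ) ∈ Set.Icc (0 : ℝ) 1 by simp)
    simp only [Inu, Set.mem_setOf_eq] at h0 h1
    have i1 : Integrable (fun x : ℝ => min 1 (x ^ 2)) ν := by
      refine ⟨by fun_prop, ?_⟩
      rw [hasFiniteIntegral_iff_ofReal (ae_of_all _ fun x => by positivity)]
      exact hν2
    have i2 : Integrable (Set.indicator {x : ℝ | 1 ≤ |x|} (fun x => Real.exp (1 * x))) ν := by
      rw [integrable_indicator_iff hms]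
      refine ⟨by fun_prop, ?_⟩
      rw [hasFiniteIntegral_iff_ofReal (ae_of_all _ fun x => by positivity)]
      exact h1
    have i3 : Integrable (Set.indicator {x : ℝ | 1 ≤ |x|} (fun x => Real.exp (0 * x))) ν := by
      rw [integrable_indicator_iff hms]
      refine ⟨by fun_prop, ?_⟩
      rw [hasFiniteIntegral_iff_ofReal (ae_of_all _ fun x => by positivity)]
      exact h0
    refine tendsto_integral_filter_of_dominated_convergence _ ?_ ?_ ((i1.add i2).add i3) ?_
    · refine Eventually.of_forall fun q => Measurable.aestronglyMeasurable ?_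
      have : Measurable (fun x : ℝ => if |x| ≤ 1 then x else 0) :=
        Measurable.ite (measurableSet_le (by fun_prop) measurable_const) measurable_id
          measurable_const
      fun_prop
    · filter_upwards [self_mem_nhdsWithin] with q hq
      refine ae_of_all _ fun x => ?_
      have hi2 : 0 ≤ Set.indicator {x : ℝ | 1 ≤ |x|} (fun x => Real.exp (1 * x)) x :=
        Set.indicator_nonneg (fun _ _ => by positivity) _
      have hi3 : 0 ≤ Set.indicator {x : ℝ | 1 ≤ |x|} (fun x => Real.exp (0 * x)) x :=
        Set.indicator_nonneg (fun _ _ => by positivity) _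
      simp only [Pi.add_apply, Real.norm_eq_abs]
      by_cases hx : |x| ≤ 1
      · rw [if_pos hx]
        have hqx : |q * x| ≤ 1 := by
          rw [abs_mul, abs_of_pos hq.1]
          exact mul_le_one₀ hq.2 (abs_nonneg _) hx
        have h := Real.abs_exp_sub_one_sub_id_le hqx
        have hx2 : x ^ 2 ≤ 1 := (sq_le_one_iff_abs_le_one x).2 hx
        rw [min_eq_right hx2]
        have : (q * x) ^ 2 ≤ x ^ 2 := by
          rw [mul_pow]
          have : q ^ 2 ≤ 1 := pow_le_one₀ hq.1.le hq.2
          nlinarith [sq_nonneg x]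
        linarith
      · rw [if_neg hx]
        have hx' : x ∈ {x : ℝ | 1 ≤ |x|} := (not_le.1 hx).le
        rw [Set.indicator_of_mem hx', Set.indicator_of_mem hx']
        have hm : 0 ≤ min 1 (x ^ 2) := by positivity
        have hp := Real.exp_pos (q * x)
        have hp1 := Real.exp_pos x
        simp only [one_mul, zero_mul, Real.exp_zero, mul_zero, sub_zero]
        have : Real.exp (q * x) ≤ Real.exp x + 1 := by
          rcases le_total 0 x with h | h
          · have : Real.exp (q * x) ≤ Real.exp x :=
              Real.exp_le_exp.2 (by nlinarith [hq.2])
            linarith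
          · have : Real.exp (q * x) ≤ 1 :=
              Real.exp_le_one_iff.2 (by nlinarith [hq.1])
            linarith
        rw [abs_le]; constructor <;> linarith
    · refine ae_of_all _ fun x => ?_
      have : Continuous fun q : ℝ => Real.exp (q * x) - 1 - q * (if |x| ≤ 1 then x else 0) := by
        fun_prop
      have h := this.tendsto 0
      simp only [zero_mul, Real.exp_zero, sub_self] at h
      exact h.mono_left nhdsWithin_le_nhds
  have hc : Continuous fun q : ℝ => levyA σ ν * q + σ ^ 2 * q ^ 2 / 2 := by fun_prop
  have h2 := ((hc.tendsto 0).mono_left (nhdsWithin_le_nhds (s := Set.Ioc (0:ℝ) 1))).add hI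
  have e : levyA σ ν * 0 + σ ^ 2 * 0 ^ 2 / 2 + ∫ _x, (0 : ℝ) ∂ν = 0 := by simp
  rw [e] at h2
  exact h2

/-- If `2Z = W₀Z₀ + W₁Z₁` a.s., with `Z, Z₀, Z₁` identically distributed with positive finite
mean, `W_i` with moments `E(W_i^q) = 2^{ψ̃(q)}` and independent of `Z_i`, and
`(X₀, X₁) = (W₀Z₀, W₁Z₁)` exchangeable, then there is `ε > 0` such that for every `q ∈ [0,1]`,
`E(X₀^q 1_{X₀ ≤ X₁}) ≥ ε E(X₀^q)` (real powers, with `0^0 = 1`). -/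
theorem stmt_4
    {Ω : Type*} [MeasurableSpace Ω] (P : Measure Ω) [IsProbabilityMeasure P]
    (σ : ℝ) (ν : Measure ℝ)
    (hν0 : ν {0} = 0)
    (hν2 : ∫⁻ x, ENNReal.ofReal (min 1 (x ^ 2)) ∂ν < ⊤)
    (hnz : σ ≠ 0 ∨ ν ≠ 0)
    (hIν : Set.Icc (0 : ℝ) 1 ⊆ Inu ν)
    (W Z' : Fin 2 → Ω → ℝ) (Z : Ω → ℝ)
    (hWm : ∀ i, Measurable (W i)) (hZ'm : ∀ i, Measurable (Z' i)) (hZm : Measurable Z)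
    (hW0 : ∀ i ω, 0 ≤ W i ω) (hZ'0 : ∀ i ω, 0 ≤ Z' i ω) (hZ0 : ∀ ω, 0 ≤ Z ω)
    (hZd : ∀ i, P.map (Z' i) = P.map Z)
    (hZint : Integrable Z P) (hZpos : 0 < ∫ ω, Z ω ∂P)
    (hWmom : ∀ i, ∀ q : ℝ, 0 ≤ q →
      (q ∈ Inu ν →
        ∫⁻ ω, ENNReal.ofReal (W i ω ^ q) ∂P = ENNReal.ofReal ((2 : ℝ) ^ psiT σ ν q)) ∧
      (q ∉ Inu ν → ∫⁻ ω, ENNReal.ofReal (W i ω ^ q) ∂P = ⊤))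
    (hInd : ∀ i, IndepFun (W i) (Z' i) P)
    (hEq : ∀ᵐ ω ∂P, 2 * Z ω = W 0 ω * Z' 0 ω + W 1 ω * Z' 1 ω)
    (hex : P.map (fun ω => (W 0 ω * Z' 0 ω, W 1 ω * Z' 1 ω)) =
           P.map (fun ω => (W 1 ω * Z' 1 ω, W 0 ω * Z' 0 ω))) :
    ∃ ε > (0 : ℝ), ∀ q ∈ Set.Icc (0 : ℝ) 1,
      ε * ∫ ω, (W 0 ω * Z' 0 ω) ^ q ∂P ≤
        ∫ ω in {ω | W 0 ω * Z' 0 ω ≤ W 1 ω * Z' 1 ω}, (W 0 ω * Z' 0 ω) ^ q ∂P := by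
  set X : Ω → ℝ := fun ω => W 0 ω * Z' 0 ω with hX
  set Y : Ω → ℝ := fun ω => W 1 ω * Z' 1 ω with hY
  have hXm : Measurable X := (hWm 0).mul (hZ'm 0)
  have hYm : Measurable Y := (hWm 1).mul (hZ'm 1)
  have hX0 : ∀ ω, 0 ≤ X ω := fun ω => mul_nonneg (hW0 0 ω) (hZ'0 0 ω)
  have hY0 : ∀ ω, 0 ≤ Y ω := fun ω => mul_nonneg (hW0 1 ω) (hZ'0 1 ω)
  have hXint : Integrable X P := by
    refine (hZint.const_mul 2).mono' hXm.aestronglyMeasurable ?_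
    filter_upwards [hEq] with ω h
    rw [Real.norm_eq_abs, abs_of_nonneg (hX0 ω)]
    have := hY0 ω
    simp only [hX, hY] at *
    linarith
  have hSm : MeasurableSet {ω | X ω ≤ Y ω} := measurableSet_le hXm hYm
  have hpow_le : ∀ q ∈ Set.Icc (0 : ℝ) 1, ∀ x : ℝ, 0 ≤ x → x ^ q ≤ 1 + x := by
    intro q hq x hx
    rcases le_total x 1 with h | h
    · have := Real.rpow_le_one hx h hq.1
      linarith
    · have := Real.rpow_le_rpow_of_exponent_le h hq.2
      rw [Real.rpow_one] at this
      linarith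
  have hpow_ge : ∀ q ∈ Set.Icc (0 : ℝ) 1, ∀ x : ℝ, 0 ≤ x → min 1 x ≤ x ^ q := by
    intro q hq x hx
    rcases le_total x 1 with h | h
    · rcases hx.eq_or_lt with h0 | h0
      · rw [← h0]
        exact (min_le_right _ _).trans (Real.rpow_nonneg le_rfl _)
      · have := Real.rpow_le_rpow_of_exponent_ge h0 h hq.2
        rw [Real.rpow_one] at this
        exact (min_le_right _ _).trans this
    · exact (min_le_left _ _).trans (Real.one_le_rpow h hq.1)
  have hpint : ∀ q ∈ Set.Icc (0 : ℝ) 1, Integrable (fun ω => X ω ^ q) P := by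
    intro q hq
    refine ((integrable_const (1 : ℝ)).add hXint).mono' (hXm.pow_const q).aestronglyMeasurable ?_
    refine ae_of_all _ fun ω => ?_
    rw [Real.norm_eq_abs, abs_of_nonneg (Real.rpow_nonneg (hX0 ω) _)]
    exact hpow_le q hq _ (hX0 ω)
  have hmint : Integrable (fun ω => min 1 (X ω)) P := by
    refine hXint.mono' (measurable_const.min hXm).aestronglyMeasurable ?_
    refine ae_of_all _ fun ω => ?_
    rw [Real.norm_eq_abs, abs_of_nonneg (le_min zero_le_one (hX0 ω))]
    exact min_le_right _ _
  have hmpos : 0 < ∫ ω in {ω | X ω ≤ Y ω}, min 1 (X ω) ∂P := by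
    refine lt_of_le_of_ne
      (setIntegral_nonneg hSm fun ω _ => le_min zero_le_one (hX0 ω)) fun hzero => ?_
    have hz := (setIntegral_eq_zero_iff_of_nonneg_ae
      (ae_of_all _ fun ω => le_min zero_le_one (hX0 ω)) hmint.integrableOn).1 hzero.symm
    have hz1 : ∀ᵐ ω ∂P, X ω ≤ Y ω → X ω = 0 := by
      have := (ae_restrict_iff' hSm).1 hz
      filter_upwards [this] with ω h hle
      have h' : min 1 (X ω) = 0 := h hle
      rcases min_choice 1 (X ω) with h1 | h1
      · rw [h1] at h'; norm_num at h'
      · rwa [h1] at h'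
    have hz2 : ∀ᵐ ω ∂P, Y ω ≤ X ω → Y ω = 0 := by
      have hms : MeasurableSet {p : ℝ × ℝ | p.1 ≤ p.2 → p.1 = 0} := by
        have : {p : ℝ × ℝ | p.1 ≤ p.2 → p.1 = 0} = {p | p.1 ≤ p.2}ᶜ ∪ {p | p.1 = 0} := by
          ext p; simp [imp_iff_not_or]
        rw [this]
        exact (measurableSet_le measurable_fst measurable_snd).compl.union
          (measurableSet_eq_fun measurable_fst measurable_const)
      have e1 := (ae_map_iff (hXm.prodMk hYm).aemeasurable hms).2 hz1
      rw [hex] at e1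
      exact (ae_map_iff (hYm.prodMk hXm).aemeasurable hms).1 e1
    -- moment identity
    have key : ∀ q ∈ Set.Ioc (0 : ℝ) 1, psiT σ ν q = q - 1 := by
      intro q hq
      have hq' : q ∈ Set.Icc (0 : ℝ) 1 := ⟨hq.1.le, hq.2⟩
      set M := ∫⁻ ω, ENNReal.ofReal (Z ω ^ q) ∂P with hM
      have hMtop : M ≠ ⊤ := by
        have : Integrable (fun ω => Z ω ^ q) P := by
          refine ((integrable_const (1 : ℝ)).add hZint).mono'
            (hZm.pow_const q).aestronglyMeasurable ?_
          refine ae_of_all _ fun ω => ?_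
          rw [Real.norm_eq_abs, abs_of_nonneg (Real.rpow_nonneg (hZ0 ω) _)]
          exact hpow_le q hq' _ (hZ0 ω)
        exact ((hasFiniteIntegral_iff_ofReal
          (ae_of_all _ fun ω => Real.rpow_nonneg (hZ0 ω) _)).1 this.2).ne
      have hM0 : M ≠ 0 := by
        intro h
        rw [hM, lintegral_eq_zero_iff (hZm.pow_const q).ennreal_ofReal] at h
        have : Z =ᵐ[P] 0 := by
          filter_upwards [h] with ω h
          have h1 : Z ω ^ q ≤ 0 := ENNReal.ofReal_eq_zero.1 h
          have h2 := le_antisymm h1 (Real.rpow_nonneg (hZ0 ω) _)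
          exact ((Real.rpow_eq_zero (hZ0 ω) hq.1.ne').1 h2)
        rw [integral_congr_ae this] at hZpos
        simp at hZpos
      have hi : ∀ i, ∫⁻ ω, ENNReal.ofReal ((W i ω * Z' i ω) ^ q) ∂P
          = ENNReal.ofReal ((2 : ℝ) ^ psiT σ ν q) * M := by
        intro i
        have hg : Measurable fun x : ℝ => ENNReal.ofReal (x ^ q) := by fun_prop
        have hMi : ∫⁻ ω, ENNReal.ofReal (Z' i ω ^ q) ∂P = M := by
          rw [hM, ← lintegral_map hg hZm, ← hZd i, lintegral_map hg (hZ'm i)]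
        rw [← ((hWmom i q hq.1.le).1 (hIν hq')), ← hMi]
        refine Eq.trans ?_ (lintegral_mul_eq_lintegral_mul_lintegral_of_indepFun (hg.comp (hWm i))
          (hg.comp (hZ'm i)) ((hInd i).comp hg hg))
        refine lintegral_congr fun ω => ?_
        simp only [Pi.mul_apply, Function.comp]
        rw [Real.mul_rpow (hW0 i ω) (hZ'0 i ω), ENNReal.ofReal_mul (Real.rpow_nonneg (hW0 i ω) _)]
      have hsum : ENNReal.ofReal ((2 : ℝ) ^ q) * M
          = ENNReal.ofReal ((2 : ℝ) ^ psiT σ ν q) * M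
            + ENNReal.ofReal ((2 : ℝ) ^ psiT σ ν q) * M := by
        nth_rewrite 1 [← hi 0]
        rw [← hi 1, ← lintegral_add_left (hXm.pow_const q).ennreal_ofReal, hM,
          ← lintegral_const_mul _ (hZm.pow_const q).ennreal_ofReal]
        refine lintegral_congr_ae ?_
        filter_upwards [hEq, hz1, hz2] with ω h h1 h2
        rw [← ENNReal.ofReal_mul (by positivity), ← Real.mul_rpow (by norm_num) (hZ0 ω), h]
        change ENNReal.ofReal ((X ω + Y ω) ^ q)
          = ENNReal.ofReal (X ω ^ q) + ENNReal.ofReal (Y ω ^ q)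
        rcases le_total (X ω) (Y ω) with hle | hle
        · rw [h1 hle]; simp [Real.zero_rpow hq.1.ne']
        · rw [h2 hle]; simp [Real.zero_rpow hq.1.ne']
      rw [← add_mul, ENNReal.mul_left_inj hM0 hMtop,
        ← ENNReal.ofReal_add (by positivity) (by positivity),
        ENNReal.ofReal_eq_ofReal_iff (by positivity) (by positivity)] at hsum
      have h3 : (2 : ℝ) ^ q = (2 : ℝ) ^ (psiT σ ν q + 1) := by
        rw [Real.rpow_add (by norm_num), Real.rpow_one, hsum]; ring
      have h4 := congrArg (Real.logb 2) h3
      rw [Real.logb_rpow (by norm_num) (by norm_num),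
        Real.logb_rpow (by norm_num) (by norm_num)] at h4
      linarith
    have t1 := psiT_tendsto σ ν hν2 hIν
    have t2 : Tendsto (psiT σ ν) (nhdsWithin 0 (Set.Ioc 0 1)) (nhds (0 - 1)) := by
      have : Tendsto (fun q : ℝ => q - 1) (nhdsWithin 0 (Set.Ioc 0 1)) (nhds (0 - 1)) :=
        ((continuous_id.sub continuous_const).tendsto 0).mono_left nhdsWithin_le_nhds
      refine this.congr' ?_
      filter_upwards [self_mem_nhdsWithin] with q hq
      exact (key q hq).symm
    haveI : (nhdsWithin (0 : ℝ) (Set.Ioc 0 1)).NeBot := by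
      rw [nhdsWithin_Ioc_eq_nhdsGT (by norm_num)]; infer_instance
    have := tendsto_nhds_unique t1 t2
    norm_num at this
  have hXi0 : 0 ≤ ∫ ω, X ω ∂P := integral_nonneg hX0
  refine ⟨(∫ ω in {ω | X ω ≤ Y ω}, min 1 (X ω) ∂P) / (1 + ∫ ω, X ω ∂P), by positivity, ?_⟩
  intro q hq
  have hup : ∫ ω, X ω ^ q ∂P ≤ 1 + ∫ ω, X ω ∂P := by
    calc ∫ ω, X ω ^ q ∂P ≤ ∫ ω, (1 + X ω) ∂P :=
          integral_mono (hpint q hq) ((integrable_const _).add hXint)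
            fun ω => hpow_le q hq _ (hX0 ω)
      _ = 1 + ∫ ω, X ω ∂P := by
          rw [integral_add (integrable_const _) hXint]; simp
  have hlow : ∫ ω in {ω | X ω ≤ Y ω}, min 1 (X ω) ∂P
      ≤ ∫ ω in {ω | X ω ≤ Y ω}, X ω ^ q ∂P :=
    integral_mono hmint.integrableOn (hpint q hq).integrableOn
      fun ω => hpow_ge q hq _ (hX0 ω)
  refine le_trans ?_ hlow
  rw [div_mul_eq_mul_div, div_le_iff₀ (by positivity)]
  exact mul_le_mul_of_nonneg_left hup hmpos.le
end

section
/- Assume in addition that Z₀ and Z₁ each have the same distribution as Z and that (W₀, Z₀) and (W₁, Z₁) have the same joint distribution. Let q > 1 be such that 0 < E(Z^q) < ∞. Then q ∈ I_ν (that is, ∫_{|x|≥1} e^{qx} ν(dx) < ∞) and φ(q) < 0. -/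
open MeasureTheory ProbabilityTheory Filter

lemma levy_integrable (ν : Measure ℝ)
    (hν2 : ∫⁻ x, ENNReal.ofReal (min 1 (x ^ 2)) ∂ν < ⊤) (r : ℝ) (h0 : 0 ≤ r) (h1 : r ≤ 1)
    (hr : r ∈ Inu ν) :
    Integrable (fun x : ℝ => Real.exp (r * x) - 1 - r * (if |x| ≤ 1 then x else 0)) ν := by
  have hS : MeasurableSet {x : ℝ | 1 ≤ |x|} := measurableSet_le measurable_const (by fun_prop)
  have hT : MeasurableSet {x : ℝ | |x| ≤ 1} := measurableSet_le (by fun_prop) measurable_const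
  have hA : Integrable (fun x : ℝ => min 1 (x ^ 2)) ν := by
    refine ⟨by fun_prop, ?_⟩
    rw [hasFiniteIntegral_iff_ofReal (Eventually.of_forall fun x => by positivity)]
    exact hν2
  have hB : Integrable ({x : ℝ | 1 ≤ |x|}.indicator (fun x => Real.exp (r * x))) ν := by
    rw [integrable_indicator_iff hS]
    refine ⟨by fun_prop, ?_⟩
    rw [hasFiniteIntegral_iff_ofReal (Eventually.of_forall fun x => by positivity)]
    exact hr
  refine (hA.add hB).mono' ?_ (Eventually.of_forall fun x => ?_)
  · have : Measurable (fun x : ℝ => if |x| ≤ 1 then x else 0) :=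
      Measurable.ite hT measurable_id measurable_const
    exact (by fun_prop : Measurable _).aestronglyMeasurable
  · simp only [Pi.add_apply, Real.norm_eq_abs]
    by_cases hx : |x| ≤ 1
    · simp only [hx, if_true]
      have hrx : |r * x| ≤ 1 := by
        rw [abs_mul, abs_of_nonneg h0]
        nlinarith [abs_nonneg x]
      have h2 := Real.abs_exp_sub_one_sub_id_le hrx
      have h3 : x ^ 2 ≤ 1 := by rwa [sq_le_one_iff_abs_le_one]
      have h4 : 0 ≤ {x : ℝ | 1 ≤ |x|}.indicator (fun x => Real.exp (r * x)) x :=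
        Set.indicator_nonneg (fun _ _ => (Real.exp_pos _).le) _
      rw [min_eq_right h3]
      have : (r * x) ^ 2 ≤ x ^ 2 := by
        rw [mul_pow]
        have : r ^ 2 ≤ 1 := by nlinarith
        nlinarith [sq_nonneg x]
      linarith
    · simp only [hx, if_false]
      have hx' : 1 ≤ |x| := (not_le.mp hx).le
      have h3 : 1 ≤ x ^ 2 := by rwa [one_le_sq_iff_one_le_abs]
      rw [min_eq_left h3, Set.indicator_of_mem (show x ∈ {x : ℝ | 1 ≤ |x|} from hx')]
      have := Real.exp_pos (r * x)
      rw [abs_le]; constructor <;> linarith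

lemma levy_strict (σ : ℝ) (ν : Measure ℝ)
    (hν0 : ν {0} = 0)
    (hν2 : ∫⁻ x, ENNReal.ofReal (min 1 (x ^ 2)) ∂ν < ⊤)
    (hnz : σ ≠ 0 ∨ ν ≠ 0)
    (hIν : Set.Icc (0 : ℝ) 1 ⊆ Inu ν) :
    0 < psiT σ ν 1 - 2 * psiT σ ν (2/3) + psiT σ ν (1/3) := by
  have i1 := levy_integrable ν hν2 1 (by norm_num) (by norm_num) (hIν (by norm_num))
  have i2 := levy_integrable ν hν2 (2/3) (by norm_num) (by norm_num) (hIν (by norm_num))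
  have i3 := levy_integrable ν hν2 (1/3) (by norm_num) (by norm_num) (hIν (by norm_num))
  set g : ℝ → ℝ := fun x => Real.exp (1/3*x) * (Real.exp (1/3*x) - 1)^2 with hg
  have hgeq : g = fun x : ℝ => (Real.exp (1 * x) - 1 - 1 * (if |x| ≤ 1 then x else 0))
      - 2 * (Real.exp (2/3 * x) - 1 - 2/3 * (if |x| ≤ 1 then x else 0))
      + (Real.exp (1/3 * x) - 1 - 1/3 * (if |x| ≤ 1 then x else 0)) := by
    funext x
    have e1 : Real.exp (1 * x) = Real.exp (1/3*x) ^ 3 := by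
      rw [← Real.exp_nat_mul]; congr 1; push_cast; ring
    have e2 : Real.exp (2/3 * x) = Real.exp (1/3*x) ^ 2 := by
      rw [← Real.exp_nat_mul]; congr 1; push_cast; ring
    rw [e1, e2, hg]; ring
  have hgi : Integrable g ν := by
    rw [hgeq]; exact (i1.sub (i2.const_mul 2)).add i3
  have hgint : ∫ x, g x ∂ν = (∫ x, (Real.exp (1 * x) - 1 - 1 * (if |x| ≤ 1 then x else 0)) ∂ν)
      - 2 * (∫ x, (Real.exp (2/3 * x) - 1 - 2/3 * (if |x| ≤ 1 then x else 0)) ∂ν)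
      + ∫ x, (Real.exp (1/3 * x) - 1 - 1/3 * (if |x| ≤ 1 then x else 0)) ∂ν := by
    rw [hgeq]
    refine (integral_add (i1.sub (i2.const_mul 2)) i3).trans ?_
    congr 1
    refine (integral_sub i1 (i2.const_mul 2)).trans ?_
    rw [integral_const_mul]
  have key : psiT σ ν 1 - 2 * psiT σ ν (2/3) + psiT σ ν (1/3) = σ^2/9 + ∫ x, g x ∂ν := by
    rw [hgint]; unfold psiT; ring
  have hg0 : 0 ≤ g := fun x => by simp only [hg, Pi.zero_apply]; positivity
  rw [key]
  have hgn : 0 ≤ ∫ x, g x ∂ν := integral_nonneg hg0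
  rcases hnz with h | h
  · positivity
  · have : 0 < ∫ x, g x ∂ν := by
      rw [integral_pos_iff_support_of_nonneg hg0 hgi, pos_iff_ne_zero]
      intro h0
      apply h
      rw [← Measure.measure_univ_eq_zero, ← nonpos_iff_eq_zero]
      have hsub : (Set.univ : Set ℝ) ⊆ Function.support g ∪ {0} := by
        intro x _
        by_cases hx : x = 0
        · right; exact hx
        · left
          simp only [hg, Function.mem_support]
          have : Real.exp (1/3*x) - 1 ≠ 0 := by
            rw [sub_ne_zero, Ne, Real.exp_eq_one_iff]
            simpa using hx
          positivity
      calc ν Set.univ ≤ ν (Function.support g ∪ {0}) := measure_mono hsub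
        _ ≤ ν (Function.support g) + ν {0} := measure_union_le _ _
        _ = 0 := by rw [h0, hν0, add_zero]
    positivity

lemma rpow_strict {a b q : ℝ} (ha : 0 < a) (hb : 0 < b) (hq : 1 < q) :
    a ^ q + b ^ q < (a + b) ^ q := by
  have hs : 0 < a + b := by positivity
  have h : ∀ c, 0 < c → c < a + b → c ^ q < c * (a + b) ^ (q - 1) := by
    intro c hc hcs
    have : c ^ q = c * c ^ (q - 1) := by
      rw [mul_comm, ← Real.rpow_add_one hc.ne']; congr 1; ring
    rw [this]
    exact mul_lt_mul_of_pos_left (Real.rpow_lt_rpow hc.le hcs (by linarith)) hc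
  have e : (a + b) ^ q = (a + b) * (a + b) ^ (q - 1) := by
    rw [mul_comm, ← Real.rpow_add_one hs.ne']; congr 1; ring
  have h1 := h a ha (by linarith)
  have h2 := h b hb (by linarith)
  rw [e]; linarith

/-- If `2Z = W₀Z₀ + W₁Z₁` a.s., with `Z, Z₀, Z₁` identically distributed with positive finite
mean, `W_i` with moments `E(W_i^q) = 2^{ψ̃(q)}` and independent of `Z_i`, and
`(W₀, Z₀)` and `(W₁, Z₁)` with the same joint law, then for `q > 1` with
`0 < E(Z^q) < ∞` one has `q ∈ I_ν` and `φ(q) < 0`. -/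
theorem stmt_5
    {Ω : Type*} [MeasurableSpace Ω] (P : Measure Ω) [IsProbabilityMeasure P]
    (σ : ℝ) (ν : Measure ℝ)
    (hν0 : ν {0} = 0)
    (hν2 : ∫⁻ x, ENNReal.ofReal (min 1 (x ^ 2)) ∂ν < ⊤)
    (hnz : σ ≠ 0 ∨ ν ≠ 0)
    (hIν : Set.Icc (0 : ℝ) 1 ⊆ Inu ν)
    (W Z' : Fin 2 → Ω → ℝ) (Z : Ω → ℝ)
    (hWm : ∀ i, Measurable (W i)) (hZ'm : ∀ i, Measurable (Z' i)) (hZm : Measurable Z)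
    (hW0 : ∀ i ω, 0 ≤ W i ω) (hZ'0 : ∀ i ω, 0 ≤ Z' i ω) (hZ0 : ∀ ω, 0 ≤ Z ω)
    (hZd : ∀ i, P.map (Z' i) = P.map Z)
    (hZint : Integrable Z P) (hZpos : 0 < ∫ ω, Z ω ∂P)
    (hWmom : ∀ i, ∀ q : ℝ, 0 ≤ q →
      (q ∈ Inu ν →
        ∫⁻ ω, ENNReal.ofReal (W i ω ^ q) ∂P = ENNReal.ofReal ((2 : ℝ) ^ psiT σ ν q)) ∧
      (q ∉ Inu ν → ∫⁻ ω, ENNReal.ofReal (W i ω ^ q) ∂P = ⊤))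
    (hInd : ∀ i, IndepFun (W i) (Z' i) P)
    (hEq : ∀ᵐ ω ∂P, 2 * Z ω = W 0 ω * Z' 0 ω + W 1 ω * Z' 1 ω)
    (hjoint : P.map (fun ω => (W 0 ω, Z' 0 ω)) = P.map (fun ω => (W 1 ω, Z' 1 ω)))
    (q : ℝ) (hq : 1 < q)
    (hZq0 : 0 < ∫⁻ ω, ENNReal.ofReal (Z ω ^ q) ∂P)
    (hZq1 : ∫⁻ ω, ENNReal.ofReal (Z ω ^ q) ∂P < ⊤) :
    q ∈ Inu ν ∧ phiF σ ν q < 0 := by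
  have mZ : ∀ r : ℝ, Measurable (fun x : ℝ => ENNReal.ofReal (x ^ r)) := fun r => by fun_prop
  -- moments of Z'
  have hZr : ∀ i (r : ℝ), ∫⁻ ω, ENNReal.ofReal (Z' i ω ^ r) ∂P
      = ∫⁻ ω, ENNReal.ofReal (Z ω ^ r) ∂P := by
    intro i r
    rw [← lintegral_map (mZ r) (hZ'm i), hZd i, lintegral_map (mZ r) hZm]
  have hprod : ∀ i (r : ℝ), ∫⁻ ω, ENNReal.ofReal ((W i ω * Z' i ω) ^ r) ∂P
      = (∫⁻ ω, ENNReal.ofReal (W i ω ^ r) ∂P) * ∫⁻ ω, ENNReal.ofReal (Z ω ^ r) ∂P := by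
    intro i r
    rw [← hZr i r]
    refine Eq.trans ?_ (lintegral_mul_eq_lintegral_mul_lintegral_of_indepFun
      ((mZ r).comp (hWm i)) ((mZ r).comp (hZ'm i)) ((hInd i).comp (mZ r) (mZ r)))
    refine lintegral_congr fun ω => ?_
    simp only [Pi.mul_apply, Function.comp_apply]
    rw [Real.mul_rpow (hW0 i ω) (hZ'0 i ω), ENNReal.ofReal_mul (Real.rpow_nonneg (hW0 i ω) r)]
  have hX0 : ∀ i ω, 0 ≤ W i ω * Z' i ω := fun i ω => mul_nonneg (hW0 i ω) (hZ'0 i ω)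
  have hsum : ∀ r : ℝ, ∫⁻ ω, (ENNReal.ofReal ((W 0 ω * Z' 0 ω) ^ r) +
        ENNReal.ofReal ((W 1 ω * Z' 1 ω) ^ r)) ∂P
      = ((∫⁻ ω, ENNReal.ofReal (W 0 ω ^ r) ∂P) + (∫⁻ ω, ENNReal.ofReal (W 1 ω ^ r) ∂P)) *
        ∫⁻ ω, ENNReal.ofReal (Z ω ^ r) ∂P := by
    intro r
    rw [add_mul, ← hprod, ← hprod]
    exact lintegral_add_left ((mZ r).comp ((hWm 0).mul (hZ'm 0))) _
  have hdouble : ∀ r : ℝ, ∫⁻ ω, ENNReal.ofReal ((W 0 ω * Z' 0 ω + W 1 ω * Z' 1 ω) ^ r) ∂P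
      = ENNReal.ofReal ((2:ℝ) ^ r) * ∫⁻ ω, ENNReal.ofReal (Z ω ^ r) ∂P := by
    intro r
    refine Eq.trans ?_ (lintegral_const_mul _ ((mZ r).comp hZm))
    refine lintegral_congr_ae ?_
    filter_upwards [hEq] with ω hω
    rw [← hω, Real.mul_rpow (by norm_num) (hZ0 ω), ENNReal.ofReal_mul (by positivity)]
  have hle : ∀ ω, ENNReal.ofReal ((W 0 ω * Z' 0 ω) ^ q) + ENNReal.ofReal ((W 1 ω * Z' 1 ω) ^ q)
      ≤ ENNReal.ofReal ((W 0 ω * Z' 0 ω + W 1 ω * Z' 1 ω) ^ q) := by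
    intro ω
    rw [← ENNReal.ofReal_add (Real.rpow_nonneg (hX0 0 ω) q) (Real.rpow_nonneg (hX0 1 ω) q)]
    exact ENNReal.ofReal_le_ofReal (Real.add_rpow_le_rpow_add (hX0 0 ω) (hX0 1 ω) hq.le)
  have hm : (∫⁻ ω, ENNReal.ofReal (W 0 ω ^ q) ∂P) + (∫⁻ ω, ENNReal.ofReal (W 1 ω ^ q) ∂P)
      ≤ ENNReal.ofReal ((2:ℝ) ^ q) := by
    have h := lintegral_mono (μ := P) hle
    rw [hsum, hdouble] at h
    exact (ENNReal.mul_le_mul_iff_left hZq0.ne' hZq1.ne).mp h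
  have hqI : q ∈ Inu ν := by
    by_contra hn
    rw [((hWmom 0 q (by linarith)).2 hn)] at hm
    simp at hm
  have hmom : ∀ r, 0 ≤ r → r ∈ Inu ν →
      (∫⁻ ω, ENNReal.ofReal (W 0 ω ^ r) ∂P) + (∫⁻ ω, ENNReal.ofReal (W 1 ω ^ r) ∂P)
      = ENNReal.ofReal ((2:ℝ) ^ (psiT σ ν r + 1)) := by
    intro r hr hrI
    rw [(hWmom 0 r hr).1 hrI, (hWmom 1 r hr).1 hrI,
      ← ENNReal.ofReal_add (by positivity) (by positivity), Real.rpow_add_one (by norm_num)]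
    congr 1; ring
  refine ⟨hqI, ?_⟩
  by_contra hcon
  rw [not_lt] at hcon
  unfold phiF at hcon
  -- equality case
  have hge : ENNReal.ofReal ((2:ℝ) ^ q) ≤
      (∫⁻ ω, ENNReal.ofReal (W 0 ω ^ q) ∂P) + (∫⁻ ω, ENNReal.ofReal (W 1 ω ^ q) ∂P) := by
    rw [hmom q (by linarith) hqI]
    exact ENNReal.ofReal_le_ofReal (Real.rpow_le_rpow_of_exponent_le (by norm_num) (by linarith))
  have hae := ae_eq_of_ae_le_of_lintegral_le (μ := P) (Eventually.of_forall hle)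
    (by rw [hsum]; exact ENNReal.mul_ne_top (ne_top_of_le_ne_top ENNReal.ofReal_ne_top hm) hZq1.ne)
    ((mZ q).comp (((hWm 0).mul (hZ'm 0)).add ((hWm 1).mul (hZ'm 1)))).aemeasurable
    (by rw [hsum, hdouble]; gcongr)
  have hdisj : ∀ᵐ ω ∂P, W 0 ω * Z' 0 ω = 0 ∨ W 1 ω * Z' 1 ω = 0 := by
    filter_upwards [hae] with ω hω
    by_contra hc
    push Not at hc
    have h0 := lt_of_le_of_ne (hX0 0 ω) (Ne.symm hc.1)
    have h1 := lt_of_le_of_ne (hX0 1 ω) (Ne.symm hc.2)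
    have := rpow_strict h0 h1 hq
    rw [← ENNReal.ofReal_add (by positivity) (by positivity),
      ENNReal.ofReal_eq_ofReal_iff (by positivity) (by positivity)] at hω
    linarith
  have hlin : ∀ r : ℝ, 0 < r → r ≤ 1 → psiT σ ν r = r - 1 := by
    intro r h0 h1
    have hrI : r ∈ Inu ν := hIν ⟨h0.le, h1⟩
    have heq : ∫⁻ ω, (ENNReal.ofReal ((W 0 ω * Z' 0 ω) ^ r) +
        ENNReal.ofReal ((W 1 ω * Z' 1 ω) ^ r)) ∂P =
        ∫⁻ ω, ENNReal.ofReal ((W 0 ω * Z' 0 ω + W 1 ω * Z' 1 ω) ^ r) ∂P := by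
      refine lintegral_congr_ae ?_
      filter_upwards [hdisj] with ω hω
      rcases hω with h | h <;> simp [h, Real.zero_rpow h0.ne']
    rw [hsum, hdouble, hmom r h0.le hrI] at heq
    have hpos : ∫⁻ ω, ENNReal.ofReal (Z ω ^ r) ∂P ≠ 0 := by
      intro hz
      replace hz := (lintegral_eq_zero_iff ((mZ r).comp hZm)).mp hz
      have : ∫ ω, Z ω ∂P = 0 := by
        refine integral_eq_zero_of_ae ?_
        filter_upwards [hz] with ω hω
        simp only [Function.comp_apply, Pi.zero_apply, ENNReal.ofReal_eq_zero] at hω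
        by_contra hne
        have := Real.rpow_pos_of_pos (lt_of_le_of_ne (hZ0 ω) (Ne.symm hne)) r
        linarith
      linarith
    have hfin : ∫⁻ ω, ENNReal.ofReal (Z ω ^ r) ∂P ≠ ⊤ := by
      have hi : Integrable (fun ω => 1 + Z ω) P := (integrable_const 1).add hZint
      have h2 := hi.2
      rw [hasFiniteIntegral_iff_ofReal (Eventually.of_forall fun ω => by
        have := hZ0 ω; simp only [Pi.zero_apply]; linarith)] at h2
      refine ne_top_of_le_ne_top h2.ne (lintegral_mono fun ω => ENNReal.ofReal_le_ofReal ?_)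
      have hz := hZ0 ω
      rcases le_total (Z ω) 1 with h | h
      · have := Real.rpow_le_one hz h h0.le
        linarith
      · have := Real.rpow_le_rpow_of_exponent_le h h1
        rw [Real.rpow_one] at this
        linarith
    rw [ENNReal.mul_left_inj hpos hfin,
      ENNReal.ofReal_eq_ofReal_iff (by positivity) (by positivity)] at heq
    have := (Real.rpow_right_inj (by norm_num) (by norm_num)).mp heq
    linarith
  have hst := levy_strict σ ν hν0 hν2 hnz hIν
  rw [hlin 1 (by norm_num) (by norm_num), hlin (2/3) (by norm_num) (by norm_num),
    hlin (1/3) (by norm_num) (by norm_num)] at hst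
  norm_num at hst
end

section
/- Suppose that for every q > 1 one has q ∈ I_ν and φ(q) < 0. Then σ = 0, ν gives no mass to (0, ∞), ∫ min(1, |x|) ν(dx) < ∞, and γ := ∫_{(−∞,0)} (1 − e^x) ν(dx) ≤ 1. -/
open MeasureTheory

/-- Compensated integrand of `ψ̃` after normalisation. -/
noncomputable def kF (q x : ℝ) : ℝ := Real.exp (q * x) - 1 - q * (Real.exp x - 1)

lemma gF_integrable (ν : Measure ℝ)
    (hν2 : ∫⁻ x, ENNReal.ofReal (min 1 (x ^ 2)) ∂ν < ⊤) (q : ℝ) (hq : q ∈ Inu ν) :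
    Integrable (fun x => Real.exp (q * x) - 1 - q * (if |x| ≤ 1 then x else 0)) ν := by
  have hS : MeasurableSet {x : ℝ | 1 ≤ |x|} :=
    measurableSet_le measurable_const continuous_abs.measurable
  have h1 : Integrable (fun x : ℝ => min 1 (x ^ 2)) ν := by
    refine ⟨by fun_prop, ?_⟩
    rw [hasFiniteIntegral_iff_ofReal (Filter.Eventually.of_forall fun x => by positivity)]
    exact hν2
  have h2 : IntegrableOn (fun x : ℝ => Real.exp (q * x)) {x : ℝ | 1 ≤ |x|} ν := by
    refine ⟨by fun_prop, ?_⟩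
    rw [hasFiniteIntegral_iff_ofReal (Filter.Eventually.of_forall fun x => by positivity)]
    exact hq
  have h3 := h2.integrable_indicator hS
  refine ((h1.const_mul (q ^ 2 * Real.exp |q| + 1)).add h3).mono' ?_ ?_
  · refine Measurable.aestronglyMeasurable ?_
    refine Measurable.sub (by fun_prop) (Measurable.const_mul ?_ _)
    exact Measurable.ite (measurableSet_le continuous_abs.measurable measurable_const)
      measurable_id measurable_const
  · refine Filter.Eventually.of_forall fun x => ?_
    have hind : 0 ≤ Set.indicator {x : ℝ | 1 ≤ |x|} (fun x : ℝ => Real.exp (q * x)) x :=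
      Set.indicator_nonneg (fun _ _ => (Real.exp_pos _).le) _
    simp only [Pi.add_apply]
    by_cases hx : |x| ≤ 1
    · have hb := Complex.norm_exp_sub_sum_le_norm_mul_exp ((q * x : ℝ) : ℂ) 2
      have hs : Complex.exp ((q * x : ℝ) : ℂ) -
          ∑ m ∈ Finset.range 2, ((q * x : ℝ) : ℂ) ^ m / (m.factorial : ℂ) =
          ((Real.exp (q * x) - (1 + q * x) : ℝ) : ℂ) := by
        simp [Finset.sum_range_succ]
      rw [hs, Complex.norm_real, Complex.norm_real, Real.norm_eq_abs, Real.norm_eq_abs,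
        sq_abs, abs_mul] at hb
      have hx2 : x ^ 2 ≤ 1 := by
        rw [← sq_abs]; nlinarith [abs_nonneg x]
      rw [min_eq_right hx2, if_pos hx, Real.norm_eq_abs]
      have e1 : Real.exp (q * x) - 1 - q * x = Real.exp (q * x) - (1 + q * x) := by ring
      rw [e1]
      have e2 : Real.exp (|q| * |x|) ≤ Real.exp |q| :=
        Real.exp_le_exp.2 (by nlinarith [abs_nonneg q])
      have e3 : (q * x) ^ 2 * Real.exp (|q| * |x|) ≤ (q * x) ^ 2 * Real.exp |q| := by gcongr
      have e4 : |Real.exp (q * x) - (1 + q * x)| ≤ (q * x) ^ 2 * Real.exp (|q| * |x|) := hb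
      nlinarith [sq_nonneg x]
    · rw [if_neg hx, Set.indicator_of_mem (by simpa using (not_le.1 hx).le), Real.norm_eq_abs]
      have hx2 : 1 ≤ x ^ 2 := by
        rw [← sq_abs]; nlinarith [not_le.1 hx]
      rw [min_eq_left hx2, abs_le]
      have := Real.exp_pos (q * x)
      have : 0 ≤ q ^ 2 * Real.exp |q| := by positivity
      constructor <;> linarith

lemma phiF_eq (σ : ℝ) (ν : Measure ℝ)
    (hν2 : ∫⁻ x, ENNReal.ofReal (min 1 (x ^ 2)) ∂ν < ⊤) (q : ℝ) (hq : q ∈ Inu ν)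
    (h1 : (1 : ℝ) ∈ Inu ν) :
    Integrable (kF q) ν ∧
      phiF σ ν q = σ ^ 2 * (q ^ 2 - q) / 2 + ∫ x, kF q x ∂ν - (q - 1) := by
  have i1 := gF_integrable ν hν2 q hq
  have i2 := gF_integrable ν hν2 1 h1
  simp only [one_mul] at i2
  have e : kF q = fun x => (Real.exp (q * x) - 1 - q * (if |x| ≤ 1 then x else 0)) -
      q * (Real.exp x - 1 - if |x| ≤ 1 then x else 0) := by
    funext x; unfold kF; ring
  refine ⟨by rw [e]; exact i1.sub (i2.const_mul q), ?_⟩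
  rw [e, integral_sub i1 (i2.const_mul q), integral_const_mul]
  unfold phiF psiT levyA
  ring

lemma kF_nonneg (q x : ℝ) (hq : 1 ≤ q) : 0 ≤ kF q x := by
  have := one_add_mul_self_le_rpow_one_add (s := Real.exp x - 1)
    (by linarith [Real.exp_pos x]) hq
  rw [add_sub_cancel, ← Real.exp_mul, mul_comm x q] at this
  unfold kF
  linarith

lemma kF_div (n : ℕ) (x : ℝ) : kF (n + 2) x / (n + 1) =
    (1 - Real.exp x) + Real.exp x * ((Real.exp ((n + 1) * x) - 1) / (n + 1)) := by
  have : Real.exp (((n : ℝ) + 2) * x) = Real.exp x * Real.exp ((n + 1) * x) := by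
    rw [← Real.exp_add]; ring_nf
  unfold kF
  rw [this]
  have : (n : ℝ) + 1 ≠ 0 := by positivity
  field_simp
  ring

lemma kF_tendsto_top (x : ℝ) (hx : 0 < x) :
    Filter.Tendsto (fun n : ℕ => kF (n + 2) x / (n + 1)) Filter.atTop Filter.atTop := by
  have ht : Filter.Tendsto (fun n : ℕ => (1 - Real.exp x) + (n : ℝ) * (x ^ 2 / 2))
      Filter.atTop Filter.atTop :=
    Filter.tendsto_atTop_add_const_left _ _
      (tendsto_natCast_atTop_atTop.atTop_mul_const (by positivity))
  refine Filter.tendsto_atTop_mono (fun n => ?_) ht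
  rw [kF_div]
  have hn : (0 : ℝ) < n + 1 := by positivity
  have hb := Real.quadratic_le_exp_of_nonneg (x := ((n : ℝ) + 1) * x) (by positivity)
  have h1 : (n : ℝ) * (x ^ 2 / 2) ≤ (Real.exp ((n + 1) * x) - 1) / (n + 1) := by
    rw [le_div_iff₀ hn]
    nlinarith [sq_nonneg x, mul_pos hn hx, mul_pos hn (pow_pos hx 2)]
  have h0 : 0 ≤ (n : ℝ) * (x ^ 2 / 2) := by positivity
  have h2 : 1 ≤ Real.exp x := Real.one_le_exp hx.le
  nlinarith

lemma kF_tendsto (x : ℝ) (hx : x ≤ 0) :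
    Filter.Tendsto (fun n : ℕ => kF (n + 2) x / (n + 1)) Filter.atTop
      (nhds (1 - Real.exp x)) := by
  have ht : Filter.Tendsto (fun n : ℕ => (1 - Real.exp x) - 1 / ((n : ℝ) + 1))
      Filter.atTop (nhds (1 - Real.exp x)) := by
    simpa using tendsto_const_nhds.sub (tendsto_one_div_add_atTop_nhds_zero_nat (𝕜 := ℝ))
  refine tendsto_of_tendsto_of_tendsto_of_le_of_le ht tendsto_const_nhds ?_ ?_
  · intro n
    simp only
    rw [kF_div]
    have hn : (0 : ℝ) < n + 1 := by positivity
    have h1 : -(1 / ((n : ℝ) + 1)) ≤ (Real.exp ((n + 1) * x) - 1) / (n + 1) := by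
      rw [← neg_div]; gcongr; linarith [Real.exp_pos (((n : ℝ) + 1) * x)]
    have h2 : Real.exp x ≤ 1 := Real.exp_le_one_iff.2 hx
    have h3 := Real.exp_pos x
    have h4 : 0 < 1 / ((n : ℝ) + 1) := by positivity
    nlinarith
  · intro n
    simp only
    rw [kF_div]
    have hn : (0 : ℝ) < n + 1 := by positivity
    have h1 : (Real.exp ((n + 1) * x) - 1) / (n + 1) ≤ 0 := by
      apply div_nonpos_of_nonpos_of_nonneg _ hn.le
      have : Real.exp (((n : ℝ) + 1) * x) ≤ 1 := Real.exp_le_one_iff.2 (by nlinarith)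
      linarith
    nlinarith [Real.exp_pos x]

/-- If for every `q > 1` one has `q ∈ I_ν` and `φ(q) < 0`, then `σ = 0`, `ν` gives no mass to
`(0,∞)`, `∫ min(1,|x|) ν(dx) < ∞`, and `γ = ∫_{(−∞,0)} (1 − e^x) ν(dx) ≤ 1`. -/
theorem stmt_6 (σ : ℝ) (ν : Measure ℝ)
    (hν0 : ν {0} = 0)
    (hν2 : ∫⁻ x, ENNReal.ofReal (min 1 (x ^ 2)) ∂ν < ⊤)
    (hnz : σ ≠ 0 ∨ ν ≠ 0)
    (hIν : Set.Icc (0 : ℝ) 1 ⊆ Inu ν)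
    (h : ∀ q : ℝ, 1 < q → q ∈ Inu ν ∧ phiF σ ν q < 0) :
    σ = 0 ∧ ν (Set.Ioi 0) = 0 ∧
      (∫⁻ x, ENNReal.ofReal (min 1 |x|) ∂ν < ⊤) ∧
      (∫ x in Set.Iio (0 : ℝ), (1 - Real.exp x) ∂ν ≤ 1) := by
  have h1I : (1 : ℝ) ∈ Inu ν := hIν ⟨zero_le_one, le_rfl⟩
  have key : ∀ q : ℝ, 1 < q → Integrable (kF q) ν ∧ 0 ≤ ∫ x, kF q x ∂ν ∧
      σ ^ 2 * (q ^ 2 - q) / 2 + ∫ x, kF q x ∂ν < q - 1 := by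
    intro q hq
    obtain ⟨a, b⟩ := phiF_eq σ ν hν2 q (h q hq).1 h1I
    refine ⟨a, integral_nonneg fun x => kF_nonneg q x hq.le, ?_⟩
    have := (h q hq).2
    linarith
  have hσ : σ = 0 := by
    by_contra hne
    have hpos : 0 < σ ^ 2 := by positivity
    have hq : 1 < 2 / σ ^ 2 + 1 := by
      have : 0 < 2 / σ ^ 2 := by positivity
      linarith
    obtain ⟨-, b, c⟩ := key _ hq
    have hc : σ ^ 2 * (2 / σ ^ 2) = 2 := by field_simp
    have : 0 < 2 / σ ^ 2 := by positivity
    set r := 2 / σ ^ 2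
    have e : σ ^ 2 * ((r + 1) ^ 2 - (r + 1)) / 2 = (σ ^ 2 * r) * (r + 1) / 2 := by ring
    rw [e, hc] at c
    linarith
  have hfat : ∫⁻ x, (if 0 < x then ⊤ else ENNReal.ofReal (1 - Real.exp x)) ∂ν ≤ 1 := by
    calc _ = ∫⁻ x, Filter.liminf
          (fun n : ℕ => ENNReal.ofReal (kF (n + 2) x / (n + 1))) Filter.atTop ∂ν := by
          refine lintegral_congr fun x => ?_
          symm
          apply Filter.Tendsto.liminf_eq
          split_ifs with hx
          · exact ENNReal.tendsto_ofReal_atTop.comp (kF_tendsto_top x hx)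
          · exact ENNReal.tendsto_ofReal (kF_tendsto x (not_lt.1 hx))
      _ ≤ Filter.liminf (fun n : ℕ => ∫⁻ x, ENNReal.ofReal (kF (n + 2) x / (n + 1)) ∂ν)
          Filter.atTop := by
          refine lintegral_liminf_le fun n => ?_
          unfold kF
          fun_prop
      _ ≤ Filter.liminf (fun n : ℕ => (1 : ENNReal)) Filter.atTop := by
          refine Filter.liminf_le_liminf (Filter.Eventually.of_forall fun n => ?_)
          have hn : (0 : ℝ) < n + 1 := by positivity
          have hq : (1 : ℝ) < n + 2 := by linarith
          obtain ⟨a, b, c⟩ := key _ hq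
          rw [← ofReal_integral_eq_lintegral_ofReal (a.div_const _)
            (Filter.Eventually.of_forall fun x => div_nonneg (kF_nonneg _ x hq.le) hn.le),
            integral_div]
          rw [ENNReal.ofReal_le_one, div_le_one hn]
          rw [hσ] at c
          linarith
      _ = 1 := by simp
  have hle : ∀ x : ℝ, (if 0 < x then (⊤ : ENNReal) else 0) ≤
      (if 0 < x then ⊤ else ENNReal.ofReal (1 - Real.exp x)) := by
    intro x; split_ifs <;> simp
  have hpos : ν (Set.Ioi 0) = 0 := by
    have h2 : ∫⁻ x in Set.Ioi (0 : ℝ), (⊤ : ENNReal) ∂ν ≤ 1 := by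
      rw [← lintegral_indicator measurableSet_Ioi]
      refine (lintegral_mono fun x => ?_).trans hfat
      by_cases hx : 0 < x <;> simp [hx]
    rw [setLIntegral_const] at h2
    by_contra hne
    rw [ENNReal.top_mul hne] at h2
    simp at h2
  refine ⟨hσ, hpos, ?_, ?_⟩
  · have : ∫⁻ x, ENNReal.ofReal (min 1 |x|) ∂ν ≤
        ∫⁻ x, 2 * (if 0 < x then ⊤ else ENNReal.ofReal (1 - Real.exp x)) ∂ν := by
      refine lintegral_mono fun x => ?_
      simp only
      split_ifs with hx
      · simp
      · rw [show (2 : ENNReal) = ENNReal.ofReal 2 by simp, ← ENNReal.ofReal_mul (by norm_num)]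
        apply ENNReal.ofReal_le_ofReal
        have hx0 := not_lt.1 hx
        rw [abs_of_nonpos hx0]
        have h1 := Real.add_one_le_exp (-x)
        have h2 : Real.exp x * Real.exp (-x) = 1 := by rw [← Real.exp_add]; simp
        have h3 := Real.exp_pos x
        have h4 : Real.exp x * (-x + 1) ≤ 1 := by nlinarith
        rcases le_total 1 (-x) with h5 | h5
        · rw [min_eq_left h5]; nlinarith
        · rw [min_eq_right h5]; nlinarith
    rw [lintegral_const_mul' _ _ (by simp)] at this
    refine this.trans_lt (ENNReal.mul_lt_top (by simp) (hfat.trans_lt (by simp)))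
  · have h0 : 0 ≤ᵐ[ν.restrict (Set.Iio (0 : ℝ))] fun x => 1 - Real.exp x := by
      filter_upwards [ae_restrict_mem measurableSet_Iio] with x hx
      have : Real.exp x ≤ 1 := Real.exp_le_one_iff.2 (le_of_lt hx)
      simpa using this
    rw [integral_eq_lintegral_of_nonneg_ae h0 (by fun_prop)]
    refine ENNReal.toReal_le_of_le_ofReal zero_le_one ?_
    rw [ENNReal.ofReal_one, ← lintegral_indicator measurableSet_Iio]
    refine (lintegral_mono fun x => ?_).trans hfat
    by_cases hx : x < 0
    · simp [hx, not_lt.2 hx.le]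
    · simp [hx]
end

section
/- Suppose σ = 0, ν is a nonzero Lévy measure carried by (−∞, 0] with ∫ min(1, |x|) ν(dx) < ∞, and γ := ∫_{(−∞,0)} (1 − e^x) ν(dx) ≤ 1. Then [0, ∞) ⊆ I_ν, for every q ≥ 0 one has φ(q) = (γ − 1)q + 1 − ∫_{(−∞,0)} (1 − e^{qx}) ν(dx), the derivative φ′(1) is strictly negative, and φ(q) < 0 for every q > 1. -/
open MeasureTheory

/-- Strict positivity of the integral of an a.e. positive function. -/
theorem aux_pos (ν : Measure ℝ) (hνne : ν ≠ 0) (f : ℝ → ℝ) (hf : Integrable f ν)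
    (h : ∀ᵐ x ∂ν, 0 < f x) : 0 < ∫ x, f x ∂ν := by
  have h0 : 0 ≤ᵐ[ν] f := by
    filter_upwards [h] with x hx using hx.le
  rcases (integral_nonneg_of_ae h0).lt_or_eq with h1 | h1
  · exact h1
  · exfalso
    have h2 := (integral_eq_zero_iff_of_nonneg_ae h0 hf).1 h1.symm
    have h3 : ∀ᵐ x ∂ν, False := by
      filter_upwards [h, h2] with x hx hx2
      simp only [Pi.zero_apply] at hx2
      linarith
    apply hνne
    rw [← ae_eq_bot]
    exact Filter.eventually_false_iff_eq_bot.1 h3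

/-- Suppose `σ = 0`, `ν` is a nonzero Lévy measure carried by `(−∞,0]` with
`∫ min(1,|x|) ν(dx) < ∞`, and `γ = ∫_{(−∞,0)} (1 − e^x) ν(dx) ≤ 1`. Then `[0,∞) ⊆ I_ν`,
for every `q ≥ 0` one has `φ(q) = (γ−1)q + 1 − ∫_{(−∞,0)} (1 − e^{qx}) ν(dx)`, the
derivative `φ′(1)` is strictly negative, and `φ(q) < 0` for every `q > 1`. -/
theorem stmt_7 (σ : ℝ) (ν : Measure ℝ)
    (hν0 : ν {0} = 0)
    (hν2 : ∫⁻ x, ENNReal.ofReal (min 1 (x ^ 2)) ∂ν < ⊤)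
    (hσ : σ = 0) (hνne : ν ≠ 0)
    (hcar : ν (Set.Ioi 0) = 0)
    (hIν : Set.Icc (0 : ℝ) 1 ⊆ Inu ν)
    (hmin : ∫⁻ x, ENNReal.ofReal (min 1 |x|) ∂ν < ⊤)
    (hγ : (∫ x in Set.Iio (0 : ℝ), (1 - Real.exp x) ∂ν) ≤ 1) :
    Set.Ici (0 : ℝ) ⊆ Inu ν ∧
    (∀ q : ℝ, 0 ≤ q → phiF σ ν q =
      ((∫ x in Set.Iio (0 : ℝ), (1 - Real.exp x) ∂ν) - 1) * q + 1 -
        ∫ x in Set.Iio (0 : ℝ), (1 - Real.exp (q * x)) ∂ν) ∧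
    (∃ L : ℝ, L < 0 ∧ HasDerivAt (phiF σ ν) L 1) ∧
    (∀ q : ℝ, 1 < q → phiF σ ν q < 0) := by
  subst hσ
  have hneg : ∀ᵐ x ∂ν, x < 0 := by
    have h1 : ∀ᵐ x ∂ν, x ∉ ({0} : Set ℝ) := measure_eq_zero_iff_ae_notMem.1 hν0
    have h2 : ∀ᵐ x ∂ν, x ∉ Set.Ioi (0 : ℝ) := measure_eq_zero_iff_ae_notMem.1 hcar
    filter_upwards [h1, h2] with x hx1 hx2
    simp only [Set.mem_singleton_iff, Set.mem_Ioi, not_lt] at hx1 hx2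
    exact lt_of_le_of_ne hx2 hx1
  have hres : ν.restrict (Set.Iio 0) = ν := Measure.restrict_eq_self_of_ae_mem hneg
  rw [hres] at hγ ⊢
  have hM : Integrable (fun x : ℝ => min 1 |x|) ν := by
    refine ⟨by fun_prop, ?_⟩
    rw [hasFiniteIntegral_iff_ofReal]
    · exact hmin
    · exact Filter.Eventually.of_forall fun x => le_min zero_le_one (abs_nonneg x)
  have hE : ∀ q : ℝ, 0 ≤ q → Integrable (fun x : ℝ => 1 - Real.exp (q * x)) ν := by
    intro q hq
    refine (hM.const_mul (1 + q)).mono' (by fun_prop) ?_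
    filter_upwards [hneg] with x hx
    have h1 : Real.exp (q * x) ≤ 1 := Real.exp_le_one_iff.2 (by nlinarith)
    have h2 := Real.add_one_le_exp (q * x)
    have h3 := Real.exp_pos (q * x)
    rw [Real.norm_of_nonneg (by linarith), abs_of_neg hx]
    rcases min_cases 1 (-x) with ⟨h, _⟩ | ⟨h, _⟩ <;> rw [h] <;> nlinarith
  have hI : Integrable (fun x : ℝ => if |x| ≤ 1 then x else 0) ν := by
    refine hM.mono' ?_ ?_
    · exact (Measurable.ite (measurableSet_le (by fun_prop) (by fun_prop))
        measurable_id measurable_const).aestronglyMeasurable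
    · refine Filter.Eventually.of_forall fun x => ?_
      split_ifs with h
      · rw [Real.norm_eq_abs, min_eq_right h]
      · simp
  have hE1 : Integrable (fun x : ℝ => 1 - Real.exp x) ν := by simpa using hE 1 zero_le_one
  have hphi : ∀ q : ℝ, 0 ≤ q → phiF 0 ν q =
      ((∫ x, (1 - Real.exp x) ∂ν) - 1) * q + 1 - ∫ x, (1 - Real.exp (q * x)) ∂ν := by
    intro q hq
    have e1 : ∫ x, (Real.exp x - 1 - if |x| ≤ 1 then x else 0) ∂ν =
        -(∫ x, (1 - Real.exp x) ∂ν) - ∫ x, (if |x| ≤ 1 then x else 0) ∂ν := by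
      rw [← integral_neg, ← integral_sub hE1.fun_neg hI]
      congr 1
      ext x
      ring
    have e2 : ∫ x, (Real.exp (q * x) - 1 - q * (if |x| ≤ 1 then x else 0)) ∂ν =
        -(∫ x, (1 - Real.exp (q * x)) ∂ν) - q * ∫ x, (if |x| ≤ 1 then x else 0) ∂ν := by
      rw [← integral_neg, ← integral_const_mul, ← integral_sub (hE q hq).fun_neg (hI.const_mul q)]
      congr 1
      ext x
      ring
    unfold phiF psiT levyA
    rw [e1, e2]
    ring
  have hbd : ∀ q x : ℝ, 1 / 2 ≤ q → x < 0 → -x * Real.exp (q * x) ≤ 2 * min 1 |x| := by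
    intro q x hq hx
    have h1 : Real.exp (q * x) ≤ Real.exp (x / 2) := Real.exp_le_exp.2 (by nlinarith)
    have h2 : Real.exp (x / 2) ≤ 1 := Real.exp_le_one_iff.2 (by linarith)
    have h3 := Real.add_one_le_exp (-(x / 2))
    have h4 : Real.exp (-(x / 2)) * Real.exp (x / 2) = 1 := by
      rw [← Real.exp_add]; simp
    have h5 := Real.exp_pos (x / 2)
    have h6 : -x * Real.exp (q * x) ≤ -x * Real.exp (x / 2) :=
      mul_le_mul_of_nonneg_left h1 (by linarith)
    rw [abs_of_neg hx]
    rcases min_cases 1 (-x) with ⟨h, _⟩ | ⟨h, _⟩ <;> rw [h] <;> nlinarith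
  refine ⟨?_, hphi, ?_, ?_⟩
  · intro q hq
    have hq : 0 ≤ q := hq
    refine lt_of_le_of_lt ?_ hmin
    refine le_trans ?_ (setLIntegral_le_lintegral {x : ℝ | 1 ≤ |x|} _)
    refine lintegral_mono_ae ?_
    have hms : MeasurableSet {x : ℝ | 1 ≤ |x|} := measurableSet_le (by fun_prop) (by fun_prop)
    filter_upwards [ae_restrict_of_ae hneg, ae_restrict_mem hms] with x hx hx1
    apply ENNReal.ofReal_le_ofReal
    rw [min_eq_left hx1]
    exact Real.exp_le_one_iff.2 (by nlinarith)
  · have hder := hasDerivAt_integral_of_dominated_loc_of_deriv_le (μ := ν) (𝕜 := ℝ)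
      (F := fun q x => 1 - Real.exp (q * x)) (F' := fun q x => -(Real.exp (q * x) * x))
      (x₀ := 1) (s := Metric.ball 1 (1 / 2)) (bound := fun x => 2 * min 1 |x|)
      (Metric.ball_mem_nhds _ (by norm_num))
      (Filter.Eventually.of_forall fun q => by fun_prop)
      (hE 1 zero_le_one) (by fun_prop)
      (by
        filter_upwards [hneg] with x hx q hq
        rw [Metric.mem_ball, Real.dist_eq, abs_lt] at hq
        have h := hbd q x (by linarith) hx
        have h3 := Real.exp_pos (q * x)
        rw [Real.norm_of_nonneg (by nlinarith)]
        linarith)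
      (hM.const_mul 2)
      (Filter.Eventually.of_forall fun x q _ => by
        have h := (((hasDerivAt_id q).mul_const x).exp).const_sub 1
        simpa using h)
    obtain ⟨hint, hder⟩ := hder
    have hpos : 0 < ∫ x, -(Real.exp (1 * x) * x) ∂ν := by
      refine aux_pos ν hνne _ hint ?_
      filter_upwards [hneg] with x hx
      have h3 := Real.exp_pos (1 * x)
      nlinarith
    refine ⟨((∫ x, (1 - Real.exp x) ∂ν) - 1) - ∫ x, -(Real.exp (1 * x) * x) ∂ν,
      by linarith, ?_⟩
    have hlin : HasDerivAt (fun q : ℝ => ((∫ x, (1 - Real.exp x) ∂ν) - 1) * q + 1)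
        ((∫ x, (1 - Real.exp x) ∂ν) - 1) 1 := by
      simpa using ((hasDerivAt_id (1 : ℝ)).const_mul ((∫ x, (1 - Real.exp x) ∂ν) - 1)).add_const 1
    refine (hlin.sub hder).congr_of_eventuallyEq ?_
    filter_upwards [Ioi_mem_nhds (zero_lt_one (α := ℝ))] with q hq
    exact hphi q (le_of_lt hq)
  · intro q hq
    rw [hphi q (by linarith)]
    have hqi := hE q (by linarith)
    have h := aux_pos ν hνne (fun x => (1 - Real.exp (q * x)) - (1 - Real.exp x))
      (hqi.sub hE1) (by
        filter_upwards [hneg] with x hx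
        have : Real.exp (q * x) < Real.exp x := Real.exp_lt_exp.2 (by nlinarith)
        linarith)
    rw [integral_sub hqi hE1] at h
    nlinarith
end

section
/- Let M₀ and M₁ be nonnegative integrable random variables with the same distribution, and let Ŵ be a nonnegative integrable random variable, independent of the pair (M₀, M₁), with E(Ŵ) = 1/2. If Ŵ · max(M₀, M₁) has the same distribution as M₀, then min(M₀, M₁) = 0 almost surely. -/
open MeasureTheory ProbabilityTheory

/-- If `M₀, M₁ ≥ 0` are integrable and identically distributed, `Ŵ ≥ 0` is integrable,
independent of `(M₀, M₁)`, with `E(Ŵ) = 1/2`, and `Ŵ · max(M₀, M₁)` has the same law as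
`M₀`, then `min(M₀, M₁) = 0` almost surely. -/
theorem stmt_11
    {Ω : Type*} [MeasurableSpace Ω] (P : Measure Ω) [IsProbabilityMeasure P]
    (M₀ M₁ W : Ω → ℝ)
    (hM₀m : Measurable M₀) (hM₁m : Measurable M₁) (hWm : Measurable W)
    (hM₀0 : ∀ ω, 0 ≤ M₀ ω) (hM₁0 : ∀ ω, 0 ≤ M₁ ω) (hW0 : ∀ ω, 0 ≤ W ω)
    (hM₀i : Integrable M₀ P) (hM₁i : Integrable M₁ P) (hWi : Integrable W P)
    (hsame : P.map M₀ = P.map M₁)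
    (hindep : IndepFun W (fun ω => (M₀ ω, M₁ ω)) P)
    (hEW : ∫ ω, W ω ∂P = 1 / 2)
    (hdist : P.map (fun ω => W ω * max (M₀ ω) (M₁ ω)) = P.map M₀) :
    ∀ᵐ ω ∂P, min (M₀ ω) (M₁ ω) = 0 := by
  have hmaxi : Integrable (fun ω => max (M₀ ω) (M₁ ω)) P := hM₀i.sup hM₁i
  have hmini : Integrable (fun ω => min (M₀ ω) (M₁ ω)) P := hM₀i.inf hM₁i
  have hmaxm : Measurable (fun ω => max (M₀ ω) (M₁ ω)) := hM₀m.max hM₁m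
  have hind : IndepFun W (fun ω => max (M₀ ω) (M₁ ω)) P :=
    hindep.comp (φ := id) (ψ := fun p : ℝ × ℝ => max p.1 p.2) measurable_id
      (measurable_fst.max measurable_snd)
  have key : ∀ f : Ω → ℝ, Measurable f → ∫ x, x ∂(P.map f) = ∫ ω, f ω ∂P := fun f hf =>
    integral_map hf.aemeasurable aestronglyMeasurable_id
  have h1 : ∫ ω, M₀ ω ∂P = ∫ ω, M₁ ω ∂P := by
    rw [← key _ hM₀m, ← key _ hM₁m, hsame]
  have h2 : ∫ ω, W ω * max (M₀ ω) (M₁ ω) ∂P = ∫ ω, M₀ ω ∂P := by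
    rw [← key _ hM₀m, ← key (fun ω => W ω * max (M₀ ω) (M₁ ω)) (hWm.mul hmaxm), hdist]
  have h3 : ∫ ω, W ω * max (M₀ ω) (M₁ ω) ∂P
      = (∫ ω, W ω ∂P) * ∫ ω, max (M₀ ω) (M₁ ω) ∂P :=
    hind.integral_fun_mul_eq_mul_integral hWm.aestronglyMeasurable hmaxm.aestronglyMeasurable
  have h4 : (∫ ω, min (M₀ ω) (M₁ ω) ∂P) + ∫ ω, max (M₀ ω) (M₁ ω) ∂P
      = (∫ ω, M₀ ω ∂P) + ∫ ω, M₁ ω ∂P := by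
    rw [← integral_add hmini hmaxi, ← integral_add hM₀i hM₁i]
    simp only [min_add_max]
  have h5 : ∫ ω, min (M₀ ω) (M₁ ω) ∂P = 0 := by
    rw [hEW] at h3
    linarith
  exact (integral_eq_zero_iff_of_nonneg (fun ω => le_min (hM₀0 ω) (hM₁0 ω)) hmini).1 h5
end

section
/- Let ν be a Borel measure on (−∞, 0) with ∫ min(1, x²) ν(dx) < ∞ but ∫ min(1, |x|) ν(dx) = ∞. Then for every q ≥ 1 the integrand x ↦ e^{qx} − 1 + q(1 − e^x) is nonnegative on (−∞, 0), and the function g(q) = ∫_{(−∞,0)} (e^{qx} − 1 + q(1 − e^x)) ν(dx) satisfies g(q)/q → ∞ as q → ∞; in particular g grows faster at infinity than any linear function of q. -/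
open MeasureTheory Filter

/-- Let `ν` be a Borel measure carried by `(−∞,0)` with `∫ min(1,x²) ν(dx) < ∞` but
`∫ min(1,|x|) ν(dx) = ∞`. Then for every `q ≥ 1` the integrand
`x ↦ e^{qx} − 1 + q(1 − e^x)` is nonnegative on `(−∞,0)`, and
`g(q) = ∫_{(−∞,0)} (e^{qx} − 1 + q(1 − e^x)) ν(dx)` (an integral in `[0,∞]`) satisfies
`g(q)/q → ∞` as `q → ∞`. -/
theorem stmt_13 (ν : Measure ℝ)
    (hcar : ν (Set.Ici 0) = 0)
    (hν2 : ∫⁻ x, ENNReal.ofReal (min 1 (x ^ 2)) ∂ν < ⊤)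
    (hν1 : ∫⁻ x, ENNReal.ofReal (min 1 |x|) ∂ν = ⊤) :
    (∀ q : ℝ, 1 ≤ q → ∀ x < (0 : ℝ), 0 ≤ Real.exp (q * x) - 1 + q * (1 - Real.exp x)) ∧
    Tendsto
      (fun q : ℝ =>
        (∫⁻ x in Set.Iio (0 : ℝ),
            ENNReal.ofReal (Real.exp (q * x) - 1 + q * (1 - Real.exp x)) ∂ν) /
          ENNReal.ofReal q)
      atTop (nhds ⊤) := by
  have hnn : ∀ q : ℝ, 1 ≤ q → ∀ x < (0 : ℝ),
      0 ≤ Real.exp (q * x) - 1 + q * (1 - Real.exp x) := by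
    intro q hq x hx
    have h := one_add_mul_self_le_rpow_one_add (s := Real.exp x - 1)
      (by linarith [Real.exp_pos x]) hq
    have h2 : (1 + (Real.exp x - 1)) ^ q = Real.exp (q * x) := by
      rw [add_sub_cancel, ← Real.exp_mul, mul_comm]
    rw [h2] at h
    linarith
  refine ⟨hnn, ?_⟩
  have hm : Measurable (fun x : ℝ => ENNReal.ofReal (min 1 |x|)) := by fun_prop
  -- continuity from below
  let S : ℕ → Set ℝ := fun n => Set.Iic (-(1 / ((n : ℝ) + 1)))
  have hSmono : Monotone S := by
    intro a b hab
    apply Set.Iic_subset_Iic.2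
    exact neg_le_neg (Nat.one_div_le_one_div hab)
  have hSU : (⋃ n, S n) = Set.Iio (0 : ℝ) := by
    ext x
    simp only [S, Set.mem_iUnion, Set.mem_Iic, Set.mem_Iio]
    constructor
    · rintro ⟨n, hn⟩
      have : 0 < 1 / ((n : ℝ) + 1) := Nat.one_div_pos_of_nat
      linarith
    · intro hx
      obtain ⟨n, hn⟩ := exists_nat_one_div_lt (neg_pos.2 hx)
      exact ⟨n, by linarith⟩
  have htop : ∫⁻ x in Set.Iio (0 : ℝ), ENNReal.ofReal (min 1 |x|) ∂ν = ⊤ := by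
    have h := lintegral_add_compl (μ := ν) (fun x : ℝ => ENNReal.ofReal (min 1 |x|))
      (measurableSet_Iio (a := (0 : ℝ)))
    rw [Set.compl_Iio, setLIntegral_measure_zero _ _ hcar, add_zero, hν1] at h
    exact h
  have hlim : Tendsto (fun n => ∫⁻ x in S n, ENNReal.ofReal (min 1 |x|) ∂ν) atTop (nhds ⊤) := by
    have h := tendsto_measure_iUnion_atTop
      (μ := ν.withDensity (fun x : ℝ => ENNReal.ofReal (min 1 |x|))) hSmono
    rw [hSU, withDensity_apply _ measurableSet_Iio, htop] at h
    refine h.congr fun n => ?_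
    exact withDensity_apply _ measurableSet_Iic
  rw [ENNReal.tendsto_nhds_top_iff_nnreal] at hlim ⊢
  intro C
  obtain ⟨n, hn⟩ := (hlim (4 * C)).exists
  have hn1 : (0 : ℝ) < (n : ℝ) + 1 := by positivity
  filter_upwards [eventually_ge_atTop (4 * ((n : ℝ) + 1))] with q hq
  have hq0 : 0 < q := by linarith
  have key : ∀ x ∈ S n, ENNReal.ofReal (q / 4) * ENNReal.ofReal (min 1 |x|) ≤
      ENNReal.ofReal (Real.exp (q * x) - 1 + q * (1 - Real.exp x)) := by
    intro x hx
    rw [← ENNReal.ofReal_mul (by positivity)]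
    apply ENNReal.ofReal_le_ofReal
    have hx' : x ≤ -(1 / ((n : ℝ) + 1)) := hx
    have hp : 0 < 1 / ((n : ℝ) + 1) := by positivity
    have hx0 : x < 0 := by linarith
    rw [abs_of_neg hx0]
    have hm1 : 1 / ((n : ℝ) + 1) ≤ min 1 (-x) := by
      apply le_min
      · rw [div_le_one hn1]; linarith [(Nat.cast_nonneg n : (0 : ℝ) ≤ n)]
      · linarith
    have hqm : 4 ≤ q * min 1 (-x) := by
      calc (4 : ℝ) = (4 * ((n : ℝ) + 1)) * (1 / ((n : ℝ) + 1)) := by field_simp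
        _ ≤ q * min 1 (-x) := by gcongr
    have he : min 1 (-x) / 2 ≤ 1 - Real.exp x := by
      have h1 := Real.add_one_le_exp (-x)
      have h2 : Real.exp x * Real.exp (-x) = 1 := by rw [← Real.exp_add]; simp
      have h3 : Real.exp x * (-x + 1) ≤ 1 := by
        exact (mul_le_mul_of_nonneg_left h1 (Real.exp_pos x).le).trans_eq h2
      have h4 := Real.exp_pos x
      rcases le_total 1 (-x) with h | h
      · rw [min_eq_left h]; nlinarith
      · rw [min_eq_right h]; nlinarith
    have h5 := mul_le_mul_of_nonneg_left he hq0.le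
    have h6 := Real.exp_pos (q * x)
    linarith
  have hint : ENNReal.ofReal (q / 4) * ∫⁻ x in S n, ENNReal.ofReal (min 1 |x|) ∂ν ≤
      ∫⁻ x in Set.Iio (0 : ℝ),
        ENNReal.ofReal (Real.exp (q * x) - 1 + q * (1 - Real.exp x)) ∂ν := by
    rw [← lintegral_const_mul _ hm]
    refine (setLIntegral_mono' measurableSet_Iic key).trans ?_
    apply lintegral_mono_set
    rw [← hSU]
    exact Set.subset_iUnion S n
  rw [ENNReal.lt_div_iff_mul_lt (Or.inl (by simpa using hq0)) (Or.inl ENNReal.ofReal_ne_top)]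
  refine lt_of_lt_of_le ?_ hint
  have h7 : (C : ENNReal) * ENNReal.ofReal q
      = ENNReal.ofReal (q / 4) * ((4 * C : NNReal) : ENNReal) := by
    have : ENNReal.ofReal q = ENNReal.ofReal (q / 4) * 4 := by
      rw [show (4 : ENNReal) = ENNReal.ofReal 4 by simp, ← ENNReal.ofReal_mul (by positivity)]
      congr 1; ring
    rw [this]; push_cast; ring
  rw [h7]
  exact ENNReal.mul_lt_mul_right (by simpa using hq0) ENNReal.ofReal_ne_top hn
end

section
/- Let W₀, W₁, Z, Z₀, Z₁ be nonnegative random variables on a probability space (Ω, F, P) such that: E(W₀) = E(W₁) = 1 and E(Z) = 1; the pairs (W₀, Z₀) and (W₁, Z₁) have the same joint distribution; Z₀ and Z₁ each have the same distribution as Z; for each i ∈ {0,1}, W_i is independent of Z_i; and almost surely 2Z = W₀Z₀ + W₁Z₁. Define a measure ℚ on Ω × {0,1} (product σ-algebra, with the discrete σ-algebra on {0,1}) by ℚ(E × {i}) = E(1_E · ½ W_i Z_i) for E ∈ F and i ∈ {0,1}, and define random variables on Ω × {0,1} by A(ω,i) = ½ W_i(ω), R(ω,i) = Z_i(ω) and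 R̃(ω,i) = Z(ω). Then: (a) ℚ is a probability measure; (b) R and R̃ have the same distribution under ℚ; (c) A and R are independent under ℚ. -/
open MeasureTheory ProbabilityTheory

/-- The Peyrière measure associated with the decomposition `2Z = W₀Z₀ + W₁Z₁`:
if `ℚ` on `Ω × {0,1}` satisfies `ℚ(E × {i}) = E(1_E ½ W_i Z_i)`, then `ℚ` is a probability
measure, `R(ω,i) = Z_i(ω)` and `R̃(ω,i) = Z(ω)` have the same law under `ℚ`, and
`A(ω,i) = ½ W_i(ω)` and `R` are independent under `ℚ`. -/
theorem stmt_14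
    {Ω : Type*} [MeasurableSpace Ω] (P : Measure Ω) [IsProbabilityMeasure P]
    (W Z' : Fin 2 → Ω → ℝ) (Z : Ω → ℝ)
    (hWm : ∀ i, Measurable (W i)) (hZ'm : ∀ i, Measurable (Z' i)) (hZm : Measurable Z)
    (hW0 : ∀ i ω, 0 ≤ W i ω) (hZ'0 : ∀ i ω, 0 ≤ Z' i ω) (hZ0 : ∀ ω, 0 ≤ Z ω)
    (hEW : ∀ i, ∫ ω, W i ω ∂P = 1) (hEZ : ∫ ω, Z ω ∂P = 1)
    (hjoint : P.map (fun ω => (W 0 ω, Z' 0 ω)) = P.map (fun ω => (W 1 ω, Z' 1 ω)))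
    (hZd : ∀ i, P.map (Z' i) = P.map Z)
    (hInd : ∀ i, IndepFun (W i) (Z' i) P)
    (hEq : ∀ᵐ ω ∂P, 2 * Z ω = W 0 ω * Z' 0 ω + W 1 ω * Z' 1 ω)
    (Q : Measure (Ω × Fin 2))
    (hQ : ∀ E : Set Ω, MeasurableSet E → ∀ i : Fin 2,
      Q (E ×ˢ ({i} : Set (Fin 2))) = ∫⁻ ω in E, ENNReal.ofReal (2⁻¹ * W i ω * Z' i ω) ∂P) :
    IsProbabilityMeasure Q ∧
    Q.map (fun p : Ω × Fin 2 => Z' p.2 p.1) = Q.map (fun p : Ω × Fin 2 => Z p.1) ∧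
    IndepFun (fun p : Ω × Fin 2 => 2⁻¹ * W p.2 p.1) (fun p : Ω × Fin 2 => Z' p.2 p.1) Q := by
  classical
  -- slicing formula
  have hslice : ∀ S : Set (Ω × Fin 2), MeasurableSet S →
      Q S = ∑ i : Fin 2, ∫⁻ ω in {ω | (ω, i) ∈ S}, ENNReal.ofReal (2⁻¹ * W i ω * Z' i ω) ∂P := by
    intro S hS
    have hm : ∀ i : Fin 2, MeasurableSet {ω | (ω, i) ∈ S} := fun i =>
      (measurable_id.prodMk measurable_const) hS
    have hU : S = {ω | (ω, (0 : Fin 2)) ∈ S} ×ˢ ({0} : Set (Fin 2)) ∪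
        {ω | (ω, (1 : Fin 2)) ∈ S} ×ˢ ({1} : Set (Fin 2)) := by
      ext ⟨ω, i⟩
      fin_cases i <;> simp
    have hd : Disjoint ({ω | (ω, (0 : Fin 2)) ∈ S} ×ˢ ({0} : Set (Fin 2)))
        ({ω | (ω, (1 : Fin 2)) ∈ S} ×ˢ ({1} : Set (Fin 2))) := by
      rw [Set.disjoint_left]
      rintro ⟨ω, i⟩ h0 h1
      simp only [Set.mem_prod, Set.mem_singleton_iff] at h0 h1
      have := h0.2.symm.trans h1.2
      simp at this
    rw [Fin.sum_univ_two, ← hQ _ (hm 0) 0, ← hQ _ (hm 1) 1,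
      ← measure_union hd ((hm 1).prod (measurableSet_singleton _)), ← hU]
  -- the two one-dimensional size-biased weights
  let f : Set ℝ → ℝ → ENNReal := fun s => s.indicator (fun x => ENNReal.ofReal x)
  have hf : ∀ s, MeasurableSet s → Measurable (f s) := fun s hs =>
    ENNReal.measurable_ofReal.indicator hs
  let a : Set ℝ → ENNReal := fun s => ∫⁻ ω, f s (W 0 ω) ∂P
  let b : Set ℝ → ENNReal := fun t => ∫⁻ ω, f t (Z ω) ∂P
  have ha1 : ∀ s, MeasurableSet s → ∫⁻ ω, f s (W 1 ω) ∂P = a s := by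
    intro s hs
    have hg : Measurable (fun p : ℝ × ℝ => f s p.1) := (hf s hs).comp measurable_fst
    have h : ∫⁻ p, f s p.1 ∂(P.map (fun ω => (W 0 ω, Z' 0 ω)))
        = ∫⁻ p, f s p.1 ∂(P.map (fun ω => (W 1 ω, Z' 1 ω))) := by rw [hjoint]
    rw [lintegral_map hg ((hWm 0).prodMk (hZ'm 0)),
      lintegral_map hg ((hWm 1).prodMk (hZ'm 1))] at h
    exact h.symm
  have ha : ∀ i s, MeasurableSet s → ∫⁻ ω, f s (W i ω) ∂P = a s := by
    intro i s hs
    fin_cases i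
    · rfl
    · exact ha1 s hs
  have hb : ∀ i t, MeasurableSet t → ∫⁻ ω, f t (Z' i ω) ∂P = b t := by
    intro i t ht
    rw [← lintegral_map (hf t ht) (hZ'm i), hZd i, lintegral_map (hf t ht) hZm]
  have hone : ∀ X : Ω → ℝ, (∀ ω, 0 ≤ X ω) → ∫ ω, X ω ∂P = 1 →
      ∫⁻ ω, f Set.univ (X ω) ∂P = 1 := by
    intro X hX h1
    have hint : Integrable X P := by
      by_contra h
      rw [integral_undef h] at h1
      exact zero_ne_one h1
    have := ofReal_integral_eq_lintegral_ofReal hint (Filter.Eventually.of_forall hX)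
    simp only [f, Set.indicator_univ]
    rw [← this, h1, ENNReal.ofReal_one]
  have hau : a Set.univ = 1 := hone _ (hW0 0) (hEW 0)
  have hbu : b Set.univ = 1 := hone _ hZ0 hEZ
  have hhalf : ENNReal.ofReal (2⁻¹ : ℝ) + ENNReal.ofReal (2⁻¹ : ℝ) = 1 := by
    rw [← ENNReal.ofReal_add (by norm_num) (by norm_num)]
    norm_num
  have hprod : ∀ i s t, MeasurableSet s → MeasurableSet t →
      ∫⁻ ω in W i ⁻¹' s ∩ Z' i ⁻¹' t, ENNReal.ofReal (2⁻¹ * W i ω * Z' i ω) ∂P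
        = ENNReal.ofReal (2⁻¹ : ℝ) * (a s * b t) := by
    intro i s t hs ht
    rw [← lintegral_indicator ((hWm i hs).inter (hZ'm i ht)), ← ha i s hs, ← hb i t ht]
    have hmul := lintegral_mul_eq_lintegral_mul_lintegral_of_indepFun
      ((hf s hs).comp (hWm i)) ((hf t ht).comp (hZ'm i)) ((hInd i).comp (hf s hs) (hf t ht))
    simp only [Pi.mul_apply, Function.comp_apply] at hmul
    have hmm : Measurable (fun ω => f s (W i ω) * f t (Z' i ω)) :=
      ((hf s hs).comp (hWm i)).mul ((hf t ht).comp (hZ'm i))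
    rw [← hmul, ← lintegral_const_mul _ hmm]
    refine lintegral_congr fun ω => ?_
    by_cases h1 : W i ω ∈ s <;> by_cases h2 : Z' i ω ∈ t <;>
      simp only [f, Set.indicator, Set.mem_inter_iff, Set.mem_preimage, h1, h2, and_self,
        if_true, if_false, and_true, and_false, mul_zero, zero_mul]
    rw [ENNReal.ofReal_mul (mul_nonneg (by norm_num) (hW0 i ω)), ENNReal.ofReal_mul (by norm_num),
      mul_assoc]
  have hAm : Measurable (fun p : Ω × Fin 2 => 2⁻¹ * W p.2 p.1) :=
    measurable_from_prod_countable_left fun i => (hWm i).const_mul _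
  have hRm : Measurable (fun p : Ω × Fin 2 => Z' p.2 p.1) :=
    measurable_from_prod_countable_left fun i => hZ'm i
  have hTm : Measurable (fun p : Ω × Fin 2 => Z p.1) := hZm.comp measurable_fst
  have hmul2 : Measurable (fun x : ℝ => 2⁻¹ * x) := measurable_id.const_mul _
  have hQst : ∀ s t, MeasurableSet s → MeasurableSet t →
      Q ((fun p : Ω × Fin 2 => 2⁻¹ * W p.2 p.1) ⁻¹' s ∩ (fun p : Ω × Fin 2 => Z' p.2 p.1) ⁻¹' t)
        = a ((fun x : ℝ => 2⁻¹ * x) ⁻¹' s) * b t := by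
    intro s t hs ht
    rw [hslice _ ((hAm hs).inter (hRm ht)), Fin.sum_univ_two]
    have h0 := hprod 0 _ t (hmul2 hs) ht
    have h1 := hprod 1 _ t (hmul2 hs) ht
    have : ∀ x y z : ENNReal, x = ENNReal.ofReal (2⁻¹ : ℝ) * z →
        y = ENNReal.ofReal (2⁻¹ : ℝ) * z → x + y = z := by
      rintro x y z rfl rfl
      rw [← add_mul, hhalf, one_mul]
    exact this _ _ _ h0 h1
  have hQR : ∀ t, MeasurableSet t → Q ((fun p : Ω × Fin 2 => Z' p.2 p.1) ⁻¹' t) = b t := by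
    intro t ht
    have := hQst Set.univ t MeasurableSet.univ ht
    rwa [Set.preimage_univ, Set.univ_inter, Set.preimage_univ, hau, one_mul] at this
  have hQA : ∀ s, MeasurableSet s → Q ((fun p : Ω × Fin 2 => 2⁻¹ * W p.2 p.1) ⁻¹' s)
      = a ((fun x : ℝ => 2⁻¹ * x) ⁻¹' s) := by
    intro s hs
    have := hQst s Set.univ hs MeasurableSet.univ
    rwa [Set.preimage_univ, Set.inter_univ, hbu, mul_one] at this
  refine ⟨⟨?_⟩, ?_, ?_⟩
  · have := hQR Set.univ MeasurableSet.univ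
    rwa [Set.preimage_univ, hbu] at this
  · ext t ht
    rw [Measure.map_apply hRm ht, Measure.map_apply hTm ht, hQR t ht, hslice _ (hTm ht),
      Fin.sum_univ_two]
    change b t = (∫⁻ ω in Z ⁻¹' t, ENNReal.ofReal (2⁻¹ * W 0 ω * Z' 0 ω) ∂P) +
      ∫⁻ ω in Z ⁻¹' t, ENNReal.ofReal (2⁻¹ * W 1 ω * Z' 1 ω) ∂P
    have hmm : Measurable (fun ω => ENNReal.ofReal (2⁻¹ * W 0 ω * Z' 0 ω)) :=
      (((hWm 0).const_mul _).mul (hZ'm 0)).ennreal_ofReal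
    rw [← lintegral_add_left hmm,
      ← lintegral_indicator (hZm ht)]
    refine lintegral_congr_ae ?_
    filter_upwards [hEq] with ω hω
    by_cases h : Z ω ∈ t
    · simp only [f, Set.indicator, Set.mem_preimage, h, if_true]
      rw [← ENNReal.ofReal_add
        (mul_nonneg (mul_nonneg (by norm_num) (hW0 0 ω)) (hZ'0 0 ω))
        (mul_nonneg (mul_nonneg (by norm_num) (hW0 1 ω)) (hZ'0 1 ω))]
      congr 1
      linarith
    · simp only [f, Set.indicator, Set.mem_preimage, h, if_false]
  · rw [indepFun_iff_measure_inter_preimage_eq_mul]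
    intro s t hs ht
    rw [hQst s t hs ht, hQA s hs, hQR t ht]
end
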